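/- arXiv:1810.03384 — 4 statements merged into one kernel-verified Lean document; each statement's English description precedes it below -/
import Mathlib

section
/- Talagrand's influence inequality: There exists a universal constant c > 0 such that for every p ∈ (0,1), every n ∈ ℕ, and every increasing boolean function f : {0,1}^n → {0,1}, one has Var_p(f) ≤ c · log(1/(p(1−p))) · Σ_{i=1}^n Inf_i[f] / log(1/Inf_i[f]), where a summand with Inf_i[f] = 0 is interpreted as 0 and a summand with Inf_i[f] = 1 is interpreted as +∞. -/
open scoped Classical

section BooleanAnalysis

variable {ι : Type*} [Fintype ι] [DecidableEq ι]

/-- The Bernoulli(`p`) product weight of a configuration `ω ∈ {0,1}^ι`: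
`∏ i, p^{ω i}(1-p)^{1-ω i}`.  Summing a function against these weights gives its
expectation under the product measure `ℙ_p`. -/
noncomputable def bernoulliWeight (p : ℝ) (ω : ι → Bool) : ℝ :=
  ∏ i : ι, if ω i then p else 1 - p

/-- Expectation `𝔼_p[g]` of `g : {0,1}^ι → ℝ` under the product Bernoulli(`p`) measure. -/
noncomputable def bernoulliExp (p : ℝ) (g : (ι → Bool) → ℝ) : ℝ :=
  ∑ ω : ι → Bool, bernoulliWeight p ω * g ω

/-- The `{0,1}`-valued (real) indicator of a boolean function. -/
noncomputable def boolInd (f : (ι → Bool) → Bool) (ω : ι → Bool) : ℝ :=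
  if f ω then 1 else 0

/-- `f(p) := 𝔼_p[f]` for a boolean function `f`. -/
noncomputable def bernoulliMean (p : ℝ) (f : (ι → Bool) → Bool) : ℝ :=
  bernoulliExp p (boolInd f)

/-- The variance `Var_p(f)` of a boolean function under `ℙ_p`. -/
noncomputable def bernoulliVar (p : ℝ) (f : (ι → Bool) → Bool) : ℝ :=
  bernoulliExp p (fun ω => (boolInd f ω - bernoulliMean p f) ^ 2)

/-- `Flip_i(ω)`: flip the `i`-th coordinate of `ω`. -/
def flipCoord (i : ι) (ω : ι → Bool) : ι → Bool :=
  Function.update ω i (!ω i)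

/-- The influence `Inf_i[f] := 𝔼_p[|f(ω) - f(Flip_i ω)|]` of coordinate `i`, under `ℙ_p`. -/
noncomputable def influence (p : ℝ) (f : (ι → Bool) → Bool) (i : ι) : ℝ :=
  bernoulliExp p (fun ω => |boolInd f ω - boolInd f (flipCoord i ω)|)

/-- A boolean function is increasing if it is monotone w.r.t. the coordinatewise
partial order on `{0,1}^ι` (with `false ≤ true`). -/
def IncreasingBoolFun (f : (ι → Bool) → Bool) : Prop :=
  ∀ ω ω' : ι → Bool, (∀ i, ω i ≤ ω' i) → f ω ≤ f ω'

end BooleanAnalysis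

namespace TalagrandAux

variable {n : ℕ}

/-- One-coordinate weight. -/
noncomputable def wt (p : ℝ) (b : Bool) : ℝ := if b then p else 1 - p

/-- One-coordinate orthonormal character. -/
noncomputable def phi (p : ℝ) (b : Bool) : ℝ :=
  if b then (1 - p) / √(p * (1 - p)) else -p / √(p * (1 - p))

/-- Biased Fourier characters. -/
noncomputable def chi (p : ℝ) (S : Finset (Fin n)) (ω : Fin n → Bool) : ℝ := ∏ i ∈ S, phi p (ω i)

/-- Biased Fourier coefficients. -/
noncomputable def coef (p : ℝ) (F : (Fin n → Bool) → ℝ) (S : Finset (Fin n)) : ℝ :=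
  bernoulliExp p (fun ω => F ω * chi p S ω)

lemma weight_nonneg {p : ℝ} (hp : p ∈ Set.Ioo (0 : ℝ) 1) (ω : Fin n → Bool) :
    0 ≤ bernoulliWeight p ω := by
  unfold bernoulliWeight
  apply Finset.prod_nonneg
  intro i _
  split_ifs <;> linarith [hp.1, hp.2]

lemma exp_mono {p : ℝ} (hp : p ∈ Set.Ioo (0 : ℝ) 1) {F G : (Fin n → Bool) → ℝ}
    (h : ∀ ω, F ω ≤ G ω) : bernoulliExp p F ≤ bernoulliExp p G := by
  unfold bernoulliExp
  exact Finset.sum_le_sum fun ω _ => mul_le_mul_of_nonneg_left (h ω) (weight_nonneg hp ω)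

lemma exp_nonneg {p : ℝ} (hp : p ∈ Set.Ioo (0 : ℝ) 1) {F : (Fin n → Bool) → ℝ}
    (h : ∀ ω, 0 ≤ F ω) : 0 ≤ bernoulliExp p F := by
  unfold bernoulliExp
  exact Finset.sum_nonneg fun ω _ => mul_nonneg (weight_nonneg hp ω) (h ω)

lemma exp_add (p : ℝ) (F G : (Fin n → Bool) → ℝ) :
    bernoulliExp p (fun ω => F ω + G ω) = bernoulliExp p F + bernoulliExp p G := by
  simp [bernoulliExp, mul_add, Finset.sum_add_distrib]

lemma exp_sub (p : ℝ) (F G : (Fin n → Bool) → ℝ) :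
    bernoulliExp p (fun ω => F ω - G ω) = bernoulliExp p F - bernoulliExp p G := by
  simp [bernoulliExp, mul_sub, Finset.sum_sub_distrib]

lemma exp_const_mul (p c : ℝ) (F : (Fin n → Bool) → ℝ) :
    bernoulliExp p (fun ω => c * F ω) = c * bernoulliExp p F := by
  simp only [bernoulliExp, Finset.mul_sum]
  exact Finset.sum_congr rfl fun ω _ => by ring

lemma exp_sum {α : Type*} (p : ℝ) (s : Finset α) (F : α → (Fin n → Bool) → ℝ) :
    bernoulliExp p (fun ω => ∑ a ∈ s, F a ω) = ∑ a ∈ s, bernoulliExp p (F a) := by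
  simp only [bernoulliExp, Finset.mul_sum]
  exact Finset.sum_comm

lemma exp_one (p : ℝ) : bernoulliExp p (fun _ : Fin n → Bool => (1 : ℝ)) = 1 := by
  unfold bernoulliExp bernoulliWeight
  simp only [mul_one]
  have := Finset.prod_univ_sum (fun _ : Fin n => (Finset.univ : Finset Bool))
    (fun _ b => if b then p else 1 - p)
  rw [Fintype.piFinset_univ] at this
  rw [← this]
  simp

lemma exp_cs {p : ℝ} (hp : p ∈ Set.Ioo (0 : ℝ) 1) (F G : (Fin n → Bool) → ℝ) :
    (bernoulliExp p (fun ω => F ω * G ω)) ^ 2 ≤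
      bernoulliExp p (fun ω => F ω ^ 2) * bernoulliExp p (fun ω => G ω ^ 2) := by
  have := Finset.sum_mul_sq_le_sq_mul_sq Finset.univ
    (fun ω : Fin n → Bool => √(bernoulliWeight p ω) * F ω)
    (fun ω => √(bernoulliWeight p ω) * G ω)
  have e1 : bernoulliExp p (fun ω => F ω * G ω) = ∑ ω : Fin n → Bool,
      √(bernoulliWeight p ω) * F ω * (√(bernoulliWeight p ω) * G ω) := by
    refine Finset.sum_congr rfl fun ω _ => ?_
    rw [mul_mul_mul_comm, Real.mul_self_sqrt (weight_nonneg hp ω)]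
  have e2 : ∀ K : (Fin n → Bool) → ℝ, bernoulliExp p (fun ω => K ω ^ 2) =
      ∑ ω : Fin n → Bool, (√(bernoulliWeight p ω) * K ω) ^ 2 := by
    intro K
    refine Finset.sum_congr rfl fun ω _ => ?_
    rw [mul_pow, Real.sq_sqrt (weight_nonneg hp ω)]
  rw [e1, e2, e2]
  exact this

lemma flip_flip (i : Fin n) (ω : Fin n → Bool) : flipCoord i (flipCoord i ω) = ω := by
  simp [flipCoord]

lemma flip_same (i : Fin n) (ω : Fin n → Bool) : flipCoord i ω i = !ω i := by
  simp [flipCoord]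

lemma flip_ne {i j : Fin n} (h : j ≠ i) (ω : Fin n → Bool) : flipCoord i ω j = ω j := by
  simp [flipCoord, h]

lemma weight_split (p : ℝ) (i : Fin n) (ω : Fin n → Bool) :
    bernoulliWeight p ω = wt p (ω i) * ∏ j ∈ Finset.univ.erase i, wt p (ω j) := by
  rw [Finset.mul_prod_erase _ (fun j => wt p (ω j)) (Finset.mem_univ i)]
  rfl

lemma weight_flip (p : ℝ) (i : Fin n) (ω : Fin n → Bool) :
    bernoulliWeight p (flipCoord i ω) * wt p (ω i) = bernoulliWeight p ω * wt p (!ω i) := by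
  rw [weight_split p i ω, weight_split p i (flipCoord i ω), flip_same]
  have : ∏ j ∈ Finset.univ.erase i, wt p (flipCoord i ω j)
      = ∏ j ∈ Finset.univ.erase i, wt p (ω j) :=
    Finset.prod_congr rfl fun j hj => by rw [flip_ne (Finset.ne_of_mem_erase hj)]
  rw [this]; ring

lemma sum_flip (i : Fin n) (F : (Fin n → Bool) → ℝ) :
    ∑ ω, F (flipCoord i ω) = ∑ ω, F ω :=
  Equiv.sum_comp (Function.Involutive.toPerm (flipCoord i) (flip_flip i)) F

lemma wt_add (p : ℝ) (b : Bool) : wt p b + wt p (!b) = 1 := by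
  cases b <;> simp [wt]

lemma exp_avg (p : ℝ) (i : Fin n) (F : (Fin n → Bool) → ℝ) :
    bernoulliExp p F =
      bernoulliExp p (fun ω => wt p (ω i) * F ω + wt p (!ω i) * F (flipCoord i ω)) := by
  rw [exp_add]
  have h : bernoulliExp p (fun ω => wt p (!ω i) * F (flipCoord i ω)) =
      bernoulliExp p (fun ω => wt p (!ω i) * F ω) := by
    unfold bernoulliExp
    rw [← sum_flip i (fun ω => bernoulliWeight p ω * (wt p (!ω i) * F ω))]
    refine Finset.sum_congr rfl fun ω _ => ?_
    rw [flip_same, Bool.not_not, ← mul_assoc, ← mul_assoc, weight_flip]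
  rw [h, ← exp_add]
  congr 1
  funext ω
  rw [← add_mul, wt_add, one_mul]

lemma chi_flip_notMem (p : ℝ) {i : Fin n} {S : Finset (Fin n)} (h : i ∉ S) (ω : Fin n → Bool) :
    chi p S (flipCoord i ω) = chi p S ω := by
  unfold chi
  refine Finset.prod_congr rfl fun j hj => ?_
  rw [flip_ne]
  rintro rfl
  exact h hj

lemma chi_insert (p : ℝ) {i : Fin n} {S : Finset (Fin n)} (h : i ∉ S) (ω : Fin n → Bool) :
    chi p (insert i S) ω = phi p (ω i) * chi p S ω := by
  unfold chi
  rw [Finset.prod_insert h]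

lemma wt_phi (p : ℝ) (b : Bool) : wt p b * phi p b + wt p (!b) * phi p (!b) = 0 := by
  cases b <;> simp [wt, phi] <;> ring

lemma exp_chi_zero (p : ℝ) {i : Fin n} {S : Finset (Fin n)} (h : i ∈ S)
    (G : (Fin n → Bool) → ℝ) (hG : ∀ ω, G (flipCoord i ω) = G ω) :
    bernoulliExp p (fun ω => G ω * chi p S ω) = 0 := by
  rw [exp_avg p i]
  have : ∀ ω : Fin n → Bool, wt p (ω i) * (G ω * chi p S ω)
      + wt p (!ω i) * (G (flipCoord i ω) * chi p S (flipCoord i ω)) = 0 := by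
    intro ω
    rw [← Finset.insert_erase h, chi_insert p (Finset.notMem_erase i S),
      chi_insert p (Finset.notMem_erase i S), chi_flip_notMem p (Finset.notMem_erase i S),
      flip_same, hG]
    linear_combination (G ω * chi p (S.erase i) ω) * wt_phi p (ω i)
  simp [this, bernoulliExp]

lemma sqrt_sq_pq {p : ℝ} (hp : p ∈ Set.Ioo (0 : ℝ) 1) :
    0 < √(p * (1 - p)) ∧ √(p * (1 - p)) ^ 2 = p * (1 - p) := by
  have h : 0 < p * (1 - p) := mul_pos hp.1 (by linarith [hp.2])
  exact ⟨Real.sqrt_pos.2 h, Real.sq_sqrt h.le⟩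

lemma phi_kernel {p : ℝ} (hp : p ∈ Set.Ioo (0 : ℝ) 1) (b b' : Bool) :
    wt p b * (1 + phi p b * phi p b') = if b = b' then 1 else 0 := by
  obtain ⟨hs, hs2⟩ := sqrt_sq_pq hp
  have h1 : p ≠ 0 := hp.1.ne'
  have h2 : 1 - p ≠ 0 := by linarith [hp.2]
  cases b <;> cases b' <;> simp [wt, phi] <;> field_simp <;> (try rw [hs2]) <;> (try ring_nf) <;> simp

lemma inversion {p : ℝ} (hp : p ∈ Set.Ioo (0 : ℝ) 1) (F : (Fin n → Bool) → ℝ)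
    (ω : Fin n → Bool) : ∑ S, coef p F S * chi p S ω = F ω := by
  have hk : ∀ ω' : Fin n → Bool, bernoulliWeight p ω' * ∑ S, chi p S ω' * chi p S ω
      = if ω' = ω then 1 else 0 := by
    intro ω'
    have h1 : ∑ S, chi p S ω' * chi p S ω = ∏ i, (1 + phi p (ω' i) * phi p (ω i)) := by
      rw [Finset.prod_one_add, Finset.powerset_univ]
      refine Finset.sum_congr rfl fun S _ => ?_
      rw [Finset.prod_mul_distrib]; rfl
    have h2 : bernoulliWeight p ω' = ∏ i, wt p (ω' i) := rfl
    rw [h1, h2, ← Finset.prod_mul_distrib]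
    simp only [phi_kernel hp]
    by_cases h : ω' = ω
    · simp [h]
    · rw [if_neg h]
      obtain ⟨i, hi⟩ := Function.ne_iff.1 h
      exact Finset.prod_eq_zero (Finset.mem_univ i) (by simp [hi])
  calc ∑ S, coef p F S * chi p S ω
      = ∑ S, ∑ ω', F ω' * (bernoulliWeight p ω' * (chi p S ω' * chi p S ω)) := by
        refine Finset.sum_congr rfl fun S _ => ?_
        simp only [coef, bernoulliExp, Finset.sum_mul]
        exact Finset.sum_congr rfl fun ω' _ => by ring
    _ = ∑ ω', F ω' * (bernoulliWeight p ω' * ∑ S, chi p S ω' * chi p S ω) := by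
        rw [Finset.sum_comm]
        simp only [Finset.mul_sum]
    _ = F ω := by simp [hk]

lemma exp_mul_series (p : ℝ) (F : (Fin n → Bool) → ℝ) (a : Finset (Fin n) → ℝ) :
    bernoulliExp p (fun ω => F ω * ∑ S, a S * chi p S ω) = ∑ S, a S * coef p F S := by
  simp only [Finset.mul_sum]
  rw [exp_sum]
  refine Finset.sum_congr rfl fun S _ => ?_
  rw [coef, ← exp_const_mul]
  congr 1
  funext ω
  ring

lemma parseval {p : ℝ} (hp : p ∈ Set.Ioo (0 : ℝ) 1) (F : (Fin n → Bool) → ℝ) :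
    bernoulliExp p (fun ω => F ω ^ 2) = ∑ S, coef p F S ^ 2 := by
  have := exp_mul_series p F (coef p F)
  simp only [inversion hp] at this
  simpa only [sq] using this

lemma two_point {p g h : ℝ} (hp : p ∈ Set.Ioo (0 : ℝ) 1) :
    p * (g + (1 - p) / 4 * h) ^ 4 + (1 - p) * (g - p / 4 * h) ^ 4
      ≤ g ^ 4 + 2 * (g ^ 2 * h ^ 2) + h ^ 4 := by
  obtain ⟨h0, h1⟩ := hp
  set q := 1 - p with hq
  have hq0 : 0 < q := by linarith
  have hpq0 : 0 ≤ p * q := by positivity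
  have hpq1 : p * q ≤ 1 := by nlinarith
  have e : p * (g + q / 4 * h) ^ 4 + q * (g - p / 4 * h) ^ 4
      = g ^ 4 + 6 * (p * q) / 16 * (g ^ 2 * h ^ 2) + (p * q) * (q - p) / 16 * (g * h ^ 3)
        + (p * q) * (1 - 3 * (p * q)) / 256 * h ^ 4 := by
    rw [hq]; ring
  rw [e]
  have hA : (p * q) * (q - p) * (g * h ^ 3) ≤ (g ^ 2 * h ^ 2 + h ^ 4) / 2 := by
    have h3 : |(p * q) * (q - p)| ≤ 1 := by
      rw [abs_mul, abs_of_nonneg hpq0]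
      have : |q - p| ≤ 1 := abs_le.2 ⟨by linarith, by linarith⟩
      nlinarith [abs_nonneg (q - p)]
    have h4 : |g * h ^ 3| ≤ (g ^ 2 * h ^ 2 + h ^ 4) / 2 := by
      rw [abs_le]
      constructor <;> nlinarith [sq_nonneg (g * h + h ^ 2), sq_nonneg (g * h - h ^ 2)]
    calc (p * q) * (q - p) * (g * h ^ 3) ≤ |(p * q) * (q - p) * (g * h ^ 3)| := le_abs_self _
      _ = |(p * q) * (q - p)| * |g * h ^ 3| := abs_mul _ _
      _ ≤ 1 * |g * h ^ 3| := mul_le_mul_of_nonneg_right h3 (abs_nonneg _)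
      _ ≤ _ := by linarith
  have hB : (p * q) * (g ^ 2 * h ^ 2) ≤ g ^ 2 * h ^ 2 := by
    have : 0 ≤ g ^ 2 * h ^ 2 := by positivity
    nlinarith
  have hC : (p * q) * (1 - 3 * (p * q)) * h ^ 4 ≤ h ^ 4 := by
    have : 0 ≤ h ^ 4 := by positivity
    have : (p * q) * (1 - 3 * (p * q)) ≤ 1 := by nlinarith
    nlinarith
  have : 0 ≤ g ^ 2 * h ^ 2 := by positivity
  have : 0 ≤ h ^ 4 := by positivity
  nlinarith

/-- noise parameter -/
noncomputable def rho (p : ℝ) : ℝ := √(p * (1 - p)) / 4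

lemma hyper {p : ℝ} (hp : p ∈ Set.Ioo (0 : ℝ) 1) (T : Finset (Fin n)) :
    ∀ a : Finset (Fin n) → ℝ,
    bernoulliExp p (fun ω => (∑ S ∈ T.powerset, rho p ^ S.card * a S * chi p S ω) ^ 4)
      ≤ (∑ S ∈ T.powerset, a S ^ 2) ^ 2 := by
  induction T using Finset.induction_on with
  | empty =>
    intro a
    have : bernoulliExp p (fun _ : Fin n → Bool => a ∅ ^ 4) = a ∅ ^ 4 := by
      have := exp_const_mul (n := n) p (a ∅ ^ 4) (fun _ => 1)
      rw [exp_one] at this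
      simpa using this
    simp only [Finset.powerset_empty, Finset.sum_singleton, chi, Finset.prod_empty,
      Finset.card_empty, pow_zero, one_mul, mul_one]
    rw [this]
    apply le_of_eq; ring
  | insert i T hi ih =>
    intro a
    obtain ⟨hs, hs2⟩ := sqrt_sq_pq hp
    set g : (Fin n → Bool) → ℝ := fun ω => ∑ S ∈ T.powerset, rho p ^ S.card * a S * chi p S ω
      with hg
    set h : (Fin n → Bool) → ℝ :=
      fun ω => ∑ S ∈ T.powerset, rho p ^ S.card * a (insert i S) * chi p S ω with hh
    have hgi : ∀ ω, g (flipCoord i ω) = g ω := fun ω =>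
      Finset.sum_congr rfl fun S hS => by
        rw [chi_flip_notMem p (fun hc => hi (Finset.mem_powerset.1 hS hc))]
    have hhi : ∀ ω, h (flipCoord i ω) = h ω := fun ω =>
      Finset.sum_congr rfl fun S hS => by
        rw [chi_flip_notMem p (fun hc => hi (Finset.mem_powerset.1 hS hc))]
    have hsplit : ∀ ω, ∑ S ∈ (insert i T).powerset, rho p ^ S.card * a S * chi p S ω
        = g ω + rho p * phi p (ω i) * h ω := by
      intro ω
      rw [Finset.sum_powerset_insert hi, hh, Finset.mul_sum]
      congr 1
      refine Finset.sum_congr rfl fun S hS => ?_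
      have hiS : i ∉ S := fun hc => hi (Finset.mem_powerset.1 hS hc)
      rw [chi_insert p hiS, Finset.card_insert_of_notMem hiS]
      ring
    simp only [hsplit]
    rw [Finset.sum_powerset_insert hi]
    set G := ∑ S ∈ T.powerset, a S ^ 2
    set H := ∑ S ∈ T.powerset, a (insert i S) ^ 2
    have hG : bernoulliExp p (fun ω => g ω ^ 4) ≤ G ^ 2 := ih a
    have hH : bernoulliExp p (fun ω => h ω ^ 4) ≤ H ^ 2 := ih (fun S => a (insert i S))
    have hG0 : 0 ≤ G := Finset.sum_nonneg fun _ _ => sq_nonneg _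
    have hH0 : 0 ≤ H := Finset.sum_nonneg fun _ _ => sq_nonneg _
    have hGH : bernoulliExp p (fun ω => g ω ^ 2 * h ω ^ 2) ≤ G * H := by
      refine (le_abs_self _).trans (abs_le_of_sq_le_sq ?_ (mul_nonneg hG0 hH0))
      refine (exp_cs hp _ _).trans ?_
      simp only [← pow_mul]
      rw [mul_pow]
      exact mul_le_mul hG hH (exp_nonneg hp fun ω => Even.pow_nonneg (by decide) _) (sq_nonneg _)
    rw [exp_avg p i]
    calc _ ≤ bernoulliExp p (fun ω => g ω ^ 4 + 2 * (g ω ^ 2 * h ω ^ 2) + h ω ^ 4) := by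
          apply exp_mono hp
          intro ω
          rw [hgi, hhi, flip_same]
          have e1 : rho p * phi p true = (1 - p) / 4 := by
            simp only [rho, phi, if_true]; field_simp
          have e2 : rho p * phi p false = - (p / 4) := by
            simp [rho, phi]; field_simp
          have := two_point (g := g ω) (h := h ω) hp
          cases ω i
          · simp only [Bool.not_false, e1, e2]
            simp only [wt, if_true, Bool.false_eq_true, if_false]
            linarith
          · simp only [Bool.not_true, e1, e2]
            simp only [wt, if_true, Bool.false_eq_true, if_false]
            linarith
      _ = bernoulliExp p (fun ω => g ω ^ 4) + 2 * bernoulliExp p (fun ω => g ω ^ 2 * h ω ^ 2)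
          + bernoulliExp p (fun ω => h ω ^ 4) := by
          rw [exp_add, exp_add, exp_const_mul]
      _ ≤ (G + H) ^ 2 := by nlinarith

lemma noise_bound {p : ℝ} (hp : p ∈ Set.Ioo (0 : ℝ) 1) (g A : (Fin n → Bool) → ℝ)
    (hA : ∀ ω, A ω = 0 ∨ A ω = 1) (hgA : ∀ ω, |g ω| ≤ A ω) :
    (∑ S, rho p ^ (2 * S.card) * coef p g S ^ 2) ^ 2 ≤ bernoulliExp p A ^ 3 := by
  set W := ∑ S, rho p ^ (2 * S.card) * coef p g S ^ 2 with hW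
  set I := bernoulliExp p A with hI
  set u : (Fin n → Bool) → ℝ :=
    fun ω => ∑ S, rho p ^ (2 * S.card) * coef p g S * chi p S ω with hu
  have hA0 : ∀ ω, 0 ≤ A ω := fun ω => (abs_nonneg _).trans (hgA ω)
  have hA2 : ∀ ω, A ω ^ 2 = A ω := fun ω => by rcases hA ω with h | h <;> simp [h]
  have hI0 : 0 ≤ I := exp_nonneg hp hA0
  have hW0 : 0 ≤ W := Finset.sum_nonneg fun S _ => by
    rw [pow_mul]; positivity
  have hWu : W = bernoulliExp p (fun ω => g ω * u ω) := by
    rw [hu, exp_mul_series]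
    exact Finset.sum_congr rfl fun S _ => by ring
  have h1 : W ≤ bernoulliExp p (fun ω => A ω * |u ω|) := by
    rw [hWu]
    refine exp_mono hp fun ω => (le_abs_self _).trans ?_
    rw [abs_mul]
    exact mul_le_mul_of_nonneg_right (hgA ω) (abs_nonneg _)
  have h2 : W ^ 2 ≤ I * bernoulliExp p (fun ω => A ω * u ω ^ 2) := by
    have h := exp_cs hp A (fun ω => A ω * |u ω|)
    simp only [mul_pow, hA2, sq_abs, ← mul_assoc, ← sq] at h
    exact (pow_le_pow_left₀ hW0 h1 2).trans h
  have h3 : (bernoulliExp p (fun ω => A ω * u ω ^ 2)) ^ 2 ≤ I * W ^ 2 := by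
    refine (exp_cs hp A (fun ω => u ω ^ 2)).trans ?_
    simp only [hA2, ← pow_mul]
    refine mul_le_mul_of_nonneg_left ?_ hI0
    have := hyper hp Finset.univ (fun S : Finset (Fin n) => rho p ^ S.card * coef p g S)
    rw [Finset.powerset_univ] at this
    have e1 : (∑ S, (rho p ^ S.card * coef p g S) ^ 2) = W :=
      Finset.sum_congr rfl fun S _ => by ring
    have e2 : ∀ ω, ∑ S, rho p ^ S.card * (rho p ^ S.card * coef p g S) * chi p S ω = u ω :=
      fun ω => Finset.sum_congr rfl fun S _ => by ring
    simp only [e1, e2] at this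
    exact this
  have h4 : W ^ 4 ≤ I ^ 3 * W ^ 2 := by
    calc W ^ 4 = (W ^ 2) ^ 2 := by ring
      _ ≤ (I * bernoulliExp p (fun ω => A ω * u ω ^ 2)) ^ 2 :=
          pow_le_pow_left₀ (sq_nonneg _) h2 2
      _ = I ^ 2 * (bernoulliExp p (fun ω => A ω * u ω ^ 2)) ^ 2 := by ring
      _ ≤ I ^ 2 * (I * W ^ 2) := mul_le_mul_of_nonneg_left h3 (sq_nonneg _)
      _ = I ^ 3 * W ^ 2 := by ring
  rcases hW0.eq_or_lt with h | h
  · rw [← h]; simp; positivity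
  · have : 0 < W ^ 2 := by positivity
    nlinarith

/-- The part of the variance attributed to coordinate `i`. -/
noncomputable def part (p : ℝ) (F : (Fin n → Bool) → ℝ) (i : Fin n) : ℝ :=
  ∑ S : Finset (Fin n), if i ∈ S then coef p F S ^ 2 / (S.card : ℝ) else 0

lemma var_eq {p : ℝ} (hp : p ∈ Set.Ioo (0 : ℝ) 1) (F : (Fin n → Bool) → ℝ)
    (h0 : bernoulliExp p F = 0) :
    bernoulliExp p (fun ω => F ω ^ 2) = ∑ i, part p F i := by
  rw [parseval hp]
  unfold part
  rw [Finset.sum_comm]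
  refine Finset.sum_congr rfl fun S _ => ?_
  rw [← Finset.sum_filter]
  simp only [Finset.filter_mem_eq_inter, Finset.univ_inter, Finset.sum_const, nsmul_eq_mul]
  rcases S.eq_empty_or_nonempty with rfl | hS
  · simp [coef, chi, h0]
  · have : (S.card : ℝ) ≠ 0 := by
      exact_mod_cast hS.card_pos.ne'
    field_simp

/-- Discrete derivative. -/
noncomputable def dd (p : ℝ) (F : (Fin n → Bool) → ℝ) (i : Fin n) (ω : Fin n → Bool) : ℝ :=
  wt p (!ω i) * (F ω - F (flipCoord i ω))

lemma coef_dd (p : ℝ) (F : (Fin n → Bool) → ℝ) {i : Fin n} {S : Finset (Fin n)} (h : i ∈ S) :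
    coef p (dd p F i) S = coef p F S := by
  have := exp_chi_zero p h (fun ω => F ω - dd p F i ω) (by
    intro ω
    simp only [dd, flip_flip, flip_same, Bool.not_not]
    have := wt_add p (ω i)
    linear_combination (F ω - F (flipCoord i ω)) * this)
  simp only [sub_mul] at this
  rw [exp_sub] at this
  unfold coef
  linarith

lemma rho_facts {p : ℝ} (hp : p ∈ Set.Ioo (0 : ℝ) 1) :
    0 < rho p ∧ 1 ≤ Real.log (1 / (p * (1 - p))) ∧
      0 < - Real.log (rho p) ∧ - Real.log (rho p) ≤ 3 / 2 * Real.log (1 / (p * (1 - p))) := by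
  obtain ⟨hs, hs2⟩ := sqrt_sq_pq hp
  have hpq : 0 < p * (1 - p) := mul_pos hp.1 (by linarith [hp.2])
  have hr : Real.log (rho p) = Real.log (p * (1 - p)) / 2 - Real.log 4 := by
    rw [rho, Real.log_div hs.ne' (by norm_num), Real.log_sqrt hpq.le]
  have hL : Real.log (1 / (p * (1 - p))) = - Real.log (p * (1 - p)) := by
    rw [one_div, Real.log_inv]
  have h4 : Real.log 4 = 2 * Real.log 2 := by
    rw [show (4 : ℝ) = 2 ^ 2 by norm_num, Real.log_pow]; norm_num
  have h2 := Real.log_two_gt_d9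
  have hle : Real.log (p * (1 - p)) ≤ - Real.log 4 := by
    rw [← Real.log_inv]
    apply Real.log_le_log hpq
    nlinarith [sq_nonneg (p - 1 / 2)]
  refine ⟨by unfold rho; positivity, ?_, ?_, ?_⟩ <;> rw [hL] at * <;> try rw [hr] <;> linarith
  all_goals linarith

lemma part_bound {p : ℝ} (hp : p ∈ Set.Ioo (0 : ℝ) 1) (F A : (Fin n → Bool) → ℝ) (i : Fin n)
    (hA : ∀ ω, A ω = 0 ∨ A ω = 1) (hFA : ∀ ω, |F ω - F (flipCoord i ω)| ≤ A ω) :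
    0 ≤ bernoulliExp p A ∧ bernoulliExp p A ≤ 1 ∧
    (bernoulliExp p A = 0 → part p F i ≤ 0) ∧
    (0 < bernoulliExp p A → bernoulliExp p A < 1 → part p F i ≤
      16 * Real.log (1 / (p * (1 - p))) *
        (bernoulliExp p A / Real.log (1 / bernoulliExp p A))) := by
  have hA0 : ∀ ω, 0 ≤ A ω := fun ω => (abs_nonneg _).trans (hFA ω)
  have hgA : ∀ ω, |dd p F i ω| ≤ A ω := by
    intro ω
    rw [dd, abs_mul]
    have h1 : |wt p (!ω i)| ≤ 1 := by
      have := hp.1; have := hp.2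
      rw [abs_le]
      cases ω i <;> simp [wt] <;> constructor <;> linarith
    calc _ ≤ 1 * |F ω - F (flipCoord i ω)| := mul_le_mul_of_nonneg_right h1 (abs_nonneg _)
      _ ≤ A ω := by rw [one_mul]; exact hFA ω
  have hnb := noise_bound hp (dd p F i) A hA hgA
  set I := bernoulliExp p A with hI
  have hI0 : 0 ≤ I := exp_nonneg hp hA0
  have hI1 : I ≤ 1 := by
    rw [← exp_one (n := n) p]
    exact exp_mono hp fun ω => by rcases hA ω with h | h <;> simp [h]
  have hsq : ∑ S, coef p (dd p F i) S ^ 2 ≤ I := by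
    rw [← parseval hp]
    refine exp_mono hp fun ω => ?_
    have := hgA ω
    rw [← sq_abs]
    rcases hA ω with h | h <;> rw [h] at this ⊢ <;> nlinarith [abs_nonneg (dd p F i ω)]
  have hterm : ∀ S : Finset (Fin n), i ∈ S → 1 ≤ (S.card : ℝ) := fun S h => by
    exact_mod_cast Finset.card_pos.2 ⟨i, h⟩
  refine ⟨hI0, hI1, ?_, ?_⟩
  · intro hz
    rw [hz] at hsq
    refine le_trans ?_ hsq
    refine Finset.sum_le_sum fun S _ => ?_
    split_ifs with h
    · rw [coef_dd p F h]
      exact div_le_self (sq_nonneg _) (hterm S h)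
    · positivity
  · intro hIpos hIlt
    obtain ⟨hr, hL1, hl0, hl1⟩ := rho_facts hp
    set L := Real.log (1 / (p * (1 - p)))
    set l := - Real.log (rho p) with hl
    set Λ := Real.log (1 / I) with hΛ
    have hΛ' : Real.log I = - Λ := by rw [hΛ, one_div, Real.log_inv]; ring
    have hΛ0 : 0 < Λ := Real.log_pos (by rw [one_div]; exact (one_lt_inv₀ hIpos).2 hIlt)
    set t := Λ / (8 * l) with ht
    have ht0 : 0 < t := by positivity
    set W := ∑ S, rho p ^ (2 * S.card) * coef p (dd p F i) S ^ 2 with hW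
    have hWle : W ≤ Real.exp (-(3 / 2 * Λ)) := by
      refine (le_abs_self _).trans (abs_le_of_sq_le_sq ?_ (Real.exp_pos _).le)
      refine hnb.trans (le_of_eq ?_)
      rw [← Real.exp_log hIpos, hΛ', ← Real.exp_nat_mul, ← Real.exp_nat_mul]
      congr 1; push_cast; ring
    have hmain : part p F i ≤ Real.exp (Λ / 4) * W + 1 / t * I := by
      calc part p F i ≤ ∑ S, (Real.exp (Λ / 4) * (rho p ^ (2 * S.card) * coef p (dd p F i) S ^ 2)
            + 1 / t * coef p (dd p F i) S ^ 2) := by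
            refine Finset.sum_le_sum fun S _ => ?_
            split_ifs with h
            · rw [coef_dd p F h]
              have hc := hterm S h
              have hpow : rho p ^ (2 * S.card) = Real.exp (-(2 * S.card * l)) := by
                conv_lhs => rw [← Real.exp_log hr]
                rw [← Real.exp_nat_mul, hl]
                congr 1; push_cast; ring
              have key : 1 / (S.card : ℝ) ≤ Real.exp (Λ / 4) * rho p ^ (2 * S.card) + 1 / t := by
                rw [hpow, ← Real.exp_add]
                by_cases hct : (S.card : ℝ) ≤ t
                · have : 0 ≤ Λ / 4 + -(2 * S.card * l) := by
                    have : (S.card : ℝ) * (8 * l) ≤ Λ := by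
                      rwa [ht, le_div_iff₀ (by positivity)] at hct
                    linarith
                  have h1 := Real.one_le_exp this
                  have h2 : 1 / (S.card : ℝ) ≤ 1 := by
                    rw [div_le_one (by linarith)]; exact hc
                  have h3 : 0 < 1 / t := by positivity
                  linarith
                · push Not at hct
                  have h1 := one_div_le_one_div_of_le ht0 hct.le
                  have h2 := Real.exp_pos (Λ / 4 + -(2 * S.card * l))
                  linarith
              have := mul_le_mul_of_nonneg_right key (sq_nonneg (coef p F S))
              calc _ = 1 / (S.card : ℝ) * coef p F S ^ 2 := by ring
                _ ≤ _ := this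
                _ = _ := by ring
            · positivity
        _ = Real.exp (Λ / 4) * W + 1 / t * ∑ S, coef p (dd p F i) S ^ 2 := by
            rw [Finset.sum_add_distrib, Finset.mul_sum, Finset.mul_sum]
        _ ≤ _ := by gcongr
    have hfirst : Real.exp (Λ / 4) * W ≤ 4 / Λ * I := by
      have e1 : Real.exp (Λ / 4) * W ≤ Real.exp (-(Λ / 4)) * I := by
        calc _ ≤ Real.exp (Λ / 4) * Real.exp (-(3 / 2 * Λ)) := by gcongr
          _ = Real.exp (-(Λ / 4)) * Real.exp (-Λ) := by
            rw [← Real.exp_add, ← Real.exp_add]; congr 1; ring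
          _ = _ := by rw [← hΛ', Real.exp_log hIpos]
      have e2 : Real.exp (-(Λ / 4)) ≤ 4 / Λ := by
        rw [Real.exp_neg, inv_le_comm₀ (Real.exp_pos _) (by positivity), inv_div]
        linarith [Real.add_one_le_exp (Λ / 4)]
      exact e1.trans (mul_le_mul_of_nonneg_right e2 hI0)
    have ht1 : 1 / t = 8 * l / Λ := by rw [ht, one_div_div]
    rw [ht1] at hmain
    calc part p F i ≤ 4 / Λ * I + 8 * l / Λ * I := by linarith
      _ = (4 + 8 * l) * (I / Λ) := by ring
      _ ≤ 16 * L * (I / Λ) := by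
          apply mul_le_mul_of_nonneg_right _ (by positivity)
          linarith

end TalagrandAux

/-- **Talagrand's influence inequality.**  There is a universal constant `c > 0` such that
for every `p ∈ (0,1)`, every `n`, and every increasing boolean function `f : {0,1}^n → {0,1}`,
`Var_p(f) ≤ c·log(1/(p(1−p)))·Σ_i Inf_i[f]/log(1/Inf_i[f])`.
The inequality is stated in `ℝ≥0∞`, where the summand for a coordinate with `Inf_i[f] = 0`
equals `0` (as `0/0 = 0` in `ℝ≥0∞`) and the summand for `Inf_i[f] = 1` equals `+∞`
(as `1/0 = ∞` in `ℝ≥0∞`, `log(1/1) = 0`). -/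
theorem talagrand_influence_inequality :
    ∃ c : ℝ, 0 < c ∧ ∀ (p : ℝ), p ∈ Set.Ioo (0 : ℝ) 1 → ∀ (n : ℕ)
      (f : (Fin n → Bool) → Bool), IncreasingBoolFun f →
      ENNReal.ofReal (bernoulliVar p f) ≤
        ENNReal.ofReal (c * Real.log (1 / (p * (1 - p)))) *
          ∑ i : Fin n,
            ENNReal.ofReal (influence p f i) /
              ENNReal.ofReal (Real.log (1 / influence p f i)) := by
  refine ⟨16, by norm_num, ?_⟩
  intro p hp n f _
  have hL1 := (TalagrandAux.rho_facts hp).2.1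
  set L := Real.log (1 / (p * (1 - p))) with hL
  set F : (Fin n → Bool) → ℝ := fun ω => boolInd f ω - bernoulliMean p f with hF
  have h0 : bernoulliExp p F = 0 := by
    rw [hF, TalagrandAux.exp_sub]
    have := TalagrandAux.exp_const_mul (n := n) p (bernoulliMean p f) (fun _ => 1)
    rw [TalagrandAux.exp_one] at this
    simp only [mul_one] at this
    rw [this]
    simp [bernoulliMean]
  have hv : bernoulliVar p f = ∑ i, TalagrandAux.part p F i := TalagrandAux.var_eq hp F h0
  have hpn : ∀ i, 0 ≤ TalagrandAux.part p F i := fun i =>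
    Finset.sum_nonneg fun S _ => by split_ifs <;> positivity
  rw [hv, ENNReal.ofReal_sum_of_nonneg fun i _ => hpn i, Finset.mul_sum]
  refine Finset.sum_le_sum fun i _ => ?_
  obtain ⟨hI0, hI1, hz, hb⟩ := TalagrandAux.part_bound hp F
    (fun ω => |boolInd f ω - boolInd f (flipCoord i ω)|) i
    (fun ω => by
      unfold boolInd
      by_cases h1 : f ω = true <;> by_cases h2 : f (flipCoord i ω) = true <;> simp [h1, h2])
    (fun ω => by simp [hF])
  change 0 ≤ influence p f i at hI0
  change influence p f i ≤ 1 at hI1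
  change influence p f i = 0 → _ at hz
  change 0 < influence p f i → influence p f i < 1 →
    TalagrandAux.part p F i ≤ 16 * L * (influence p f i / Real.log (1 / influence p f i)) at hb
  rcases hI0.eq_or_lt with h | h
  · rw [ENNReal.ofReal_of_nonpos (hz h.symm)]
    exact zero_le
  rcases hI1.eq_or_lt with h' | h'
  · rw [h']
    have hc : ENNReal.ofReal (16 * L) ≠ 0 := by
      rw [Ne, ENNReal.ofReal_eq_zero, not_le]; linarith
    have ht : ENNReal.ofReal 1 / ENNReal.ofReal (Real.log (1 / 1)) = ⊤ := by
      simp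
    rw [ht, ENNReal.mul_top hc]
    exact le_top
  · have hlog : 0 < Real.log (1 / influence p f i) :=
      Real.log_pos (by rw [one_div]; exact (one_lt_inv₀ h).2 h')
    rw [← ENNReal.ofReal_div_of_pos hlog, ← ENNReal.ofReal_mul (by linarith)]
    exact ENNReal.ofReal_le_ofReal (hb h h')
end

section
/- Sharp threshold for symmetric functions: There exists a universal constant c > 0 such that for every p ∈ (0,1), every n ≥ 2, and every increasing boolean function f : {0,1}^n → {0,1} that is invariant under some subgroup 𝔖 of permutations of {1,…,n} acting transitively on {1,…,n} (i.e. f(ω ∘ σ) = f(ω) for all σ ∈ 𝔖 and all ω, and for every i, j there is σ ∈ 𝔖 with σ(i) = j), the derivative of f(p) := 𝔼_p[f] satisfies f'(p) ≥ c · (log n) · Var_p(f). -/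
open scoped Classical

section SharpHelpers

/-- Discrete derivative in direction `j`. -/
def dD {n : ℕ} (j : Fin n) (g : (Fin n → Bool) → ℝ) (ω : Fin n → Bool) : ℝ :=
  g (Function.update ω j true) - g (Function.update ω j false)

theorem bE_zero (p : ℝ) (g : (Fin 0 → Bool) → ℝ) : bernoulliExp p g = g Fin.elim0 := by
  unfold bernoulliExp bernoulliWeight
  have : ∀ ω : Fin 0 → Bool, ω = Fin.elim0 := fun ω => Subsingleton.elim _ _
  rw [Fintype.sum_eq_single Fin.elim0 (fun ω h => absurd (this ω) h)]
  simp

theorem bE_succ {n : ℕ} (p : ℝ) (g : (Fin (n+1) → Bool) → ℝ) :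
    bernoulliExp p g = p * bernoulliExp p (fun ω : Fin n → Bool => g (Fin.cons true ω))
      + (1 - p) * bernoulliExp p (fun ω : Fin n → Bool => g (Fin.cons false ω)) := by
  unfold bernoulliExp bernoulliWeight
  rw [← (Fin.consEquiv (fun _ : Fin (n+1) => Bool)).sum_comp, Fintype.sum_prod_type,
    Fintype.sum_bool, Finset.mul_sum, Finset.mul_sum]
  simp [Fin.prod_univ_succ, mul_assoc]
  rfl

theorem bE_add {n : ℕ} (p : ℝ) (g h : (Fin n → Bool) → ℝ) :
    bernoulliExp p (fun ω => g ω + h ω) = bernoulliExp p g + bernoulliExp p h := by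
  simp [bernoulliExp, mul_add, Finset.sum_add_distrib]

theorem bE_mul {n : ℕ} (p c : ℝ) (g : (Fin n → Bool) → ℝ) :
    bernoulliExp p (fun ω => c * g ω) = c * bernoulliExp p g := by
  simp only [bernoulliExp, Finset.mul_sum]
  exact Finset.sum_congr rfl (fun _ _ => by ring)

theorem bE_const {n : ℕ} (p c : ℝ) : bernoulliExp p (fun _ : Fin n → Bool => c) = c := by
  induction n with
  | zero => rw [bE_zero]
  | succ n ih => rw [bE_succ, ih]; ring

theorem bW_nonneg {n : ℕ} {p : ℝ} (hp : p ∈ Set.Ioo (0:ℝ) 1) (ω : Fin n → Bool) :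
    0 ≤ bernoulliWeight p ω := by
  unfold bernoulliWeight
  apply Finset.prod_nonneg
  intro i _
  split_ifs
  · exact hp.1.le
  · linarith [hp.2]

theorem bE_mono {n : ℕ} {p : ℝ} (hp : p ∈ Set.Ioo (0:ℝ) 1) {g h : (Fin n → Bool) → ℝ}
    (H : ∀ ω, g ω ≤ h ω) : bernoulliExp p g ≤ bernoulliExp p h :=
  Finset.sum_le_sum (fun ω _ => mul_le_mul_of_nonneg_left (H ω) (bW_nonneg hp ω))

theorem bE_nonneg {n : ℕ} {p : ℝ} (hp : p ∈ Set.Ioo (0:ℝ) 1) {g : (Fin n → Bool) → ℝ}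
    (H : ∀ ω, 0 ≤ g ω) : 0 ≤ bernoulliExp p g :=
  Finset.sum_nonneg (fun ω _ => mul_nonneg (bW_nonneg hp ω) (H ω))

theorem bE_cs {n : ℕ} {p : ℝ} (hp : p ∈ Set.Ioo (0:ℝ) 1) (g h : (Fin n → Bool) → ℝ) :
    (bernoulliExp p (fun ω => g ω * h ω)) ^ 2 ≤
      bernoulliExp p (fun ω => g ω ^ 2) * bernoulliExp p (fun ω => h ω ^ 2) := by
  unfold bernoulliExp
  apply Finset.sum_sq_le_sum_mul_sum_of_sq_le_mul
  · intro ω _; have := bW_nonneg hp ω; positivity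
  · intro ω _; have := bW_nonneg hp ω; positivity
  · intro ω _; apply le_of_eq; ring

theorem dD_zero_cons {n : ℕ} (g : (Fin (n+1) → Bool) → ℝ) (b : Bool) (ω : Fin n → Bool) :
    dD 0 g (Fin.cons b ω : Fin (n+1) → Bool) = g (Fin.cons true ω) - g (Fin.cons false ω) := by
  simp [dD, Fin.update_cons_zero]

theorem dD_succ_cons {n : ℕ} (g : (Fin (n+1) → Bool) → ℝ) (j : Fin n) (b : Bool)
    (ω : Fin n → Bool) :
    dD j.succ g (Fin.cons b ω : Fin (n+1) → Bool) = dD j (fun ω => g (Fin.cons b ω)) ω := by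
  simp [dD, Fin.cons_update]

theorem two_point {p A B : ℝ} (hp : p ∈ Set.Ioo (0:ℝ) 1) (hA : 0 ≤ A) (hB : 0 ≤ B) :
    p * (A * Real.log A) + (1 - p) * (B * Real.log B)
      - (p * A + (1-p) * B) * Real.log (p * A + (1-p) * B)
      ≤ 2 * (√A - √B) ^ 2 := by
  obtain ⟨hp0, hp1⟩ := hp
  have hq : 0 < 1 - p := by linarith
  obtain ⟨a, ha, rfl⟩ : ∃ a, 0 ≤ a ∧ A = a ^ 2 := ⟨√A, Real.sqrt_nonneg _, (Real.sq_sqrt hA).symm⟩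
  obtain ⟨b, hb, rfl⟩ : ∃ b, 0 ≤ b ∧ B = b ^ 2 := ⟨√B, Real.sqrt_nonneg _, (Real.sq_sqrt hB).symm⟩
  rw [Real.sqrt_sq ha, Real.sqrt_sq hb]
  set M := p * a ^ 2 + (1-p) * b ^ 2 with hM
  have hM0 : 0 ≤ M := by positivity
  rcases hM0.eq_or_lt with h | hpos
  · have h1 : p * a ^ 2 = 0 := by nlinarith [mul_nonneg hp0.le hA, mul_nonneg hq.le hB]
    have h2 : (1-p) * b ^ 2 = 0 := by nlinarith [mul_nonneg hp0.le hA, mul_nonneg hq.le hB]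
    have h1' : a ^ 2 = 0 := by
      rcases mul_eq_zero.1 h1 with h | h
      · linarith
      · exact h
    have h2' : b ^ 2 = 0 := by
      rcases mul_eq_zero.1 h2 with h | h
      · linarith
      · exact h
    rw [h1', h2', ← h]
    simp
    positivity
  have key : ∀ x : ℝ, 0 ≤ x → x * Real.log x ≤ x * Real.log M + x * (x / M - 1) := by
    intro x hx
    rcases hx.eq_or_lt with h | h
    · simp [← h]
    · have := Real.log_le_sub_one_of_pos (div_pos h hpos)
      rw [Real.log_div h.ne' hpos.ne'] at this
      nlinarith
  have k1 := mul_le_mul_of_nonneg_left (key _ hA) hp0.le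
  have k2 := mul_le_mul_of_nonneg_left (key _ hB) hq.le
  have e : p * (a^2 * (a^2 / M - 1)) + (1-p) * (b^2 * (b^2/M - 1))
      = p * (1-p) * (a^2 - b^2)^2 / M := by
    field_simp
    rw [hM]; ring
  have e2 : p * (1-p) * (a^2 - b^2)^2 / M ≤ 2 * (a - b)^2 := by
    rw [div_le_iff₀ hpos]
    have : p * (1-p) * (a+b)^2 ≤ 2 * M := by
      rw [hM]
      have h1 : (a+b)^2 ≤ 2 * a^2 + 2 * b^2 := by nlinarith [sq_nonneg (a-b)]
      have h2 : p * (1-p) * (a+b)^2 ≤ p * (1-p) * (2 * a^2 + 2 * b^2) :=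
        mul_le_mul_of_nonneg_left h1 (by positivity)
      nlinarith [mul_nonneg (mul_nonneg hp0.le hp0.le) hA, mul_nonneg (mul_nonneg hq.le hq.le) hB]
    nlinarith [mul_le_mul_of_nonneg_left this (sq_nonneg (a-b))]
  nlinarith

/-- Log-Sobolev inequality. -/
theorem log_sob {n : ℕ} {p : ℝ} (hp : p ∈ Set.Ioo (0:ℝ) 1) (g : (Fin n → Bool) → ℝ) :
    bernoulliExp p (fun ω => g ω ^ 2 * Real.log (g ω ^ 2))
      - bernoulliExp p (fun ω => g ω ^ 2) * Real.log (bernoulliExp p (fun ω => g ω ^ 2))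
      ≤ 2 * ∑ j, bernoulliExp p (fun ω => dD j g ω ^ 2) := by
  induction n with
  | zero => simp [bE_zero]
  | succ n ih =>
    have i1 := ih (fun ω => g (Fin.cons true ω))
    have i0 := ih (fun ω => g (Fin.cons false ω))
    rw [Fin.sum_univ_succ]
    simp only [bE_succ p (n := n), dD_zero_cons, dD_succ_cons, Finset.sum_add_distrib,
      ← Finset.mul_sum]
    set A := bernoulliExp p (fun ω : Fin n → Bool => g (Fin.cons true ω) ^ 2) with hA
    set B := bernoulliExp p (fun ω : Fin n → Bool => g (Fin.cons false ω) ^ 2) with hB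
    have A0 : 0 ≤ A := bE_nonneg hp (fun _ => sq_nonneg _)
    have B0 : 0 ≤ B := bE_nonneg hp (fun _ => sq_nonneg _)
    have tp := two_point hp A0 B0
    have cs := bE_cs hp (fun ω : Fin n → Bool => g (Fin.cons true ω))
      (fun ω => g (Fin.cons false ω))
    rw [← hA, ← hB] at cs
    have ex : bernoulliExp p (fun ω : Fin n → Bool => (g (Fin.cons true ω) - g (Fin.cons false ω)) ^ 2)
        = A + B + (-2) * bernoulliExp p (fun ω : Fin n → Bool => g (Fin.cons true ω) * g (Fin.cons false ω)) := by
      rw [hA, hB, ← bE_mul, ← bE_add, ← bE_add]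
      congr 1; ext ω; ring
    set C := bernoulliExp p (fun ω : Fin n → Bool => g (Fin.cons true ω) * g (Fin.cons false ω))
    have hC : C ≤ √A * √B := by
      rw [← Real.sqrt_mul A0]
      exact Real.le_sqrt_of_sq_le cs
    rw [ex]
    have sA := Real.sq_sqrt A0
    have sB := Real.sq_sqrt B0
    have k1 := mul_le_mul_of_nonneg_left i1 hp.1.le
    have k0 := mul_le_mul_of_nonneg_left i0 (sub_pos.2 hp.2).le
    nlinarith

theorem ent_lower {n : ℕ} {p : ℝ} (hp : p ∈ Set.Ioo (0:ℝ) 1) (d : (Fin n → Bool) → ℝ)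
    {s : ℝ} (hs : 0 < s) :
    bernoulliExp p (fun ω => d ω ^ 2) * Real.log s - s * (bernoulliExp p (fun ω => |d ω|)) ^ 2
    ≤ bernoulliExp p (fun ω => d ω ^ 2 * Real.log (d ω ^ 2))
      - bernoulliExp p (fun ω => d ω ^ 2) * Real.log (bernoulliExp p (fun ω => d ω ^ 2)) := by
  set v := bernoulliExp p (fun ω => d ω ^ 2) with hv
  have v0 : 0 ≤ v := bE_nonneg hp (fun _ => sq_nonneg _)
  set a := bernoulliExp p (fun ω => |d ω|) with ha
  rcases v0.eq_or_lt with h | hpos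
  · have hz : bernoulliExp p (fun ω => d ω ^ 2 * Real.log (d ω ^ 2)) = 0 := by
      have h' := h.symm
      rw [hv, bernoulliExp, Finset.sum_eq_zero_iff_of_nonneg
        (fun ω _ => mul_nonneg (bW_nonneg hp ω) (sq_nonneg _))] at h'
      apply Finset.sum_eq_zero
      intro ω hω
      rw [← mul_assoc, h' ω hω, zero_mul]
    rw [hz, ← h]
    have : 0 ≤ s * a ^ 2 := by positivity
    linarith
  have key : ∀ ω, (Real.log v + Real.log s + 2) * d ω ^ 2 + (-2 * (√v * √s)) * |d ω|
      ≤ d ω ^ 2 * Real.log (d ω ^ 2) := by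
    intro ω
    rcases eq_or_ne (d ω) 0 with h | h
    · simp [h]
    · have ad : 0 < |d ω| := abs_pos.2 h
      have hr : 0 < √v * √s := by positivity
      have := Real.log_le_sub_one_of_pos (div_pos hr ad)
      rw [Real.log_div hr.ne' ad.ne', Real.log_mul (by positivity) (by positivity),
        Real.log_sqrt v0, Real.log_sqrt hs.le] at this
      have e : Real.log (d ω ^ 2) = 2 * Real.log |d ω| := by
        rw [← sq_abs, Real.log_pow]; norm_num
      rw [e, ← sq_abs]
      have t := mul_le_mul_of_nonneg_left this (by positivity : 0 ≤ 2 * |d ω| ^ 2)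
      have e2 : 2 * |d ω| ^ 2 * (√v * √s / |d ω| - 1) = 2 * (√v * √s) * |d ω| - 2 * |d ω|^2 := by
        field_simp
      nlinarith
  have := bE_mono hp key
  rw [bE_add, bE_mul, bE_mul, ← hv, ← ha] at this
  have sv := Real.sq_sqrt v0
  have ss := Real.sq_sqrt hs.le
  have q : s * a ^ 2 = (√s * a) ^ 2 := by rw [mul_pow, ss]
  nlinarith [sq_nonneg (√v - √s * a)]

theorem main_ineq {n : ℕ} {p : ℝ} (hp : p ∈ Set.Ioo (0:ℝ) 1) {s : ℝ} (hs : 0 < s)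
    (g : (Fin n → Bool) → ℝ) :
    (bernoulliExp p (fun ω => g ω ^ 2) - (bernoulliExp p g) ^ 2) * Real.log s
      ≤ 2 * ∑ j, bernoulliExp p (fun ω => dD j g ω ^ 2)
        + s * ∑ j, (bernoulliExp p (fun ω => |dD j g ω|)) ^ 2 := by
  induction n with
  | zero => simp [bE_zero]
  | succ n ih =>
    obtain ⟨hp0, hp1⟩ := id hp
    have hq : 0 < 1 - p := by linarith
    set g1 : (Fin n → Bool) → ℝ := fun ω => g (Fin.cons true ω) with hg1
    set g0 : (Fin n → Bool) → ℝ := fun ω => g (Fin.cons false ω) with hg0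
    set D : (Fin n → Bool) → ℝ := fun ω => g1 ω + (-1) * g0 ω with hD
    set h : (Fin n → Bool) → ℝ := fun ω => p * g1 ω + (1-p) * g0 ω with hh
    have ihh := ih h
    set d : (Fin (n+1) → Bool) → ℝ :=
      fun ω => (if ω 0 then 1 - p else -p) * D (Fin.tail ω) with hd
    have d1 : ∀ ω, d (Fin.cons true ω) = (1-p) * D ω := by intro ω; simp [hd]
    have d0 : ∀ ω, d (Fin.cons false ω) = (-p) * D ω := by intro ω; simp [hd]
    have ls := (ent_lower hp d hs).trans (log_sob hp d)
    have dDmul : ∀ (c : ℝ) (j : Fin n) ω, dD j (fun ω => c * D ω) ω = c * dD j D ω := by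
      intro c j ω; simp only [dD]; ring
    rw [Fin.sum_univ_succ] at ls
    simp only [bE_succ p (n := n), dD_zero_cons, dD_succ_cons, d1, d0, dDmul, mul_pow, bE_mul,
      abs_mul, abs_neg, abs_of_pos hp0, abs_of_pos hq] at ls
    have e0 : bernoulliExp p (fun ω => ((1-p) * D ω - (-p) * D ω) ^ 2)
        = bernoulliExp p (fun ω => D ω ^ 2) := by congr 1; ext ω; ring
    rw [e0] at ls
    set V := bernoulliExp p (fun ω => D ω ^ 2) with hV
    set a := bernoulliExp p (fun ω => |D ω|) with ha
    have a0 : 0 ≤ a := bE_nonneg hp (fun _ => abs_nonneg _)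
    have es : ∑ j : Fin n, (p * ((1-p)^2 * bernoulliExp p (fun ω => dD j D ω ^ 2))
        + (1-p) * ((-p)^2 * bernoulliExp p (fun ω => dD j D ω ^ 2)))
        = p * (1-p) * ∑ j : Fin n, bernoulliExp p (fun ω => dD j D ω ^ 2) := by
      rw [Finset.mul_sum]
      exact Finset.sum_congr rfl (fun _ _ => by ring)
    rw [es] at ls
    rw [Fin.sum_univ_succ, Fin.sum_univ_succ]
    simp only [bE_succ p (n := n), dD_zero_cons, dD_succ_cons]
    change ((p * bernoulliExp p (fun ω => g1 ω ^ 2) + (1-p) * bernoulliExp p (fun ω => g0 ω ^ 2))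
      - (p * bernoulliExp p g1 + (1-p) * bernoulliExp p g0)^2) * Real.log s ≤
      2 * ((p * bernoulliExp p (fun ω => (g1 ω - g0 ω) ^ 2)
          + (1-p) * bernoulliExp p (fun ω => (g1 ω - g0 ω) ^ 2)) +
        ∑ j : Fin n, (p * bernoulliExp p (fun ω => dD j g1 ω ^ 2)
          + (1-p) * bernoulliExp p (fun ω => dD j g0 ω ^ 2)))
      + s * ((p * bernoulliExp p (fun ω => |g1 ω - g0 ω|)
          + (1-p) * bernoulliExp p (fun ω => |g1 ω - g0 ω|)) ^ 2 +
        ∑ j : Fin n, (p * bernoulliExp p (fun ω => |dD j g1 ω|)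
          + (1-p) * bernoulliExp p (fun ω => |dD j g0 ω|)) ^ 2)
    have f1 : bernoulliExp p (fun ω => (g1 ω - g0 ω) ^ 2) = V := by
      rw [hV]; congr 1; ext ω; simp only [hD]; ring
    have f2 : bernoulliExp p (fun ω => |g1 ω - g0 ω|) = a := by
      rw [ha]; congr 1; ext ω; simp only [hD]; congr 1; ring
    rw [f1, f2]
    have f3 : bernoulliExp p h = p * bernoulliExp p g1 + (1-p) * bernoulliExp p g0 := by
      rw [hh, bE_add, bE_mul, bE_mul]
    have f4 : p * bernoulliExp p (fun ω => g1 ω ^ 2) + (1-p) * bernoulliExp p (fun ω => g0 ω ^ 2)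
        = bernoulliExp p (fun ω => h ω ^ 2) + p * (1-p) * V := by
      rw [hV, ← bE_mul, ← bE_mul, ← bE_mul, ← bE_add, ← bE_add]
      congr 1; ext ω; simp only [hD, hh]; ring
    have f5 : ∀ j : Fin n, p * bernoulliExp p (fun ω => dD j g1 ω ^ 2)
          + (1-p) * bernoulliExp p (fun ω => dD j g0 ω ^ 2)
        = bernoulliExp p (fun ω => dD j h ω ^ 2)
          + p * (1-p) * bernoulliExp p (fun ω => dD j D ω ^ 2) := by
      intro j
      rw [← bE_mul, ← bE_mul, ← bE_mul, ← bE_add, ← bE_add]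
      congr 1; ext ω; simp only [hD, hh, dD]; ring
    have f6 : ∑ j : Fin n, (bernoulliExp p (fun ω => |dD j h ω|)) ^ 2 ≤
        ∑ j : Fin n, (p * bernoulliExp p (fun ω => |dD j g1 ω|)
          + (1-p) * bernoulliExp p (fun ω => |dD j g0 ω|)) ^ 2 := by
      apply Finset.sum_le_sum
      intro j _
      apply pow_le_pow_left₀ (bE_nonneg hp (fun _ => abs_nonneg _))
      rw [← bE_mul, ← bE_mul, ← bE_add]
      apply bE_mono hp
      intro ω
      have : dD j h ω = p * dD j g1 ω + (1-p) * dD j g0 ω := by simp only [hh, dD]; ring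
      rw [this]
      refine (abs_add_le _ _).trans (le_of_eq ?_)
      rw [abs_mul, abs_mul, abs_of_pos hp0, abs_of_pos hq]
    rw [← f3, f4, Finset.sum_congr rfl (fun j _ => f5 j), Finset.sum_add_distrib,
      ← Finset.mul_sum]
    have f7 := mul_le_mul_of_nonneg_left f6 hs.le
    have f8 : s * (p * ((1-p) * a) + (1-p) * (p * a)) ^ 2 ≤ s * a ^ 2 := by
      apply mul_le_mul_of_nonneg_left _ hs.le
      apply pow_le_pow_left₀ (by positivity)
      nlinarith [mul_nonneg a0 (sq_nonneg (2 * p - 1))]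
    nlinarith

theorem bE_deriv {n : ℕ} (p : ℝ) (g : (Fin n → Bool) → ℝ) :
    HasDerivAt (fun q => bernoulliExp q g) (∑ j, bernoulliExp p (dD j g)) p := by
  induction n with
  | zero => simpa [bE_zero] using hasDerivAt_const p (g Fin.elim0)
  | succ n ih =>
    have i1 := (hasDerivAt_id p).mul (ih (fun ω => g (Fin.cons true ω)))
    have i0 := ((hasDerivAt_id p).const_sub 1).mul (ih (fun ω => g (Fin.cons false ω)))
    have := i1.add i0
    have e : (fun q => bernoulliExp q g) = fun q =>
      q * bernoulliExp q (fun ω : Fin n → Bool => g (Fin.cons true ω))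
      + (1 - q) * bernoulliExp q (fun ω : Fin n → Bool => g (Fin.cons false ω)) := by
      ext q; exact bE_succ q g
    rw [e]
    refine this.congr_deriv ?_
    rw [Fin.sum_univ_succ]
    simp only [bE_succ p (n := n), dD_zero_cons, dD_succ_cons, Finset.sum_add_distrib,
      ← Finset.mul_sum]
    have ex : bernoulliExp p (fun ω : Fin n → Bool => g (Fin.cons true ω) - g (Fin.cons false ω))
        = bernoulliExp p (fun ω : Fin n → Bool => g (Fin.cons true ω)) +
          (-1) * bernoulliExp p (fun ω : Fin n → Bool => g (Fin.cons false ω)) := by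
      rw [← bE_mul, ← bE_add]; congr 1; ext ω; ring
    have eta : ∀ (b : Bool) (j : Fin n),
      bernoulliExp p (fun ω : Fin n → Bool => dD j (fun ω => g (Fin.cons b ω)) ω)
        = bernoulliExp p (dD j (fun ω => g (Fin.cons b ω))) := fun _ _ => rfl
    simp only [ex, eta, id]
    ring

theorem bE_perm {n : ℕ} (p : ℝ) (σ : Equiv.Perm (Fin n)) (g : (Fin n → Bool) → ℝ) :
    bernoulliExp p (fun ω => g (fun i => ω (σ i))) = bernoulliExp p g := by
  unfold bernoulliExp
  refine Fintype.sum_equiv (Equiv.arrowCongr σ.symm (Equiv.refl Bool)) _ _ ?_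
  intro ω
  have e : (Equiv.arrowCongr σ.symm (Equiv.refl Bool)) ω = fun i => ω (σ i) := by
    ext i; simp [Equiv.arrowCongr]
  rw [e]
  congr 1
  unfold bernoulliWeight
  exact (Equiv.prod_comp σ (fun i => if ω i then p else 1 - p)).symm

end SharpHelpers

/-- **Sharp threshold for symmetric increasing functions.**  There is a universal `c > 0`
such that for every `p ∈ (0,1)`, every `n ≥ 2` and every increasing boolean function
`f : {0,1}^n → {0,1}` invariant under a subgroup of permutations of the coordinates acting
transitively, the derivative of `p ↦ 𝔼_p[f]` is at least `c·(log n)·Var_p(f)`. -/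
theorem symmetric_sharp_threshold :
    ∃ c : ℝ, 0 < c ∧ ∀ (n : ℕ), 2 ≤ n → ∀ (p : ℝ), p ∈ Set.Ioo (0 : ℝ) 1 →
      ∀ f : (Fin n → Bool) → Bool, IncreasingBoolFun f →
      (∃ G : Subgroup (Equiv.Perm (Fin n)),
        (∀ i j : Fin n, ∃ σ ∈ G, σ i = j) ∧
        (∀ σ ∈ G, ∀ ω : Fin n → Bool, f (fun i => ω (σ i)) = f ω)) →
      c * Real.log n * bernoulliVar p f ≤ deriv (fun q : ℝ => bernoulliMean q f) p := by
  refine ⟨1/8, by norm_num, ?_⟩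
  rintro n hn p hp f hf ⟨G, htrans, hinv⟩
  set F : (Fin n → Bool) → ℝ := boolInd f with hF
  have F01 : ∀ ω, F ω = 0 ∨ F ω = 1 := by
    intro ω; simp only [hF, boolInd]; split_ifs <;> simp
  have dF01 : ∀ j ω, dD j F ω = 0 ∨ dD j F ω = 1 := by
    intro j ω
    have hle : f (Function.update ω j false) ≤ f (Function.update ω j true) := by
      apply hf
      intro i
      by_cases h : i = j
      · subst h; simp
      · simp [Function.update_of_ne h]
    simp only [dD, hF, boolInd]
    revert hle
    cases f (Function.update ω j false) <;> cases f (Function.update ω j true) <;> simp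
  have hder : deriv (fun q : ℝ => bernoulliMean q f) p = ∑ j, bernoulliExp p (dD j F) :=
    (bE_deriv p F).deriv
  have hsymm : ∀ i j, bernoulliExp p (dD i F) = bernoulliExp p (dD j F) := by
    intro i j
    obtain ⟨σ, hσ, hij⟩ := htrans i j
    rw [← bE_perm p σ (dD i F)]
    congr 1
    ext ω
    have hu : ∀ b, F (Function.update (fun k => ω (σ k)) i b) = F (Function.update ω j b) := by
      intro b
      have := hinv σ hσ (Function.update ω j b)
      have e : (fun k => Function.update ω j b (σ k)) = Function.update (fun k => ω (σ k)) i b := by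
        ext k
        by_cases h : k = i
        · subst h; simp [hij]
        · have : σ k ≠ j := fun h' => h (σ.injective (h'.trans hij.symm))
          simp [Function.update_of_ne h, Function.update_of_ne this]
      rw [e] at this
      simp only [hF, boolInd, this]
    simp only [dD, hu]
  have hn0 : 0 < n := by omega
  set I := bernoulliExp p (dD (⟨0, hn0⟩ : Fin n) F) with hI
  have hIj : ∀ j, bernoulliExp p (dD j F) = I := fun j => hsymm j _
  have hI0 : 0 ≤ I := bE_nonneg hp (fun ω => by rcases dF01 ⟨0, hn0⟩ ω with h | h <;> simp [h])
  have hsq : ∀ j, bernoulliExp p (fun ω => dD j F ω ^ 2) = I := by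
    intro j; rw [← hIj j]; congr 1; ext ω
    rcases dF01 j ω with h | h <;> simp [h]
  have hab : ∀ j, bernoulliExp p (fun ω => |dD j F ω|) = I := by
    intro j; rw [← hIj j]; congr 1; ext ω
    rcases dF01 j ω with h | h <;> simp [h]
  have hnR : (2:ℝ) ≤ n := by exact_mod_cast hn
  have hnpos : (0:ℝ) < n := by linarith
  have hs : 0 < √(n:ℝ) := by positivity
  have key := main_ineq hp hs F
  set m := bernoulliExp p F with hm
  have hvar : bernoulliVar p f = bernoulliExp p (fun ω => F ω ^ 2) - m ^ 2 := by
    have : bernoulliVar p f = bernoulliExp p (fun ω => F ω ^ 2 + ((-2 * m) * F ω + m ^ 2)) := by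
      unfold bernoulliVar
      congr 1; ext ω
      change (F ω - m) ^ 2 = _
      ring
    rw [this, bE_add, bE_add, bE_mul, bE_const, ← hm]
    ring
  have hv0 : 0 ≤ bernoulliVar p f := bE_nonneg hp (fun _ => sq_nonneg _)
  have hv1 : bernoulliVar p f ≤ 1 := by
    have : bernoulliExp p (fun ω => F ω ^ 2) ≤ bernoulliExp p (fun _ : Fin n → Bool => (1:ℝ)) :=
      bE_mono hp (fun ω => by rcases F01 ω with h | h <;> simp [h])
    rw [bE_const] at this
    rw [hvar]
    nlinarith [sq_nonneg m]
  rw [← hvar, Real.log_sqrt hnpos.le] at key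
  simp only [hsq, hab, Finset.sum_const, Finset.card_univ, Fintype.card_fin, nsmul_eq_mul] at key
  rw [hder]
  simp only [hIj, Finset.sum_const, Finset.card_univ, Fintype.card_fin, nsmul_eq_mul]
  have hl : 0 ≤ Real.log n := Real.log_nonneg (by linarith)
  set v := bernoulliVar p f with hv
  have hvl : 0 ≤ v * Real.log n := mul_nonneg hv0 hl
  by_cases hc : v * Real.log n ≤ n * I
  · nlinarith
  push Not at hc
  have hlog : Real.log n ≤ 2 * √(n:ℝ) := by
    have := Real.log_le_sub_one_of_pos hs
    rw [Real.log_sqrt hnpos.le] at this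
    linarith
  have hns : √(n:ℝ) * √(n:ℝ) = n := Real.mul_self_sqrt hnpos.le
  have hI2 : n * I ≤ 2 * √(n:ℝ) := by nlinarith
  have h3 : √(n:ℝ) * (n * I ^ 2) ≤ 2 * (n * I) := by
    have := mul_le_mul_of_nonneg_left hI2 (mul_nonneg hs.le hI0)
    nlinarith
  nlinarith
end

section
/- Sharp thresholds for monotone graph properties: There exists a universal constant c > 0 with the following property. Let n ≥ 3, let N = n(n−1)/2 and index {0,1}^N by the edge set of the complete graph on n vertices. Let f : {0,1}^N → {0,1} be an increasing, non-constant boolean function that is invariant under the action of all permutations of the n vertices on the edge coordinates (a monotone graph property). Let p ∈ (0,1) satisfy 𝔼_p[f] = 1/2. Then for every ε ∈ (0,1/2) and every δ ≥ log(1/ε)/(c log n): if p − δ ≥ 0 then 𝔼_{p−δ}[f] ≤ ε, and if p + δ ≤ 1 then 𝔼_{p+δ}[f] ≥ 1 − ε. -/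
open scoped Classical

/-- The edge set of the complete graph on `Fin n`: unordered pairs of distinct vertices.
It has cardinality `N = n(n−1)/2`; graphs on `Fin n` are identified with elements of
`{0,1}^(KEdge n)`. -/
def KEdge (n : ℕ) := {e : Sym2 (Fin n) // ¬ e.IsDiag}

noncomputable instance (n : ℕ) : Fintype (KEdge n) := by
  unfold KEdge; infer_instance

instance (n : ℕ) : DecidableEq (KEdge n) := by
  unfold KEdge; infer_instance

/-- The action of a permutation `σ` of the vertices on the edges of the complete graph. -/
def permEdge {n : ℕ} (σ : Equiv.Perm (Fin n)) (e : KEdge n) : KEdge n :=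
  ⟨Sym2.map σ e.1, fun h => e.2 ((Sym2.isDiag_map σ.injective).mp h)⟩

/-- A boolean function on graphs is a (monotone) graph property if it is invariant under
the action of every permutation of the vertices on the edge coordinates. -/
def IsGraphProperty {n : ℕ} (f : (KEdge n → Bool) → Bool) : Prop :=
  ∀ (σ : Equiv.Perm (Fin n)) (ω : KEdge n → Bool), f (fun e => ω (permEdge σ e)) = f ω


namespace SharpThr

section Gen

variable {ι : Type*} [Fintype ι] [DecidableEq ι]

/-- Averaging over coordinate `i`. -/
noncomputable def avg (p : ℝ) (i : ι) (g : (ι → Bool) → ℝ) (ω : ι → Bool) : ℝ :=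
  p * g (Function.update ω i true) + (1 - p) * g (Function.update ω i false)

/-- Discrete derivative in coordinate `i`. -/
noncomputable def dif (i : ι) (g : (ι → Bool) → ℝ) (ω : ι → Bool) : ℝ :=
  g (Function.update ω i true) - g (Function.update ω i false)

/-- Weight of all coordinates but `i`. -/
noncomputable def wt (p : ℝ) (i : ι) (ω : ι → Bool) : ℝ :=
  ∏ j ∈ Finset.univ.erase i, if ω j then p else 1 - p

lemma wt_update (p : ℝ) (i : ι) (ω : ι → Bool) (b : Bool) :
    wt p i (Function.update ω i b) = wt p i ω := by
  unfold wt
  apply Finset.prod_congr rfl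
  intro j hj
  rw [Function.update_of_ne (Finset.ne_of_mem_erase hj)]

lemma weight_eq (p : ℝ) (i : ι) (ω : ι → Bool) :
    bernoulliWeight p ω = (if ω i then p else 1 - p) * wt p i ω := by
  unfold bernoulliWeight wt
  rw [Finset.mul_prod_erase Finset.univ (fun j => if ω j then p else 1 - p) (Finset.mem_univ i)]

lemma weight_true (p : ℝ) (i : ι) (ω : ι → Bool) :
    bernoulliWeight p (Function.update ω i true) = p * wt p i ω := by
  rw [weight_eq p i, wt_update]; simp

lemma weight_false (p : ℝ) (i : ι) (ω : ι → Bool) :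
    bernoulliWeight p (Function.update ω i false) = (1 - p) * wt p i ω := by
  rw [weight_eq p i, wt_update]; simp

lemma flip_flip (i : ι) (ω : ι → Bool) : flipCoord i (flipCoord i ω) = ω := by
  unfold flipCoord; simp

lemma sum_pair (i : ι) (F : (ι → Bool) → ℝ) :
    2 * ∑ ω, F ω = ∑ ω, (F (Function.update ω i true) + F (Function.update ω i false)) := by
  have h : ∑ ω, F (flipCoord i ω) = ∑ ω, F ω :=
    Equiv.sum_comp (Function.Involutive.toPerm (flipCoord i) (flip_flip i)) F
  have h2 : 2 * ∑ ω, F ω = ∑ ω, (F ω + F (flipCoord i ω)) := by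
    rw [Finset.sum_add_distrib, h]; ring
  rw [h2]
  apply Finset.sum_congr rfl
  intro ω _
  unfold flipCoord
  have h3 : Function.update ω i (ω i) = ω := Function.update_eq_self i ω
  cases hb : ω i
  · rw [hb] at h3; rw [h3]; simp [add_comm]
  · rw [hb] at h3; rw [h3]; simp

lemma sum_congr_pair (i : ι) {F G : (ι → Bool) → ℝ}
    (h : ∀ ω, F (Function.update ω i true) + F (Function.update ω i false)
      = G (Function.update ω i true) + G (Function.update ω i false)) :
    ∑ ω, F ω = ∑ ω, G ω := by
  have h1 := sum_pair i F
  have h2 := sum_pair i G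
  have h3 : ∑ ω, (F (Function.update ω i true) + F (Function.update ω i false)) =
    ∑ ω, (G (Function.update ω i true) + G (Function.update ω i false)) :=
    Finset.sum_congr rfl (fun ω _ => h ω)
  linarith

lemma avg_update (p : ℝ) (i : ι) (g : (ι → Bool) → ℝ) (ω : ι → Bool) (b : Bool) :
    avg p i g (Function.update ω i b) = avg p i g ω := by
  simp [avg]

lemma dif_update (i : ι) (g : (ι → Bool) → ℝ) (ω : ι → Bool) (b : Bool) :
    dif i g (Function.update ω i b) = dif i g ω := by
  simp [dif]

lemma exp_avg (p : ℝ) (i : ι) (g : (ι → Bool) → ℝ) :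
    bernoulliExp p (avg p i g) = bernoulliExp p g := by
  unfold bernoulliExp
  apply sum_congr_pair i
  intro ω
  rw [weight_true, weight_false, avg_update, avg_update]
  unfold avg
  ring

lemma exp_add (p : ℝ) (g h : (ι → Bool) → ℝ) :
    bernoulliExp p (fun ω => g ω + h ω) = bernoulliExp p g + bernoulliExp p h := by
  simp [bernoulliExp, mul_add, Finset.sum_add_distrib]

lemma exp_sub (p : ℝ) (g h : (ι → Bool) → ℝ) :
    bernoulliExp p (fun ω => g ω - h ω) = bernoulliExp p g - bernoulliExp p h := by
  simp [bernoulliExp, mul_sub, Finset.sum_sub_distrib]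

lemma exp_mul (p c : ℝ) (g : (ι → Bool) → ℝ) :
    bernoulliExp p (fun ω => c * g ω) = c * bernoulliExp p g := by
  simp only [bernoulliExp, Finset.mul_sum]
  exact Finset.sum_congr rfl (fun ω _ => by ring)

lemma exp_const (p c : ℝ) :
    bernoulliExp p (fun _ : ι → Bool => c) = c := by
  have h : ∑ ω : ι → Bool, bernoulliWeight p ω = 1 := by
    unfold bernoulliWeight
    have := Finset.prod_univ_sum (fun _ : ι => (Finset.univ : Finset Bool))
      (fun _ b => if b then p else 1 - p)
    simp only [Fintype.piFinset_univ] at this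
    rw [← this]
    simp
  unfold bernoulliExp
  rw [← Finset.sum_mul, h, one_mul]

lemma weight_nonneg {p : ℝ} (h0 : 0 ≤ p) (h1 : p ≤ 1) (ω : ι → Bool) :
    0 ≤ bernoulliWeight p ω := by
  unfold bernoulliWeight
  apply Finset.prod_nonneg
  intro i _
  split_ifs <;> linarith

lemma exp_mono {p : ℝ} (h0 : 0 ≤ p) (h1 : p ≤ 1) {g h : (ι → Bool) → ℝ}
    (H : ∀ ω, g ω ≤ h ω) : bernoulliExp p g ≤ bernoulliExp p h :=
  Finset.sum_le_sum (fun ω _ => mul_le_mul_of_nonneg_left (H ω) (weight_nonneg h0 h1 ω))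

lemma exp_nonneg {p : ℝ} (h0 : 0 ≤ p) (h1 : p ≤ 1) {g : (ι → Bool) → ℝ}
    (H : ∀ ω, 0 ≤ g ω) : 0 ≤ bernoulliExp p g :=
  Finset.sum_nonneg (fun ω _ => mul_nonneg (weight_nonneg h0 h1 ω) (H ω))

/-- Orthogonality. -/
lemma exp_sq_sub (p : ℝ) (a : ι) (g : (ι → Bool) → ℝ) :
    bernoulliExp p (fun ω => (g ω - avg p a g ω) ^ 2)
      = bernoulliExp p (fun ω => g ω ^ 2) - bernoulliExp p (fun ω => avg p a g ω ^ 2) := by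
  rw [← exp_avg p a (fun ω => (g ω - avg p a g ω) ^ 2), ← exp_avg p a (fun ω => g ω ^ 2),
    ← exp_sub]
  congr 1
  funext ω
  have h1 := avg_update p a g ω true
  have h2 := avg_update p a g ω false
  simp only [avg] at h1 h2 ⊢
  rw [h1, h2]
  ring

lemma avg_comm (p : ℝ) (a i : ι) (g : (ι → Bool) → ℝ) :
    avg p a (avg p i g) = avg p i (avg p a g) := by
  by_cases h : a = i
  · rw [h]
  · funext ω
    simp only [avg, Function.update_comm h]
    ring

lemma dif_avg_ne (p : ℝ) {a i : ι} (h : i ≠ a) (g : (ι → Bool) → ℝ) :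
    dif i (avg p a g) = avg p a (dif i g) := by
  funext ω
  simp only [avg, dif, Function.update_comm h]
  ring

lemma dif_avg_self (p : ℝ) (a : ι) (g : (ι → Bool) → ℝ) (ω : ι → Bool) :
    dif a (avg p a g) ω = 0 := by
  simp [avg, dif]

lemma dif_of_inv (i : ι) (g : (ι → Bool) → ℝ) (H : ∀ ω, dif i g ω = 0) (ω : ι → Bool) (b : Bool) :
    g (Function.update ω i b) = g ω := by
  have h3 : Function.update ω i (ω i) = ω := Function.update_eq_self i ω
  have := H ω
  unfold dif at this
  cases b <;> cases hb : ω i <;> rw [hb] at h3 <;> (try rw [h3]) <;> rw [h3] at this <;> linarith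

lemma const_of_dif (g : (ι → Bool) → ℝ) (H : ∀ i ω, dif i g ω = 0) (ω ω' : ι → Bool) :
    g ω = g ω' := by
  have key : ∀ s : Finset ι, g (fun i => if i ∈ s then ω' i else ω i) = g ω := by
    intro s
    induction s using Finset.induction_on with
    | empty => simp
    | insert a s ha ih =>
      rw [← ih, ← dif_of_inv a g (H a) (fun i => if i ∈ s then ω' i else ω i) (ω' a)]
      congr 1
      funext i
      by_cases hi : i = a
      · subst hi; simp
      · simp [hi]
  have := key Finset.univ
  simpa using this.symm

/-- Total energy. -/
noncomputable def energy (p : ℝ) (g : (ι → Bool) → ℝ) : ℝ :=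
  ∑ i, bernoulliExp p (fun ω => dif i g ω ^ 2)

lemma energy_nonneg {p : ℝ} (h0 : 0 ≤ p) (h1 : p ≤ 1) (g : (ι → Bool) → ℝ) :
    0 ≤ energy p g :=
  Finset.sum_nonneg (fun _ _ => exp_nonneg h0 h1 (fun _ => sq_nonneg _))

lemma energy_step (p : ℝ) (a : ι) (g : (ι → Bool) → ℝ) :
    energy p (fun ω => g ω - avg p a g ω) = energy p g - energy p (avg p a g) := by
  unfold energy
  rw [← Finset.sum_sub_distrib]
  apply Finset.sum_congr rfl
  intro i _
  have hd : ∀ ω, dif i (fun ω => g ω - avg p a g ω) ω = dif i g ω - dif i (avg p a g) ω := by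
    intro ω; simp only [dif]; ring
  simp only [hd]
  by_cases h : i = a
  · subst h
    simp only [dif_avg_self, sub_zero]
    rw [exp_const p]
    simp [exp_const]
  · rw [dif_avg_ne p h]
    exact exp_sq_sub p a (dif i g)

/-- Two point inequality. -/
lemma two_point {p : ℝ} (h0 : 0 < p) (h1 : p < 1) (a b : ℝ) :
    p * (a ^ 2 * Real.log (a ^ 2)) + (1 - p) * (b ^ 2 * Real.log (b ^ 2))
      - (p * a ^ 2 + (1 - p) * b ^ 2) * Real.log (p * a ^ 2 + (1 - p) * b ^ 2) ≤ (a - b) ^ 2 := by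
  have hq : 0 < 1 - p := by linarith
  set m := p * a ^ 2 + (1 - p) * b ^ 2 with hm
  have hm0 : 0 ≤ m := by positivity
  rcases hm0.eq_or_lt with h | h
  · have ha : p * a ^ 2 = 0 := by nlinarith [mul_nonneg h0.le (sq_nonneg a), mul_nonneg hq.le (sq_nonneg b)]
    have hb : (1 - p) * b ^ 2 = 0 := by linarith
    have ha' : a = 0 := by simpa [h0.ne'] using ha
    have hb' : b = 0 := by simpa [hq.ne'] using hb
    rw [← h, ha', hb']; simp
  · have key : ∀ x : ℝ, 0 ≤ x → x * Real.log x ≤ x * Real.log m + x * (x / m - 1) := by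
      intro x hx
      rcases hx.eq_or_lt with h' | h'
      · rw [← h']; simp
      · have := Real.log_le_sub_one_of_pos (div_pos h' h)
        rw [Real.log_div h'.ne' h.ne'] at this
        nlinarith
    have k1 := mul_le_mul_of_nonneg_left (key _ (sq_nonneg a)) h0.le
    have k2 := mul_le_mul_of_nonneg_left (key _ (sq_nonneg b)) hq.le
    have e : p * (a ^ 2 * (a ^ 2 / m - 1)) + (1 - p) * (b ^ 2 * (b ^ 2 / m - 1))
        = p * (1 - p) * (a + b) ^ 2 * (a - b) ^ 2 / m := by
      field_simp
      rw [hm]; ring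
    have e2 : p * (1 - p) * (a + b) ^ 2 * (a - b) ^ 2 / m ≤ (a - b) ^ 2 := by
      rw [div_le_iff₀ h]
      have : p * (1 - p) * (a + b) ^ 2 ≤ m := by
        rw [hm]; nlinarith [sq_nonneg (p * a - (1 - p) * b)]
      nlinarith [sq_nonneg (a - b)]
    have e3 : m * Real.log m = p * (a ^ 2 * Real.log m) + (1 - p) * (b ^ 2 * Real.log m) := by
      rw [hm]; ring
    linarith

/-- The root-mean-square average. -/
noncomputable def rms (p : ℝ) (a : ι) (g : (ι → Bool) → ℝ) (ω : ι → Bool) : ℝ :=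
  Real.sqrt (avg p a (fun η => g η ^ 2) ω)

lemma rms_sq {p : ℝ} (h0 : 0 < p) (h1 : p < 1) (a : ι) (g : (ι → Bool) → ℝ) (ω : ι → Bool) :
    rms p a g ω ^ 2 = avg p a (fun η => g η ^ 2) ω := by
  unfold rms
  apply Real.sq_sqrt
  have hq : 0 < 1 - p := by linarith
  unfold avg; positivity

lemma sqrt_diff {p : ℝ} (h0 : 0 < p) (h1 : p < 1) (x y z w : ℝ) :
    (Real.sqrt (p * x ^ 2 + (1 - p) * y ^ 2) - Real.sqrt (p * z ^ 2 + (1 - p) * w ^ 2)) ^ 2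
      ≤ p * (x - z) ^ 2 + (1 - p) * (y - w) ^ 2 := by
  have hq : 0 < 1 - p := by linarith
  have hA : 0 ≤ p * x ^ 2 + (1 - p) * y ^ 2 := by positivity
  have hB : 0 ≤ p * z ^ 2 + (1 - p) * w ^ 2 := by positivity
  have h : p * x * z + (1 - p) * y * w ≤
      Real.sqrt (p * x ^ 2 + (1 - p) * y ^ 2) * Real.sqrt (p * z ^ 2 + (1 - p) * w ^ 2) := by
    rw [← Real.sqrt_mul hA]
    apply Real.le_sqrt_of_sq_le
    have : 0 ≤ p * (1 - p) * (x * w - y * z) ^ 2 := by positivity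
    nlinarith
  have s1 := Real.sq_sqrt hA
  have s2 := Real.sq_sqrt hB
  nlinarith

lemma energy_rms {p : ℝ} (h0 : 0 < p) (h1 : p < 1) (a : ι) (g : (ι → Bool) → ℝ) :
    energy p (rms p a g) ≤ energy p g - bernoulliExp p (fun ω => dif a g ω ^ 2) := by
  unfold energy
  rw [← Finset.sum_erase_add Finset.univ _ (Finset.mem_univ a),
    ← Finset.sum_erase_add Finset.univ (fun i => bernoulliExp p (fun ω => dif i g ω ^ 2))
      (Finset.mem_univ a)]
  have hz : ∀ ω, dif a (rms p a g) ω = 0 := by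
    intro ω; simp [dif, rms, avg_update]
  have hz2 : bernoulliExp p (fun ω => dif a (rms p a g) ω ^ 2) = 0 := by
    simp only [hz]; rw [exp_const]; norm_num
  rw [hz2, add_zero, add_sub_cancel_right]
  apply Finset.sum_le_sum
  intro i hi
  have hne : i ≠ a := Finset.ne_of_mem_erase hi
  rw [← exp_avg p a (fun ω => dif i g ω ^ 2)]
  apply exp_mono h0.le h1.le
  intro ω
  simp only [dif, rms, avg, Function.update_comm hne]
  exact sqrt_diff h0 h1 _ _ _ _

/-- Log-Sobolev functional. -/
noncomputable def lsf (p : ℝ) (g : (ι → Bool) → ℝ) : ℝ :=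
  bernoulliExp p (fun ω => g ω ^ 2 * Real.log (g ω ^ 2)) - energy p g

lemma lsf_rms {p : ℝ} (h0 : 0 < p) (h1 : p < 1) (a : ι) (g : (ι → Bool) → ℝ) :
    lsf p g ≤ lsf p (rms p a g) := by
  unfold lsf
  have h := energy_rms h0 h1 a g
  have h2 : bernoulliExp p (fun ω => g ω ^ 2 * Real.log (g ω ^ 2))
      - bernoulliExp p (fun ω => rms p a g ω ^ 2 * Real.log (rms p a g ω ^ 2))
      ≤ bernoulliExp p (fun ω => dif a g ω ^ 2) := by
    rw [← exp_avg p a (fun ω => g ω ^ 2 * Real.log (g ω ^ 2)), ← exp_sub]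
    apply exp_mono h0.le h1.le
    intro ω
    rw [rms_sq h0 h1]
    exact two_point h0 h1 _ _
  linarith

lemma rms_dif {p : ℝ} (a i : ι) (g : (ι → Bool) → ℝ)
    (H : i = a ∨ ∀ ω, dif i g ω = 0) (ω : ι → Bool) : dif i (rms p a g) ω = 0 := by
  by_cases h : i = a
  · subst h; simp [dif, rms, avg_update]
  · have H' := H.resolve_left h
    have := fun ω b => dif_of_inv i g H' ω b
    simp only [dif, rms, avg, Function.update_comm h, this]
    simp

lemma lsf_list {p : ℝ} (h0 : 0 < p) (h1 : p < 1) (l : List ι) (g : (ι → Bool) → ℝ)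
    (H : ∀ i, i ∈ l ∨ ∀ ω, dif i g ω = 0) :
    lsf p g ≤ bernoulliExp p (fun ω => g ω ^ 2) * Real.log (bernoulliExp p (fun ω => g ω ^ 2)) := by
  induction l generalizing g with
  | nil =>
    have H' : ∀ i ω, dif i g ω = 0 := fun i => (H i).resolve_left (by simp)
    have hc : ∀ ω, g ω = g (fun _ => true) := fun ω => const_of_dif g H' _ _
    have : lsf p g ≤ bernoulliExp p (fun ω => g ω ^ 2 * Real.log (g ω ^ 2)) := by
      unfold lsf; linarith [energy_nonneg h0.le h1.le g]
    refine this.trans (le_of_eq ?_)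
    have e1 : (fun ω => g ω ^ 2 * Real.log (g ω ^ 2)) =
      fun _ => g (fun _ => true) ^ 2 * Real.log (g (fun _ => true) ^ 2) := by
      funext ω; rw [hc ω]
    have e2 : (fun ω => g ω ^ 2) = fun _ => g (fun _ => true) ^ 2 := by
      funext ω; rw [hc ω]
    rw [e1, e2, exp_const, exp_const]
  | cons a l ih =>
    have e : bernoulliExp p (fun ω => rms p a g ω ^ 2) = bernoulliExp p (fun ω => g ω ^ 2) := by
      rw [← exp_avg p a (fun ω => g ω ^ 2)]
      congr 1
      funext ω
      exact rms_sq h0 h1 a g ω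
    rw [← e]
    refine (lsf_rms h0 h1 a g).trans (ih _ ?_)
    intro i
    by_cases hi : i ∈ l
    · exact Or.inl hi
    · right
      apply rms_dif
      rcases H i with h | h
      · left; simpa [hi] using h
      · exact Or.inr h

lemma log_sobolev {p : ℝ} (h0 : 0 < p) (h1 : p < 1) (g : (ι → Bool) → ℝ) :
    bernoulliExp p (fun ω => g ω ^ 2 * Real.log (g ω ^ 2))
      - bernoulliExp p (fun ω => g ω ^ 2) * Real.log (bernoulliExp p (fun ω => g ω ^ 2))
      ≤ energy p g := by
  have := lsf_list h0 h1 (Finset.univ.toList) g (fun i => Or.inl (by simp))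
  unfold lsf at this
  linarith

lemma pt_low {τ : ℝ} (ht : 0 < τ) (x : ℝ) :
    x ^ 2 * (2 * Real.log τ) + 2 * x ^ 2 - 2 * τ * |x| ≤ x ^ 2 * Real.log (x ^ 2) := by
  rcases eq_or_ne x 0 with h | h
  · rw [h]; simp
  · have hx : 0 < |x| := abs_pos.mpr h
    have := Real.log_le_sub_one_of_pos (div_pos ht hx)
    rw [Real.log_div ht.ne' hx.ne'] at this
    have e : Real.log (x ^ 2) = 2 * Real.log |x| := by
      rw [← sq_abs, Real.log_pow]; norm_num
    rw [e, ← sq_abs]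
    have e2 : |x| ^ 2 * (τ / |x|) = τ * |x| := by field_simp
    nlinarith [mul_le_mul_of_nonneg_left this (sq_nonneg |x|)]

lemma ent_low {p : ℝ} (h0 : 0 < p) (h1 : p < 1) (d : (ι → Bool) → ℝ) {s v : ℝ}
    (hs : 0 < s) (hv : 0 < v) (hd : bernoulliExp p (fun ω => |d ω|) ≤ v) :
    bernoulliExp p (fun ω => d ω ^ 2) * (1 + Real.log (s / v ^ 2)) - s ≤ energy p d := by
  set a := bernoulliExp p (fun ω => d ω ^ 2) with ha
  have ha0 : 0 ≤ a := exp_nonneg h0.le h1.le (fun _ => sq_nonneg _)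
  rcases ha0.eq_or_lt with h | h
  · rw [← h]; linarith [energy_nonneg h0.le h1.le d]
  · have LS := log_sobolev h0 h1 d
    rw [← ha] at LS
    have hτ : 0 < a / v := div_pos h hv
    have low : a * (2 * Real.log (a / v)) + 2 * a - 2 * (a / v) * bernoulliExp p (fun ω => |d ω|)
        ≤ bernoulliExp p (fun ω => d ω ^ 2 * Real.log (d ω ^ 2)) := by
      have := exp_mono h0.le h1.le (fun ω => pt_low hτ (d ω))
      rw [exp_sub, exp_add, exp_mul, exp_mul] at this
      have e : bernoulliExp p (fun ω => d ω ^ 2 * (2 * Real.log (a / v)))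
          = a * (2 * Real.log (a / v)) := by
        rw [ha, mul_comm (bernoulliExp p _), ← exp_mul]
        congr 1; funext ω; ring
      rw [e] at this
      exact this
    have h3 : (a / v) * bernoulliExp p (fun ω => |d ω|) ≤ a := by
      calc _ ≤ (a / v) * v := mul_le_mul_of_nonneg_left hd hτ.le
        _ = a := by field_simp
    have h4 := Real.log_le_sub_one_of_pos (div_pos hs h)
    rw [Real.log_div hs.ne' h.ne'] at h4
    have h5 := mul_le_mul_of_nonneg_left h4 h.le
    have e5 : a * (s / a - 1) = s - a := by field_simp
    rw [Real.log_div h.ne' hv.ne'] at low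
    rw [Real.log_div hs.ne' (by positivity), Real.log_pow]
    push_cast
    nlinarith

lemma exp_abs_avg {p : ℝ} (h0 : 0 < p) (h1 : p < 1) (a i : ι) (g : (ι → Bool) → ℝ) :
    bernoulliExp p (fun ω => |avg p a g ω - avg p i (avg p a g) ω|)
      ≤ bernoulliExp p (fun ω => |g ω - avg p i g ω|) := by
  rw [← exp_avg p a (fun ω => |g ω - avg p i g ω|), avg_comm p i a]
  apply exp_mono h0.le h1.le
  intro ω
  have hq : 0 < 1 - p := by linarith
  have e : avg p a g ω - avg p a (avg p i g) ω
    = p * (g (Function.update ω a true) - avg p i g (Function.update ω a true))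
     + (1 - p) * (g (Function.update ω a false) - avg p i g (Function.update ω a false)) := by
    unfold avg; ring
  rw [e]
  refine (abs_add_le _ _).trans (le_of_eq ?_)
  rw [abs_mul, abs_mul, abs_of_pos h0, abs_of_pos hq]
  rfl

lemma avg_dif {p : ℝ} (a i : ι) (g : (ι → Bool) → ℝ)
    (H : i = a ∨ ∀ ω, dif i g ω = 0) (ω : ι → Bool) : dif i (avg p a g) ω = 0 := by
  by_cases h : i = a
  · subst h; exact dif_avg_self p i g ω
  · have H' := H.resolve_left h
    rw [dif_avg_ne p h]
    simp [avg, H']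

lemma main_list {p : ℝ} (h0 : 0 < p) (h1 : p < 1) {s v : ℝ} (hs : 0 < s) (hv : 0 < v)
    (l : List ι) (g : (ι → Bool) → ℝ)
    (H : ∀ i, i ∈ l ∨ ∀ ω, dif i g ω = 0)
    (Hv : ∀ i, bernoulliExp p (fun ω => |g ω - avg p i g ω|) ≤ v) :
    (bernoulliExp p (fun ω => g ω ^ 2) - bernoulliExp p g ^ 2) * (1 + Real.log (s / v ^ 2))
      - l.length * s ≤ energy p g := by
  induction l generalizing g with
  | nil =>
    have H' : ∀ i ω, dif i g ω = 0 := fun i => (H i).resolve_left (by simp)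
    have hc : g = fun _ => g (fun _ => true) := by
      funext ω; exact const_of_dif g H' _ _
    have e : bernoulliExp p (fun ω => g ω ^ 2) - bernoulliExp p g ^ 2 = 0 := by
      rw [hc]; rw [exp_const, exp_const]; ring
    rw [e]
    have := energy_nonneg h0.le h1.le g
    simpa using this
  | cons a l ih =>
    have IH := ih (avg p a g) (by
      intro i
      by_cases hi : i ∈ l
      · exact Or.inl hi
      · right
        apply avg_dif
        rcases H i with h | h
        · left; simpa [hi] using h
        · exact Or.inr h) (fun i => (exp_abs_avg h0 h1 a i g).trans (Hv i))
    have st := ent_low h0 h1 (fun ω => g ω - avg p a g ω) hs hv (Hv a)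
    rw [exp_sq_sub, energy_step] at st
    rw [exp_avg] at IH
    rw [List.length_cons]
    push_cast
    linarith

end Gen

end SharpThr

namespace SharpThr

section Bool

variable {ι : Type*} [Fintype ι] [DecidableEq ι]

lemma dif_boolInd {f : (ι → Bool) → Bool} (hf : IncreasingBoolFun f) (i : ι) (ω : ι → Bool) :
    dif i (boolInd f) ω = 0 ∨ dif i (boolInd f) ω = 1 := by
  have h := hf (Function.update ω i false) (Function.update ω i true) (by
    intro j
    by_cases hj : j = i
    · subst hj; simp
    · simp [hj])
  unfold dif boolInd
  revert h
  cases f (Function.update ω i false) <;> cases f (Function.update ω i true) <;> simp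

lemma abs_sub_avg {p : ℝ} (h0 : 0 < p) (h1 : p < 1) (g : (ι → Bool) → ℝ) (i : ι)
    (ω : ι → Bool) : |g ω - avg p i g ω| ≤ |dif i g ω| := by
  have h3 : Function.update ω i (ω i) = ω := Function.update_eq_self i ω
  cases hb : ω i
  · rw [hb] at h3
    have e : g ω - avg p i g ω = - p * dif i g ω := by
      unfold avg dif; rw [h3]; ring
    rw [e, abs_mul, abs_neg, abs_of_pos h0]
    nlinarith [abs_nonneg (dif i g ω)]
  · rw [hb] at h3
    have e : g ω - avg p i g ω = (1 - p) * dif i g ω := by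
      unfold avg dif; rw [h3]; ring
    rw [e, abs_mul, abs_of_pos (by linarith : 0 < 1 - p)]
    nlinarith [abs_nonneg (dif i g ω)]

lemma mean_le_one {p : ℝ} (h0 : 0 ≤ p) (h1 : p ≤ 1) (f : (ι → Bool) → Bool) :
    bernoulliMean p f ≤ 1 := by
  unfold bernoulliMean
  rw [← exp_const (ι := ι) p 1]
  apply exp_mono h0 h1
  intro ω
  unfold boolInd; split_ifs <;> norm_num

lemma mean_nonneg {p : ℝ} (h0 : 0 ≤ p) (h1 : p ≤ 1) (f : (ι → Bool) → Bool) :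
    0 ≤ bernoulliMean p f := by
  unfold bernoulliMean
  apply exp_nonneg h0 h1
  intro ω
  unfold boolInd; split_ifs <;> norm_num

theorem sym_ineq [Nonempty ι] {p : ℝ} (h0 : 0 < p) (h1 : p < 1) {f : (ι → Bool) → Bool}
    (hf : IncreasingBoolFun f) {v : ℝ} (hv : ∀ i, bernoulliExp p (dif i (boolInd f)) = v) :
    (bernoulliMean p f - bernoulliMean p f ^ 2) * (Real.log (Fintype.card ι) / 4)
      ≤ ∑ i, bernoulliExp p (dif i (boolInd f)) := by
  set m := bernoulliMean p f with hm
  have hm0 := mean_nonneg h0.le h1.le f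
  have hm1 := mean_le_one h0.le h1.le f
  rw [← hm] at hm0 hm1
  set V := m - m ^ 2 with hV
  set I := ∑ i, bernoulliExp p (dif i (boolInd f)) with hI
  have hI2 : I = Fintype.card ι * v := by
    rw [hI]; simp [hv]
  set N : ℝ := (Fintype.card ι : ℝ) with hN
  have hN1 : 1 ≤ N := by
    rw [hN]; exact_mod_cast Fintype.card_pos
  have hN0 : 0 < N := by linarith
  have hV0 : 0 ≤ V := by rw [hV]; nlinarith
  have hV1 : V ≤ 1 := by rw [hV]; nlinarith
  have hlogN : 0 ≤ Real.log N := Real.log_nonneg hN1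
  have hIe : energy p (boolInd f) = I := by
    unfold energy
    apply Finset.sum_congr rfl
    intro i _
    congr 1
    funext ω
    rcases dif_boolInd hf i ω with h | h <;> rw [h] <;> norm_num
  have hI0 : 0 ≤ I := by rw [← hIe]; exact energy_nonneg h0.le h1.le _
  rcases hV0.eq_or_lt with hVz | hVp
  · rw [← hVz]; linarith
  set r : ℝ := Real.exp (Real.log N / 4) with hr
  have hr0 : 0 < r := Real.exp_pos _
  by_cases hc : V * r ≤ I
  · have : Real.log N / 4 ≤ r := by
      have := Real.add_one_le_exp (Real.log N / 4); linarith
    nlinarith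
  · push Not at hc
    have hv' : 0 < V * r / N := by positivity
    have hs : 0 < V / N := by positivity
    have hle : v ≤ V * r / N := by
      rw [le_div_iff₀ hN0]; nlinarith
    have key := main_list h0 h1 hs hv' (Finset.univ.toList) (boolInd f)
      (fun i => Or.inl (by simp)) (by
        intro i
        refine le_trans ?_ hle
        rw [← hv i]
        apply exp_mono h0.le h1.le
        intro ω
        refine (abs_sub_avg h0 h1 _ i ω).trans (le_of_eq ?_)
        rcases dif_boolInd hf i ω with h | h <;> rw [h] <;> norm_num)
    have e1 : bernoulliExp p (fun ω => boolInd f ω ^ 2) = m := by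
      rw [hm]; unfold bernoulliMean
      congr 1
      funext ω
      unfold boolInd; split_ifs <;> norm_num
    have e2 : bernoulliExp p (boolInd f) = m := rfl
    rw [e1, e2, ← hV, hIe] at key
    have e3 : ((Finset.univ : Finset ι).toList.length : ℝ) * (V / N) = V := by
      rw [Finset.length_toList, Finset.card_univ, ← hN]; field_simp
    rw [e3] at key
    have e4 : Real.log (V / N / (V * r / N) ^ 2) = Real.log N / 2 - Real.log V := by
      have : V / N / (V * r / N) ^ 2 = N / V / r ^ 2 := by field_simp
      rw [this, Real.log_div (by positivity) (by positivity), Real.log_div hN0.ne' hVp.ne',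
        Real.log_pow, hr, Real.log_exp]
      push_cast; ring
    rw [e4] at key
    have hlV : Real.log V ≤ 0 := Real.log_nonpos hV0 hV1
    nlinarith [mul_nonneg hV0 hlogN, mul_nonneg hV0 (neg_nonneg.mpr hlV)]

/-- Margulis--Russo formula. -/
theorem russo (g : (ι → Bool) → ℝ) (p : ℝ) :
    HasDerivAt (fun q => bernoulliExp q g) (∑ i, bernoulliExp p (dif i g)) p := by
  have hw : ∀ ω : ι → Bool, HasDerivAt (fun q => bernoulliWeight q ω)
      (∑ i, wt p i ω * (if ω i then 1 else -1)) p := by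
    intro ω
    unfold bernoulliWeight wt
    have := HasDerivAt.fun_finset_prod (u := (Finset.univ : Finset ι))
      (f := fun i q => if ω i then q else 1 - q) (f' := fun i => if ω i then (1 : ℝ) else -1)
      (x := p) (by
        intro i _
        by_cases h : ω i
        · simpa [h] using hasDerivAt_id' p
        · simpa [h] using (hasDerivAt_id p).const_sub 1)
    simpa [smul_eq_mul] using this
  have h2 : HasDerivAt (fun q => bernoulliExp q g)
      (∑ ω, (∑ i, wt p i ω * (if ω i then 1 else -1)) * g ω) p := by
    unfold bernoulliExp
    exact HasDerivAt.fun_sum (fun ω _ => (hw ω).mul_const (g ω))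
  convert h2 using 1
  simp only [Finset.sum_mul]
  rw [Finset.sum_comm]
  apply Finset.sum_congr rfl
  intro i _
  unfold bernoulliExp
  apply sum_congr_pair i
  intro ω
  rw [weight_true, weight_false, dif_update, dif_update, wt_update, wt_update]
  simp only [Function.update_self]
  unfold dif
  simp
  ring

lemma exp_point_le {p : ℝ} (h0 : 0 ≤ p) (h1 : p ≤ 1) {g : (ι → Bool) → ℝ}
    (H : ∀ ω, 0 ≤ g ω) (η : ι → Bool) : bernoulliWeight p η * g η ≤ bernoulliExp p g :=
  Finset.single_le_sum (f := fun ω => bernoulliWeight p ω * g ω)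
    (fun ω _ => mul_nonneg (weight_nonneg h0 h1 ω) (H ω)) (Finset.mem_univ η)

lemma const_values {f : (ι → Bool) → Bool} (hf : IncreasingBoolFun f)
    (hn : ∃ ω ω' : ι → Bool, f ω ≠ f ω') :
    f (fun _ => true) = true ∧ f (fun _ => false) = false := by
  obtain ⟨ω, ω', h⟩ := hn
  have a1 := hf ω (fun _ => true) (fun i => by simp)
  have a2 := hf ω' (fun _ => true) (fun i => by simp)
  have b1 := hf (fun _ => false) ω (fun i => by simp)
  have b2 := hf (fun _ => false) ω' (fun i => by simp)
  revert h a1 a2 b1 b2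
  cases f ω <;> cases f ω' <;> cases f (fun _ => true) <;> cases f (fun _ => false) <;> simp

lemma weight_pos {p : ℝ} (h0 : 0 < p) (h1 : p < 1) (ω : ι → Bool) :
    0 < bernoulliWeight p ω := by
  unfold bernoulliWeight
  apply Finset.prod_pos
  intro i _
  split_ifs <;> linarith

lemma one_sub_mean (p : ℝ) (f : (ι → Bool) → Bool) :
    1 - bernoulliMean p f = bernoulliExp p (fun ω => 1 - boolInd f ω) := by
  rw [exp_sub, exp_const]; rfl

lemma mean_pos {f : (ι → Bool) → Bool} (hf : IncreasingBoolFun f)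
    (hn : ∃ ω ω' : ι → Bool, f ω ≠ f ω') {p : ℝ} (h0 : 0 < p) (h1 : p < 1) :
    0 < bernoulliMean p f ∧ bernoulliMean p f < 1 := by
  obtain ⟨ht, hff⟩ := const_values hf hn
  constructor
  · have := exp_point_le h0.le h1.le (g := boolInd f)
      (fun ω => by unfold boolInd; split_ifs <;> norm_num) (fun _ => true)
    refine lt_of_lt_of_le ?_ this
    simp only [boolInd, ht, if_true, mul_one]
    exact weight_pos h0 h1 _
  · have := exp_point_le h0.le h1.le (g := fun ω => 1 - boolInd f ω)
      (fun ω => by unfold boolInd; split_ifs <;> norm_num) (fun _ => false)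
    rw [← one_sub_mean] at this
    have h2 := weight_pos h0 h1 (fun _ : ι => false)
    simp [boolInd, hff] at this
    linarith

lemma mean_one {f : (ι → Bool) → Bool} (hf : IncreasingBoolFun f)
    (hn : ∃ ω ω' : ι → Bool, f ω ≠ f ω') : 1 ≤ bernoulliMean 1 f := by
  obtain ⟨ht, hff⟩ := const_values hf hn
  have := exp_point_le zero_le_one le_rfl (g := boolInd f)
      (fun ω => by unfold boolInd; split_ifs <;> norm_num) (fun _ => true)
  simp [boolInd, ht, bernoulliWeight] at this
  exact this

lemma mean_zero {f : (ι → Bool) → Bool} (hf : IncreasingBoolFun f)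
    (hn : ∃ ω ω' : ι → Bool, f ω ≠ f ω') : bernoulliMean 0 f ≤ 0 := by
  obtain ⟨ht, hff⟩ := const_values hf hn
  have := exp_point_le le_rfl zero_le_one (g := fun ω => 1 - boolInd f ω)
      (fun ω => by unfold boolInd; split_ifs <;> norm_num) (fun _ => false)
  rw [← one_sub_mean] at this
  simp [boolInd, hff, bernoulliWeight] at this
  linarith

end Bool

/-- Growth of the log-odds. -/
lemma logit_growth {y y' : ℝ → ℝ} {K : ℝ}
    (hd : ∀ t ∈ Set.Ioo (0 : ℝ) 1, HasDerivAt y (y' t) t)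
    (hy : ∀ t ∈ Set.Ioo (0 : ℝ) 1, 0 < y t ∧ y t < 1)
    (hK : ∀ t ∈ Set.Ioo (0 : ℝ) 1, (y t - y t ^ 2) * K ≤ y' t)
    {a b : ℝ} (ha : a ∈ Set.Ioo (0 : ℝ) 1) (hb : b ∈ Set.Ioo (0 : ℝ) 1) (hab : a ≤ b) :
    K * (b - a) ≤ (Real.log (y b) - Real.log (1 - y b)) - (Real.log (y a) - Real.log (1 - y a)) := by
  have hD : ∀ t ∈ Set.Ioo (0 : ℝ) 1,
      HasDerivAt (fun t => Real.log (y t) - Real.log (1 - y t))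
        (y' t / y t - (- y' t) / (1 - y t)) t := by
    intro t ht
    have h := hy t ht
    exact ((hd t ht).log h.1.ne').sub (((hd t ht).const_sub 1).log (by linarith [h.2]))
  refine Convex.mul_sub_le_image_sub_of_le_deriv (convex_Ioo (0 : ℝ) 1)
    (f := fun t => Real.log (y t) - Real.log (1 - y t))
    (fun t ht => (hD t ht).continuousAt.continuousWithinAt) ?_ ?_ a ha b hb hab
  · intro t ht
    rw [interior_Ioo] at ht
    exact (hD t ht).differentiableAt.differentiableWithinAt
  · intro t ht
    rw [interior_Ioo] at ht
    rw [(hD t ht).deriv]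
    have h := hy t ht
    have h2 : 0 < 1 - y t := by linarith [h.2]
    have e : y' t / y t - (- y' t) / (1 - y t) = y' t / (y t - y t ^ 2) := by
      have : y t - y t ^ 2 = y t * (1 - y t) := by ring
      rw [this]
      have := h.1.ne'
      field_simp
      ring
    rw [e, le_div_iff₀ (by nlinarith [h.1])]
    linarith [hK t ht]

lemma card_kedge (n : ℕ) : Fintype.card (KEdge n) = n.choose 2 := by
  have h := Sym2.card_subtype_not_diag (α := Fin n)
  rw [Fintype.card_fin] at h
  rw [← h]
  exact Fintype.card_congr (Equiv.refl _)

lemma kedge_trans {n : ℕ} (e e' : KEdge n) : ∃ σ : Equiv.Perm (Fin n), permEdge σ e = e' := by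
  obtain ⟨⟨a, b⟩, h⟩ := e
  obtain ⟨⟨c, d⟩, h'⟩ := e'
  have hab : a ≠ b := fun hh => h (by simpa using hh)
  have hcd : c ≠ d := fun hh => h' (by simpa using hh)
  have h1 : Equiv.swap a c b ≠ c := by
    intro hh
    have : Equiv.swap a c b = Equiv.swap a c a := by rw [hh, Equiv.swap_apply_left]
    exact hab ((Equiv.swap a c).injective this).symm
  refine ⟨(Equiv.swap a c).trans (Equiv.swap (Equiv.swap a c b) d), ?_⟩
  apply Subtype.ext
  have ha : ((Equiv.swap a c).trans (Equiv.swap (Equiv.swap a c b) d)) a = c := by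
    rw [Equiv.trans_apply, Equiv.swap_apply_left, Equiv.swap_apply_of_ne_of_ne h1.symm hcd]
  have hb : ((Equiv.swap a c).trans (Equiv.swap (Equiv.swap a c b) d)) b = d := by
    rw [Equiv.trans_apply, Equiv.swap_apply_left]
  change Sym2.map _ s(a, b) = s(c, d)
  rw [Sym2.map_mk, ha, hb]

lemma permEdge_inv {n : ℕ} (σ : Equiv.Perm (Fin n)) (e : KEdge n) :
    permEdge σ⁻¹ (permEdge σ e) = e := by
  apply Subtype.ext
  change Sym2.map _ (Sym2.map _ e.1) = e.1
  rw [Sym2.map_map]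
  have : (⇑σ⁻¹ ∘ ⇑σ) = id := by funext x; simp
  rw [this, Sym2.map_id]; rfl

/-- The permutation of edges induced by a vertex permutation. -/
def permEquiv {n : ℕ} (σ : Equiv.Perm (Fin n)) : Equiv.Perm (KEdge n) where
  toFun := permEdge σ
  invFun := permEdge σ⁻¹
  left_inv := permEdge_inv σ
  right_inv := fun e => by simpa using permEdge_inv σ⁻¹ e

lemma exp_perm {n : ℕ} (σ : Equiv.Perm (Fin n)) (p : ℝ) (g : (KEdge n → Bool) → ℝ) :
    bernoulliExp p (fun ω => g (fun e => ω (permEdge σ e))) = bernoulliExp p g := by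
  unfold bernoulliExp
  let T : (KEdge n → Bool) ≃ (KEdge n → Bool) := Equiv.arrowCongr (permEquiv σ).symm (Equiv.refl _)
  rw [← Equiv.sum_comp T (fun ω => bernoulliWeight p ω * g ω)]
  apply Finset.sum_congr rfl
  intro ω _
  have hT : T ω = fun e => ω (permEdge σ e) := by
    funext e; rfl
  simp only [hT]
  congr 1
  unfold bernoulliWeight
  exact (Equiv.prod_comp (permEquiv σ) (fun e => if ω e then p else 1 - p)).symm

lemma infl_sym {n : ℕ} {f : (KEdge n → Bool) → Bool} (hf : IsGraphProperty f) (p : ℝ)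
    (e e' : KEdge n) :
    bernoulliExp p (dif e (boolInd f)) = bernoulliExp p (dif e' (boolInd f)) := by
  obtain ⟨σ, rfl⟩ := kedge_trans e e'
  rw [← exp_perm σ p (dif e (boolInd f))]
  congr 1
  funext ω
  have h : ∀ b, (Function.update (fun x => ω (permEdge σ x)) e b)
      = fun x => (Function.update ω (permEdge σ e) b) (permEdge σ x) := by
    intro b
    funext x
    by_cases hx : x = e
    · subst hx; simp
    · have : permEdge σ x ≠ permEdge σ e := fun hh => hx ((permEquiv σ).injective hh)
      simp [hx, this]
  have hb : ∀ η : KEdge n → Bool, boolInd f (fun x => η (permEdge σ x)) = boolInd f η := by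
    intro η; unfold boolInd; rw [hf σ η]
  unfold dif
  rw [h true, h false, hb, hb]

end SharpThr

/-- **Sharp thresholds for monotone graph properties.**  There is a universal `c > 0`
such that for every `n ≥ 3`, every increasing non-constant graph property `f` on graphs
with `n` vertices, and every `p ∈ (0,1)` with `𝔼_p[f] = 1/2`: for all `ε ∈ (0,1/2)` and
all `δ ≥ log(1/ε)/(c log n)`, one has `𝔼_{p−δ}[f] ≤ ε` (if `p − δ ≥ 0`) and
`𝔼_{p+δ}[f] ≥ 1 − ε` (if `p + δ ≤ 1`). -/
theorem monotone_graph_property_sharp_threshold :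
    ∃ c : ℝ, 0 < c ∧ ∀ (n : ℕ), 3 ≤ n → ∀ f : (KEdge n → Bool) → Bool,
      IncreasingBoolFun f → IsGraphProperty f →
      (∃ ω ω' : KEdge n → Bool, f ω ≠ f ω') →
      ∀ p : ℝ, p ∈ Set.Ioo (0 : ℝ) 1 → bernoulliMean p f = 1 / 2 →
      ∀ ε : ℝ, ε ∈ Set.Ioo (0 : ℝ) (1 / 2) →
      ∀ δ : ℝ, Real.log (1 / ε) / (c * Real.log n) ≤ δ →
        (0 ≤ p - δ → bernoulliMean (p - δ) f ≤ ε) ∧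
        (p + δ ≤ 1 → 1 - ε ≤ bernoulliMean (p + δ) f) := by
  refine ⟨1 / 4, by norm_num, ?_⟩
  intro n hn f hinc hgp hnc p hp hmean ε hε δ hδ
  have hn3 : (3 : ℝ) ≤ n := by exact_mod_cast hn
  have hlogn : 0 < Real.log n := Real.log_pos (by linarith)
  have hcard : n ≤ Fintype.card (KEdge n) := by
    rw [SharpThr.card_kedge, Nat.choose_two_right, Nat.le_div_iff_mul_le (by norm_num)]
    exact Nat.mul_le_mul_left n (by omega)
  haveI : Nonempty (KEdge n) := Fintype.card_pos_iff.mp (by omega)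
  have hlogc : Real.log n ≤ Real.log (Fintype.card (KEdge n)) :=
    Real.log_le_log (by linarith) (by exact_mod_cast hcard)
  have hK : ∀ t ∈ Set.Ioo (0 : ℝ) 1,
      (bernoulliMean t f - bernoulliMean t f ^ 2) * (1 / 4 * Real.log n)
        ≤ ∑ i, bernoulliExp t (SharpThr.dif i (boolInd f)) := by
    intro t ht
    have h := SharpThr.sym_ineq ht.1 ht.2 hinc
      (fun i => SharpThr.infl_sym hgp t i (Classical.arbitrary _))
    have hm := SharpThr.mean_pos hinc hnc ht.1 ht.2
    refine le_trans (mul_le_mul_of_nonneg_left ?_ (by nlinarith [hm.1, hm.2])) h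
    linarith
  have hgrow := fun {a b : ℝ} => SharpThr.logit_growth (y := fun t => bernoulliMean t f)
    (y' := fun t => ∑ i, bernoulliExp t (SharpThr.dif i (boolInd f)))
    (K := 1 / 4 * Real.log n) (fun t _ => SharpThr.russo (boolInd f) t)
    (fun t ht => SharpThr.mean_pos hinc hnc ht.1 ht.2) hK (a := a) (b := b)
  have hlogε : 0 < Real.log (1 / ε) := by
    apply Real.log_pos
    rw [lt_div_iff₀ hε.1]; linarith [hε.2]
  have hKp : 0 < 1 / 4 * Real.log n := by positivity
  have hδ0 : 0 < δ := lt_of_lt_of_le (div_pos hlogε hKp) hδ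
  have hδK : Real.log (1 / ε) ≤ 1 / 4 * Real.log n * δ := by
    rw [div_le_iff₀ hKp] at hδ; linarith
  have hmid : Real.log (bernoulliMean p f) - Real.log (1 - bernoulliMean p f) = 0 := by
    rw [hmean]; norm_num
  rw [one_div, Real.log_inv] at hδK
  constructor
  · intro h
    rcases h.eq_or_lt with h | h
    · rw [← h]; exact (SharpThr.mean_zero hinc hnc).trans hε.1.le
    · have hb : p - δ ∈ Set.Ioo (0 : ℝ) 1 := ⟨h, by linarith [hp.2]⟩
      have g := hgrow hb hp (by linarith)
      have hm := SharpThr.mean_pos hinc hnc hb.1 hb.2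
      simp only [hmid] at g
      have h2 : 0 < 1 - bernoulliMean (p - δ) f := by linarith
      have h3 : Real.log (bernoulliMean (p - δ) f)
          ≤ Real.log (ε * (1 - bernoulliMean (p - δ) f)) := by
        rw [Real.log_mul hε.1.ne' h2.ne']; linarith
      rw [Real.log_le_log_iff hm.1 (mul_pos hε.1 h2)] at h3
      nlinarith [hε.1, hm.1]
  · intro h
    rcases h.eq_or_lt with h | h
    · rw [h]; linarith [SharpThr.mean_one hinc hnc, hε.1]
    · have hb : p + δ ∈ Set.Ioo (0 : ℝ) 1 := ⟨by linarith [hp.1], h⟩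
      have g := hgrow hp hb (by linarith)
      have hm := SharpThr.mean_pos hinc hnc hb.1 hb.2
      simp only [hmid] at g
      have h2 : 0 < 1 - bernoulliMean (p + δ) f := by linarith
      have h3 : Real.log (1 - bernoulliMean (p + δ) f)
          ≤ Real.log (ε * bernoulliMean (p + δ) f) := by
        rw [Real.log_mul hε.1.ne' hm.1.ne']; linarith
      rw [Real.log_le_log_iff h2 (mul_pos hε.1 hm.1)] at h3
      nlinarith [hε.1, hm.2]
end

section
/- Graham–Grimmett influence inequality for monotonic measures: There exists a universal constant c > 0 such that for every n ∈ ℕ, every monotonic probability measure μ on {0,1}^n with min_{1≤i≤n} Var_μ(ω_i) > 0, and every increasing boolean function f : {0,1}^n → {0,1}, one has Var_μ(f) ≤ (c / min_{1≤i≤n} Var_μ(ω_i)) · Σ_{i=1}^n Inf_i^μ[f] / log(1/Inf_i^μ[f]), where a summand with Inf_i^μ[f] = 0 is interpreted as 0 and a summand with Inf_i^μ[f] = 1 as +∞. -/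
open scoped Classical

section MonotonicMeasures

variable {ι : Type*} [Fintype ι] [DecidableEq ι]

/-- A probability measure `μ` on the finite set `{0,1}^ι`, given by its weight function
`w`: all weights are nonnegative and they sum to `1`. -/
def IsProbWeight (w : (ι → Bool) → ℝ) : Prop :=
  (∀ ω, 0 ≤ w ω) ∧ ∑ ω : ι → Bool, w ω = 1

/-- The probability `μ[A]` of an event `A ⊆ {0,1}^ι` under the measure with weights `w`. -/
noncomputable def wProb (w : (ι → Bool) → ℝ) (A : (ι → Bool) → Prop) : ℝ :=
  ∑ ω : ι → Bool, w ω * (if A ω then 1 else 0)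

/-- The expectation `μ[g]` of `g : {0,1}^ι → ℝ` under the measure with weights `w`. -/
noncomputable def wExp (w : (ι → Bool) → ℝ) (g : (ι → Bool) → ℝ) : ℝ :=
  ∑ ω : ι → Bool, w ω * g ω

/-- The variance `Var_μ(g)` of `g : {0,1}^ι → ℝ` under the measure with weights `w`. -/
noncomputable def wVar (w : (ι → Bool) → ℝ) (g : (ι → Bool) → ℝ) : ℝ :=
  wExp w (fun ω => (g ω - wExp w g) ^ 2)

/-- The real-valued coordinate function `ω ↦ ω_i`. -/
noncomputable def coordFun (i : ι) (ω : ι → Bool) : ℝ := if ω i then 1 else 0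

/-- The cylinder event `{ω : ω_i = ξ_i for all i ∈ F}`. -/
def agreesOn (F : Finset ι) (ξ : ι → Bool) (ω : ι → Bool) : Prop :=
  ∀ i ∈ F, ω i = ξ i

/-- A measure `μ` (with weights `w`) on `{0,1}^ι` is monotonic if, for every coordinate
`e`, every `F ⊆ ι` and all `ξ ≤ ζ` in `{0,1}^F` whose cylinders have positive
probability, `μ[ω_e = 1 | ω ≡ ξ on F] ≤ μ[ω_e = 1 | ω ≡ ζ on F]`. -/
def IsMonotonic (w : (ι → Bool) → ℝ) : Prop :=
  ∀ (e : ι) (F : Finset ι) (ξ ζ : ι → Bool), (∀ i ∈ F, ξ i ≤ ζ i) →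
    0 < wProb w (agreesOn F ξ) → 0 < wProb w (agreesOn F ζ) →
    wProb w (fun ω => ω e = true ∧ agreesOn F ξ ω) / wProb w (agreesOn F ξ) ≤
      wProb w (fun ω => ω e = true ∧ agreesOn F ζ ω) / wProb w (agreesOn F ζ)

/-- The conditional influence `Inf_i^μ(f) := μ[f | ω_i = 1] − μ[f | ω_i = 0]`. -/
noncomputable def condInfluence (w : (ι → Bool) → ℝ) (f : (ι → Bool) → Bool) (i : ι) : ℝ :=
  wProb w (fun ω => f ω = true ∧ ω i = true) / wProb w (fun ω => ω i = true) -
    wProb w (fun ω => f ω = true ∧ ω i = false) / wProb w (fun ω => ω i = false)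

end MonotonicMeasures

set_option linter.unusedSectionVars false

section Cube

/-- Uniform average over a finite type. -/
noncomputable def av {α : Type*} [Fintype α] (f : α → ℝ) : ℝ :=
  (Fintype.card α : ℝ)⁻¹ * ∑ x, f x

section av
variable {α : Type*} [Fintype α]

lemma av_add (f g : α → ℝ) : av (fun x => f x + g x) = av f + av g := by
  simp [av, Finset.sum_add_distrib, mul_add]

lemma av_mul_left (c : ℝ) (f : α → ℝ) : av (fun x => c * f x) = c * av f := by
  simp only [av, ← Finset.mul_sum]; ring

lemma av_mono {f g : α → ℝ} (h : ∀ x, f x ≤ g x) : av f ≤ av g := by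
  unfold av
  exact mul_le_mul_of_nonneg_left (Finset.sum_le_sum fun x _ => h x) (by positivity)

lemma av_nonneg {f : α → ℝ} (h : ∀ x, 0 ≤ f x) : 0 ≤ av f := by
  unfold av
  exact mul_nonneg (by positivity) (Finset.sum_nonneg fun x _ => h x)

lemma av_sum {β : Type*} (s : Finset β) (f : β → α → ℝ) :
    av (fun x => ∑ b ∈ s, f b x) = ∑ b ∈ s, av (f b) := by
  simp only [av, Finset.mul_sum]
  rw [Finset.sum_comm]

lemma av_equiv {β : Type*} [Fintype β] (e : α ≃ β) (f : β → ℝ) :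
    av (fun x => f (e x)) = av f := by
  unfold av
  rw [Fintype.card_congr e, Equiv.sum_comp e f]

lemma av_one [Nonempty α] : av (fun _ : α => (1 : ℝ)) = 1 := by
  simp [av]

lemma av_cs (f g : α → ℝ) :
    (av (fun x => f x * g x)) ^ 2 ≤ av (fun x => f x ^ 2) * av (fun x => g x ^ 2) := by
  unfold av
  have h := Finset.sum_mul_sq_le_sq_mul_sq Finset.univ f g
  have hc : (0 : ℝ) ≤ ((Fintype.card α : ℝ)⁻¹) ^ 2 := by positivity
  nlinarith [mul_le_mul_of_nonneg_left h hc]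

end av

variable {E : Type*} [Fintype E] [DecidableEq E]

noncomputable def sg (b : Bool) : ℝ := if b then -1 else 1

lemma sg_not (b : Bool) : sg (!b) = - sg b := by cases b <;> simp [sg]
lemma sg_sq (b : Bool) : sg b * sg b = 1 := by cases b <;> simp [sg]
lemma sg_ne {a b : Bool} (h : a ≠ b) : sg a * sg b = -1 := by
  cases a <;> cases b <;> simp_all [sg]

noncomputable def chi (S : Finset E) (x : E → Bool) : ℝ := ∏ e ∈ S, sg (x e)

def flp (e : E) (x : E → Bool) : E → Bool := Function.update x e (!x e)

lemma flp_flp (e : E) (x : E → Bool) : flp e (flp e x) = x := by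
  funext j; by_cases h : j = e
  · subst h; simp [flp]
  · simp [flp, h]

def flipEquiv (e : E) : (E → Bool) ≃ (E → Bool) := ⟨flp e, flp e, flp_flp e, flp_flp e⟩

lemma av_flip (e : E) (f : (E → Bool) → ℝ) : av (fun x => f (flp e x)) = av f :=
  av_equiv (flipEquiv e) f

lemma chi_flip_mem {e : E} {S : Finset E} (h : e ∈ S) (x : E → Bool) :
    chi S (flp e x) = - chi S x := by
  unfold chi
  rw [← Finset.mul_prod_erase _ _ h, ← Finset.mul_prod_erase (a := e) _ _ h]
  have : ∏ j ∈ S.erase e, sg (flp e x j) = ∏ j ∈ S.erase e, sg (x j) :=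
    Finset.prod_congr rfl fun j hj => by simp [flp, (Finset.mem_erase.mp hj).1]
  rw [this]; simp [flp, sg_not]

lemma chi_flip_notMem {e : E} {S : Finset E} (h : e ∉ S) (x : E → Bool) :
    chi S (flp e x) = chi S x := by
  unfold chi
  exact Finset.prod_congr rfl fun j hj => by
    have : j ≠ e := fun hh => h (hh ▸ hj)
    simp [flp, this]

lemma chi_mul_self (S : Finset E) (x : E → Bool) : chi S x * chi S x = 1 := by
  unfold chi; rw [← Finset.prod_mul_distrib]; simp [sg_sq]

lemma av_anti (e : E) (f : (E → Bool) → ℝ) (h : ∀ x, f (flp e x) = - f x) : av f = 0 := by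
  have h1 := av_flip e f
  have h2 : av (fun x => f (flp e x)) = - av f := by
    rw [show (fun x => f (flp e x)) = fun x => (-1) * f x from funext fun x => by rw [h]; ring,
      av_mul_left]; ring
  linarith

lemma av_chi_mul (S T : Finset E) :
    av (fun x => chi S x * chi T x) = if S = T then 1 else 0 := by
  split_ifs with h
  · subst h; simp only [chi_mul_self]; exact av_one
  · have : ∃ e, ¬ (e ∈ S ↔ e ∈ T) := by
      by_contra hh; push Not at hh; exact h (Finset.ext hh)
    obtain ⟨e, he⟩ := this
    apply av_anti e
    intro x
    by_cases h1 : e ∈ S <;> by_cases h2 : e ∈ T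
    · exact absurd (by simp [h1, h2]) he
    · rw [chi_flip_mem h1, chi_flip_notMem h2]; ring
    · rw [chi_flip_notMem h1, chi_flip_mem h2]; ring
    · exact absurd (by simp [h1, h2]) he

lemma sum_chi (x y : E → Bool) :
    ∑ S : Finset E, chi S x * chi S y = if x = y then (Fintype.card (E → Bool) : ℝ) else 0 := by
  have h : ∑ S : Finset E, chi S x * chi S y = ∏ e : E, (1 + sg (x e) * sg (y e)) := by
    rw [Finset.prod_one_add]
    simp only [Finset.powerset_univ, chi, Finset.prod_mul_distrib]
  rw [h]
  split_ifs with hxy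
  · subst hxy; simp only [sg_sq]; simp; norm_num
  · obtain ⟨e, he⟩ := Function.ne_iff.mp hxy
    exact Finset.prod_eq_zero (Finset.mem_univ e) (by rw [sg_ne he]; ring)

noncomputable def hat (g : (E → Bool) → ℝ) (S : Finset E) : ℝ := av (fun x => g x * chi S x)

lemma hat_expand (g : (E → Bool) → ℝ) (x : E → Bool) : g x = ∑ S, hat g S * chi S x := by
  have : ∑ S, hat g S * chi S x
      = (Fintype.card (E → Bool) : ℝ)⁻¹ * ∑ y, g y * ∑ S, chi S y * chi S x := by
    simp only [hat, av, Finset.mul_sum, Finset.sum_mul]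
    rw [Finset.sum_comm]
    exact Finset.sum_congr rfl fun y _ => Finset.sum_congr rfl fun S _ => by ring
  rw [this]
  simp only [sum_chi]
  simp only [mul_ite, mul_zero, Finset.sum_ite_eq', Finset.mem_univ, if_true]
  have : (Fintype.card (E → Bool) : ℝ) ≠ 0 := by
    exact_mod_cast Fintype.card_ne_zero
  field_simp

lemma av_mul_expand (g : (E → Bool) → ℝ) (a : Finset E → ℝ) :
    av (fun x => g x * ∑ S, a S * chi S x) = ∑ S, hat g S * a S := by
  have : (fun x => g x * ∑ S, a S * chi S x) = fun x => ∑ S, a S * (g x * chi S x) := by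
    funext x; rw [Finset.mul_sum]; exact Finset.sum_congr rfl fun S _ => by ring
  rw [this, av_sum]
  exact Finset.sum_congr rfl fun S _ => by rw [av_mul_left, hat]; ring

lemma parseval (g : (E → Bool) → ℝ) : av (fun x => g x ^ 2) = ∑ S, hat g S ^ 2 := by
  have := av_mul_expand g (hat g)
  simp only [← hat_expand] at this
  simpa [sq] using this

lemma bonami (V : Finset E) : ∀ a : Finset E → ℝ,
    av (fun x => (∑ S ∈ V.powerset, a S * chi S x) ^ 4)
      ≤ (∑ S ∈ V.powerset, 3 ^ S.card * a S ^ 2) ^ 2 := by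
  induction V using Finset.induction_on with
  | empty =>
    intro a
    simp only [Finset.powerset_empty, Finset.sum_singleton, chi, Finset.prod_empty, mul_one,
      Finset.card_empty, pow_zero, one_mul]
    have := av_mul_left (α := E → Bool) (a ∅ ^ 4) (fun _ => 1)
    rw [av_one] at this
    simp only [mul_one] at this
    rw [this]; apply le_of_eq; ring
  | insert e V he ih =>
    intro a
    set u : (E → Bool) → ℝ := fun x => ∑ S ∈ V.powerset, a S * chi S x with hu
    set v : (E → Bool) → ℝ := fun x => ∑ S ∈ V.powerset, a (insert e S) * chi S x with hv
    set A := ∑ S ∈ V.powerset, 3 ^ S.card * a S ^ 2 with hA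
    set B := ∑ S ∈ V.powerset, 3 ^ S.card * a (insert e S) ^ 2 with hB
    have hmem : ∀ S ∈ V.powerset, e ∉ S := fun S hS h => he (Finset.mem_powerset.mp hS h)
    have h1 : ∀ x, (∑ S ∈ (insert e V).powerset, a S * chi S x) = u x + sg (x e) * v x := by
      intro x
      rw [Finset.sum_powerset_insert he, hu, hv]
      simp only [Finset.mul_sum]
      congr 1
      refine Finset.sum_congr rfl fun S hS => ?_
      rw [chi, Finset.prod_insert (hmem S hS), chi]; ring
    have h2 : (∑ S ∈ (insert e V).powerset, 3 ^ S.card * a S ^ 2) = A + 3 * B := by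
      rw [Finset.sum_powerset_insert he, hA, hB, Finset.mul_sum]
      congr 1
      refine Finset.sum_congr rfl fun S hS => ?_
      rw [Finset.card_insert_of_notMem (hmem S hS)]; ring
    have hA0 : 0 ≤ A := Finset.sum_nonneg fun S _ => by positivity
    have hB0 : 0 ≤ B := Finset.sum_nonneg fun S _ => by positivity
    have hU : av (fun x => u x ^ 4) ≤ A ^ 2 := ih a
    have hV : av (fun x => v x ^ 4) ≤ B ^ 2 := ih (fun S => a (insert e S))
    have hUV : av (fun x => u x ^ 2 * v x ^ 2) ≤ A * B := by
      have h := av_cs (fun x => u x ^ 2) (fun x => v x ^ 2)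
      have e1 : (fun x => (u x ^ 2) ^ 2) = fun x => u x ^ 4 := funext fun x => by ring
      have e2 : (fun x => (v x ^ 2) ^ 2) = fun x => v x ^ 4 := funext fun x => by ring
      rw [e1, e2] at h
      have hU0 : 0 ≤ av (fun x => u x ^ 4) := av_nonneg fun x => by positivity
      have hV0 : 0 ≤ av (fun x => v x ^ 4) := av_nonneg fun x => by positivity
      have : (av (fun x => u x ^ 2 * v x ^ 2)) ^ 2 ≤ (A * B) ^ 2 := by
        calc _ ≤ _ := h
          _ ≤ A ^ 2 * B ^ 2 := mul_le_mul hU hV hV0 (by positivity)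
          _ = _ := by ring
      exact le_of_sq_le_sq this (by positivity)
    have huf : ∀ x, u (flp e x) = u x := fun x =>
      Finset.sum_congr rfl fun S hS => by rw [chi_flip_notMem (hmem S hS)]
    have hvf : ∀ x, v (flp e x) = v x := fun x =>
      Finset.sum_congr rfl fun S hS => by rw [chi_flip_notMem (hmem S hS)]
    have hsf : ∀ x : E → Bool, sg (flp e x e) = - sg (x e) := fun x => by simp [flp, sg_not]
    have z : av (fun x => sg (x e) * (4 * u x ^ 3 * v x + 4 * u x * v x ^ 3)) = 0 :=
      av_anti e _ fun x => by rw [huf, hvf, hsf]; ring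
    have hexp : (fun x => (∑ S ∈ (insert e V).powerset, a S * chi S x) ^ 4)
        = fun x => ((u x ^ 4 + 6 * (u x ^ 2 * v x ^ 2)) + v x ^ 4)
            + sg (x e) * (4 * u x ^ 3 * v x + 4 * u x * v x ^ 3) := by
      funext x
      rw [h1]
      have hs : sg (x e) ^ 2 = 1 := by rw [sq, sg_sq]
      have hs3 : sg (x e) ^ 3 = sg (x e) := by rw [pow_succ, hs, one_mul]
      have hs4 : sg (x e) ^ 4 = 1 := by rw [show 4 = 2 * 2 from rfl, pow_mul, hs, one_pow]
      have : (u x + sg (x e) * v x) ^ 4 = u x ^ 4 + 4 * u x ^ 3 * (sg (x e) * v x)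
        + 6 * u x ^ 2 * (sg (x e) ^ 2 * v x ^ 2) + 4 * u x * (sg (x e) ^ 3 * v x ^ 3)
        + sg (x e) ^ 4 * v x ^ 4 := by ring
      rw [this, hs, hs3, hs4]; ring
    rw [hexp, h2, av_add, av_add, av_add, av_mul_left, z]
    nlinarith [mul_nonneg hA0 hB0, mul_nonneg hB0 hB0]

lemma low_level (d : (E → Bool) → ℝ) (hd : ∀ x, d x ^ 3 = d x) (k : ℕ) :
    ∑ S, (if S.card ≤ k then hat d S ^ 2 else 0)
      ≤ 3 ^ k * (av (fun x => d x ^ 2) * √(av (fun x => d x ^ 2))) := by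
  set W := ∑ S, (if S.card ≤ k then hat d S ^ 2 else 0) with hW
  set I := av (fun x => d x ^ 2) with hI
  set a : Finset E → ℝ := fun S => if S.card ≤ k then hat d S else 0 with ha
  set h : (E → Bool) → ℝ := fun x => ∑ S, a S * chi S x with hh
  have hI0 : 0 ≤ I := av_nonneg fun x => by positivity
  have hW0 : 0 ≤ W := Finset.sum_nonneg fun S _ => by split_ifs <;> positivity
  have h1 : av (fun x => d x * h x) = W := by
    rw [hh, av_mul_expand]
    refine Finset.sum_congr rfl fun S _ => ?_
    simp only [ha]; split_ifs <;> ring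
  have h2 : av (fun x => h x ^ 4) ≤ (3 ^ k * W) ^ 2 := by
    have hb := bonami (Finset.univ : Finset E) a
    rw [Finset.powerset_univ] at hb
    refine hb.trans ?_
    have h0 : 0 ≤ ∑ S : Finset E, 3 ^ S.card * a S ^ 2 :=
      Finset.sum_nonneg fun S _ => by positivity
    refine pow_le_pow_left₀ h0 ?_ 2
    rw [hW, Finset.mul_sum]
    refine Finset.sum_le_sum fun S _ => ?_
    simp only [ha]
    split_ifs with hc
    · exact mul_le_mul_of_nonneg_right (pow_le_pow_right₀ (by norm_num) hc) (by positivity)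
    · simp
  have h3 : W ^ 2 ≤ I * av (fun x => d x ^ 2 * h x ^ 2) := by
    have := av_cs (fun x => d x ^ 2) (fun x => d x * h x)
    have e1 : (fun x => d x ^ 2 * (d x * h x)) = fun x => d x * h x := funext fun x => by
      rw [← mul_assoc, ← pow_succ, hd]
    have e2 : (fun x => (d x ^ 2) ^ 2) = fun x => d x ^ 2 := funext fun x => by
      rw [show (d x ^ 2) ^ 2 = d x ^ 3 * d x by ring, hd]; ring
    have e3 : (fun x => (d x * h x) ^ 2) = fun x => d x ^ 2 * h x ^ 2 := funext fun x => by ring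
    rw [e1, e2, e3, h1] at this
    exact this
  have h4 : av (fun x => d x ^ 2 * h x ^ 2) ≤ √I * (3 ^ k * W) := by
    have := av_cs (fun x => d x ^ 2) (fun x => h x ^ 2)
    have e2 : (fun x => (d x ^ 2) ^ 2) = fun x => d x ^ 2 := funext fun x => by
      rw [show (d x ^ 2) ^ 2 = d x ^ 3 * d x by ring, hd]; ring
    have e3 : (fun x => (h x ^ 2) ^ 2) = fun x => h x ^ 4 := funext fun x => by ring
    rw [e2, e3] at this
    refine le_of_sq_le_sq ?_ (by positivity)
    calc _ ≤ _ := this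
      _ ≤ I * (3 ^ k * W) ^ 2 := mul_le_mul_of_nonneg_left h2 hI0
      _ = _ := by rw [mul_pow (√I), Real.sq_sqrt hI0]
  have h5 : W * W ≤ (3 ^ k * (I * √I)) * W := by
    calc W * W = W ^ 2 := by ring
      _ ≤ I * (√I * (3 ^ k * W)) := h3.trans (mul_le_mul_of_nonneg_left h4 hI0)
      _ = _ := by ring
  rcases hW0.eq_or_lt with h0 | h0
  · rw [← h0]; positivity
  · exact le_of_mul_le_mul_right h5 h0

lemma hat_diff (g : (E → Bool) → ℝ) (e : E) (S : Finset E) :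
    hat (fun x => g x - g (flp e x)) S = if e ∈ S then 2 * hat g S else 0 := by
  have h1 : hat (fun x => g x - g (flp e x)) S
      = hat g S + (-1) * av (fun x => g (flp e x) * chi S x) := by
    rw [hat, hat, ← av_mul_left, ← av_add]
    congr 1; funext x; ring
  have h2 : av (fun x => g (flp e x) * chi S x) = av (fun x => g x * chi S (flp e x)) := by
    rw [← av_flip e (fun x => g x * chi S (flp e x))]
    simp only [flp_flp]
  rw [h1, h2]
  split_ifs with h
  · rw [show (fun x => g x * chi S (flp e x)) = fun x => (-1) * (g x * chi S x) from
      funext fun x => by rw [chi_flip_mem h]; ring, av_mul_left, hat]; ring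
  · rw [show (fun x => g x * chi S (flp e x)) = fun x => (g x * chi S x) from
      funext fun x => by rw [chi_flip_notMem h], hat]; ring

/-- Talagrand's inequality on the uniform cube, with free cutoff levels. -/
lemma talagrand (g : (E → Bool) → ℝ) (hg : ∀ x, g x = 0 ∨ g x = 1) (k : E → ℕ) :
    av (fun x => g x ^ 2) - (av g) ^ 2 ≤
      ∑ e, (3 ^ k e * (av (fun x => (g x - g (flp e x)) ^ 2)
          * √(av (fun x => (g x - g (flp e x)) ^ 2)))
        + av (fun x => (g x - g (flp e x)) ^ 2) / (k e + 1)) / 4 := by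
  have hvar : av (fun x => g x ^ 2) - (av g) ^ 2
      = ∑ S : Finset E, ∑ e : E, if e ∈ S then hat g S ^ 2 / S.card else 0 := by
    rw [parseval, ← Finset.add_sum_erase _ _ (Finset.mem_univ (∅ : Finset E)),
      ← Finset.add_sum_erase (a := (∅ : Finset E)) _ _ (Finset.mem_univ _)]
    have h0 : hat g ∅ = av g := by simp [hat, chi]
    rw [h0]
    simp only [Finset.notMem_empty, if_false, Finset.sum_const_zero, zero_add, add_sub_cancel_left]
    refine Finset.sum_congr rfl fun S hS => ?_
    have hne : (S.card : ℝ) ≠ 0 := by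
      have := Finset.nonempty_iff_ne_empty.mpr (Finset.mem_erase.mp hS).1
      exact_mod_cast this.card_pos.ne'
    rw [← Finset.sum_filter]
    simp only [Finset.filter_mem_eq_inter, Finset.univ_inter, Finset.sum_const, nsmul_eq_mul]
    field_simp
  rw [hvar, Finset.sum_comm]
  refine Finset.sum_le_sum fun e _ => ?_
  set d : (E → Bool) → ℝ := fun x => g x - g (flp e x) with hd
  have hd3 : ∀ x, d x ^ 3 = d x := by
    intro x
    rcases hg x with h | h <;> rcases hg (flp e x) with h' | h' <;> simp [hd, h, h'] <;> norm_num
  have hlow := low_level d hd3 (k e)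
  have hpar := parseval d
  have hpt : ∀ S : Finset E, (if e ∈ S then hat g S ^ 2 / S.card else 0)
      ≤ ((if S.card ≤ k e then hat d S ^ 2 else 0) + hat d S ^ 2 / (k e + 1)) / 4 := by
    intro S
    have hh := hat_diff g e S
    rw [show hat d S = _ from hh]
    by_cases he : e ∈ S
    · simp only [he, if_true]
      have hc : (1 : ℝ) ≤ S.card := by exact_mod_cast Finset.card_pos.mpr ⟨e, he⟩
      split_ifs with hk
      · have : hat g S ^ 2 / S.card ≤ hat g S ^ 2 := div_le_self (by positivity) hc
        have h2 : 0 ≤ (2 * hat g S) ^ 2 / ((k e : ℝ) + 1) := by positivity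
        linarith
      · push Not at hk
        have hk' : (k e : ℝ) + 1 ≤ S.card := by exact_mod_cast hk
        have : hat g S ^ 2 / S.card ≤ hat g S ^ 2 / ((k e : ℝ) + 1) :=
          div_le_div_of_nonneg_left (by positivity) (by positivity) hk'
        calc _ ≤ _ := this
          _ = _ := by ring
    · simp [he]
  refine (Finset.sum_le_sum fun S _ => hpt S).trans ?_
  rw [← Finset.sum_div, Finset.sum_add_distrib, ← Finset.sum_div, ← hpar]
  gcongr

end Cube

section Sampling

variable {n : ℕ} {A : Type*}

/-- A sequential sampling rule: coordinate `i` depends on earlier coordinates only. -/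
def Causal (s : Fin n → (Fin n → Bool) → A → Bool) : Prop :=
  ∀ i ω ω' a, (∀ j < i, ω j = ω' j) → s i ω a = s i ω' a

def stp (s : Fin n → (Fin n → Bool) → A → Bool) (u : Fin n → A) (ω : Fin n → Bool) :
    Fin n → Bool := fun i => s i ω (u i)

def sol (s : Fin n → (Fin n → Bool) → A → Bool) (u : Fin n → A) : Fin n → Bool :=
  (stp s u)^[n] (fun _ => false)

lemma stp_agree {s : Fin n → (Fin n → Bool) → A → Bool} (hs : Causal s) (u : Fin n → A)
    (k : ℕ) : ∀ ω ω' : Fin n → Bool, ∀ j : Fin n, (j : ℕ) < k →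
      (stp s u)^[k] ω j = (stp s u)^[k] ω' j := by
  induction k with
  | zero => intro ω ω' j hj; omega
  | succ k ih =>
    intro ω ω' j hj
    rw [Function.iterate_succ_apply', Function.iterate_succ_apply']
    exact hs j _ _ _ fun l hl => ih ω ω' l (by have : (l : ℕ) < j := hl; omega)

lemma sol_spec {s : Fin n → (Fin n → Bool) → A → Bool} (hs : Causal s) (u : Fin n → A)
    (i : Fin n) : s i (sol s u) (u i) = sol s u i := by
  have h : stp s u (sol s u) = sol s u := by
    funext j
    unfold sol
    rw [← Function.iterate_succ_apply' (stp s u) n, Function.iterate_succ_apply]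
    exact stp_agree hs u n _ _ j j.2
  exact congrFun h i

lemma sol_unique {s : Fin n → (Fin n → Bool) → A → Bool} (hs : Causal s) (u : Fin n → A)
    (ω : Fin n → Bool) (h : ∀ i, s i ω (u i) = ω i) : sol s u = ω := by
  have h' : ∀ k, (stp s u)^[k] ω = ω := fun k =>
    Function.iterate_fixed (f := stp s u) (funext h) k
  funext j
  rw [← h' n]
  exact stp_agree hs u n _ _ j j.2

lemma sol_iff {s : Fin n → (Fin n → Bool) → A → Bool} (hs : Causal s) (u : Fin n → A)
    (ω : Fin n → Bool) : sol s u = ω ↔ ∀ i, s i ω (u i) = ω i :=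
  ⟨fun h i => by subst h; exact sol_spec hs u i, sol_unique hs u ω⟩

/-- Law of the sampled configuration. -/
lemma av_sol [Fintype A] {s : Fin n → (Fin n → Bool) → A → Bool} (hs : Causal s)
    (F : (Fin n → Bool) → ℝ) :
    av (fun u : Fin n → A => F (sol s u))
      = ∑ ω, F ω * ∏ i, av (fun a => if s i ω a = ω i then (1 : ℝ) else 0) := by
  have h1 : ∀ u : Fin n → A, F (sol s u)
      = ∑ ω, F ω * ∏ i, (if s i ω (u i) = ω i then (1 : ℝ) else 0) := by
    intro u
    rw [Finset.sum_eq_single (sol s u)]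
    · rw [Finset.prod_eq_one, mul_one]
      intro i _; rw [if_pos (sol_spec hs u i)]
    · intro ω _ hne
      have : ∃ i, s i ω (u i) ≠ ω i := by
        by_contra hh; push Not at hh
        exact hne (sol_unique hs u ω hh).symm
      obtain ⟨i, hi⟩ := this
      rw [Finset.prod_eq_zero (Finset.mem_univ i) (if_neg hi), mul_zero]
    · simp
  simp only [h1]
  rw [av_sum]
  refine Finset.sum_congr rfl fun ω _ => ?_
  rw [av_mul_left]
  congr 1
  unfold av
  rw [Finset.prod_mul_distrib, Finset.prod_univ_sum]
  simp

def frc (s : Fin n → (Fin n → Bool) → A → Bool) (i : Fin n) (b : Bool) :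
    Fin n → (Fin n → Bool) → A → Bool := Function.update s i (fun _ _ => b)

lemma frc_causal {s : Fin n → (Fin n → Bool) → A → Bool} (hs : Causal s) (i : Fin n) (b : Bool) :
    Causal (frc s i b) := by
  intro j ω ω' a h
  unfold frc
  by_cases hj : j = i
  · subst hj; simp
  · simp only [Function.update_of_ne hj]; exact hs j ω ω' a h

lemma sol_frc {s : Fin n → (Fin n → Bool) → A → Bool} (hs : Causal s) (i : Fin n)
    (u : Fin n → A) : sol (frc s i (sol s u i)) u = sol s u := by
  apply sol_unique (frc_causal hs i _)
  intro j
  unfold frc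
  by_cases hj : j = i
  · subst hj; simp
  · simp only [Function.update_of_ne hj]; exact sol_spec hs u j

lemma sol_frc_congr {s : Fin n → (Fin n → Bool) → A → Bool} (hs : Causal s) (i : Fin n)
    (b : Bool) (u u' : Fin n → A) (h : ∀ j, j ≠ i → u j = u' j) :
    sol (frc s i b) u = sol (frc s i b) u' := by
  apply sol_unique (frc_causal hs i _)
  intro j
  rw [← sol_spec (frc_causal hs i b) u' j]
  unfold frc
  by_cases hj : j = i
  · subst hj; simp
  · simp only [Function.update_of_ne hj, h j hj]

lemma sol_past {s : Fin n → (Fin n → Bool) → A → Bool} (hs : Causal s) (i : Fin n)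
    (b : Bool) (u : Fin n → A) : ∀ k : ℕ, ∀ j : Fin n, (j : ℕ) < k → j < i →
      sol s u j = sol (frc s i b) u j := by
  intro k
  induction k with
  | zero => intro j hj; omega
  | succ k ih =>
    intro j hj hji
    rw [← sol_spec hs, ← sol_spec (frc_causal hs i b)]
    unfold frc
    rw [Function.update_of_ne hji.ne]
    exact hs j _ _ _ fun l hl =>
      ih l (by have : (l : ℕ) < j := hl; omega) (hl.trans hji)

lemma sol_at {s : Fin n → (Fin n → Bool) → A → Bool} (hs : Causal s) (i : Fin n)
    (u : Fin n → A) : sol s u i = s i (sol (frc s i true) u) (u i) := by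
  rw [← sol_spec hs]
  exact hs i _ _ _ fun j hj => sol_past hs i true u n j j.2 hj

lemma pivot_le {s : Fin n → (Fin n → Bool) → A → Bool} (hs : Causal s) (i : Fin n)
    (F : (Fin n → Bool) → ℝ) (u : Fin n → A) (a : A) :
    (F (sol s u) - F (sol s (Function.update u i a))) ^ 2 ≤
      (if s i (sol (frc s i true) u) (u i) ≠ s i (sol (frc s i true) u) a then 1 else 0)
        * (F (sol (frc s i true) u) - F (sol (frc s i false) u)) ^ 2 := by
  set u' := Function.update u i a with hu'
  have hc : ∀ b, sol (frc s i b) u' = sol (frc s i b) u := fun b =>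
    sol_frc_congr hs i b _ _ fun j hj => by simp [hu', hj]
  have h1 : sol s u' i = s i (sol (frc s i true) u) a := by
    rw [sol_at hs, hc]; simp [hu']
  have e1 := sol_frc hs i u
  have e2 := sol_frc hs i u'
  rw [hc] at e2
  rw [← sol_at hs, ← h1]
  generalize sol s u i = b at *
  generalize sol s u' i = b' at *
  rw [← e1, ← e2]
  cases b <;> cases b' <;> simp
  exact le_of_eq (by ring)

lemma av_update [Fintype A] [Nonempty A] (i : Fin n) (G : (Fin n → A) → ℝ) :
    av G = av (fun u => av (fun a => G (Function.update u i a))) := by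
  have key : ∑ u : Fin n → A, ∑ a, G (Function.update u i a)
      = (Fintype.card A : ℝ) * ∑ u, G u := by
    have e1 : ∀ H : (Fin n → A) → ℝ, ∑ u, H u
        = ∑ p : A × ((j : {j // j ≠ i}) → A), H ((Equiv.piSplitAt i (fun _ => A)).symm p) :=
      fun H => (Equiv.sum_comp (Equiv.piSplitAt i (fun _ => A)).symm H).symm
    rw [e1, e1 G, Fintype.sum_prod_type, Fintype.sum_prod_type]
    have e2 : ∀ (b a : A) (r : (j : {j // j ≠ i}) → A),
        Function.update ((Equiv.piSplitAt i (fun _ => A)).symm (b, r)) i a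
          = (Equiv.piSplitAt i (fun _ => A)).symm (a, r) := by
      intro b a r; funext j
      by_cases h : j = i
      · subst h; simp
      · simp [h]
    simp only [e2]
    rw [Finset.sum_const, Finset.sum_comm, Finset.card_univ, nsmul_eq_mul]
  have hA : (Fintype.card A : ℝ) ≠ 0 := by exact_mod_cast Fintype.card_ne_zero
  unfold av
  rw [← Finset.mul_sum, key]
  field_simp

lemma av_pivot_le [Fintype A] [Nonempty A] {s : Fin n → (Fin n → Bool) → A → Bool} (hs : Causal s)
    (i : Fin n) (F : (Fin n → Bool) → ℝ) (τ : A → A) (δ : ℝ)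
    (hδ : ∀ ω, av (fun a => if s i ω a ≠ s i ω (τ a) then (1 : ℝ) else 0) ≤ δ) :
    av (fun u : Fin n → A => (F (sol s u) - F (sol s (Function.update u i (τ (u i))))) ^ 2)
      ≤ δ * av (fun u : Fin n → A =>
          (F (sol (frc s i true) u) - F (sol (frc s i false) u)) ^ 2) := by
  refine (av_mono fun u => pivot_le hs i F u (τ (u i))).trans ?_
  rw [av_update i, ← av_mul_left]
  refine av_mono fun u => ?_
  have hc : ∀ a b, sol (frc s i b) (Function.update u i a) = sol (frc s i b) u := fun a b =>
    sol_frc_congr hs i b _ _ fun j hj => by simp [hj]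
  simp only [hc, Function.update_self]
  have := av_mul_left ((F (sol (frc s i true) u) - F (sol (frc s i false) u)) ^ 2)
    (fun a => if s i (sol (frc s i true) u) a ≠ s i (sol (frc s i true) u) (τ a)
      then (1 : ℝ) else 0)
  simp only [mul_comm] at this ⊢
  rw [this]
  rw [mul_comm δ]
  exact mul_le_mul_of_nonneg_left (hδ _) (sq_nonneg _)

/-- Talagrand-type inequality for a sequentially sampled configuration. -/
lemma talagrand_sol {m : ℕ} {s : Fin n → (Fin n → Bool) → (Fin m → Bool) → Bool}
    (hs : Causal s) (F : (Fin n → Bool) → ℝ) (hF : ∀ ω, F ω = 0 ∨ F ω = 1)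
    (δ : Fin m → ℝ) (hδ1 : ∀ j, δ j ≤ 1) (hδ2 : ∑ j, δ j ≤ 2)
    (hδ : ∀ i ω j, av (fun a => if s i ω a ≠ s i ω (flp j a) then (1 : ℝ) else 0) ≤ δ j)
    (k : Fin n → ℕ) (J : Fin n → ℝ)
    (hJ : ∀ i, J i = av (fun u : Fin n → (Fin m → Bool) =>
          (F (sol (frc s i true) u) - F (sol (frc s i false) u)) ^ 2)) :
    av (fun u => F (sol s u) ^ 2) - (av (fun u => F (sol s u))) ^ 2 ≤
      ∑ i, (3 ^ k i * (J i * √(J i)) + J i / (k i + 1)) / 2 := by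
  set C := Equiv.curry (Fin n) (Fin m) Bool with hC
  have ht := talagrand (E := Fin n × Fin m) (fun x => F (sol s (C x))) (fun x => hF _)
    (fun e => k e.1)
  rw [av_equiv C (fun u => F (sol s u) ^ 2), av_equiv C (fun u => F (sol s u))] at ht
  refine ht.trans ?_
  rw [Fintype.sum_prod_type]
  refine Finset.sum_le_sum fun i _ => ?_
  have hJ0 : 0 ≤ J i := by rw [hJ]; exact av_nonneg fun x => by positivity
  have hfl : ∀ j x, C (flp (i, j) x) = Function.update (C x) i (flp j (C x i)) := by
    intro j x; funext a b
    by_cases ha : a = i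
    · subst ha
      by_cases hb : b = j
      · subst hb; simp [hC, flp, Function.curry]
      · simp [hC, flp, Function.curry, hb]
    · simp [hC, flp, Function.curry, ha]
  have hI : ∀ j, av (fun x => (F (sol s (C x)) - F (sol s (C (flp (i, j) x)))) ^ 2)
      ≤ δ j * J i := by
    intro j
    simp only [hfl]
    rw [av_equiv C (fun u => (F (sol s u) - F (sol s (Function.update u i (flp j (u i))))) ^ 2),
      hJ]
    exact av_pivot_le hs i F (flp j) (δ j) (fun ω => hδ i ω j)
  have hterm : ∀ j, (3 ^ k i * (av (fun x => (F (sol s (C x)) - F (sol s (C (flp (i, j) x)))) ^ 2)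
          * √(av (fun x => (F (sol s (C x)) - F (sol s (C (flp (i, j) x)))) ^ 2)))
        + av (fun x => (F (sol s (C x)) - F (sol s (C (flp (i, j) x)))) ^ 2) / (k i + 1)) / 4
      ≤ δ j * ((3 ^ k i * (J i * √(J i)) + J i / (k i + 1)) / 4) := by
    intro j
    set I := av (fun x => (F (sol s (C x)) - F (sol s (C (flp (i, j) x)))) ^ 2) with hIdef
    have hI0 : 0 ≤ I := av_nonneg fun x => by positivity
    have hle := hI j
    have hle2 : I ≤ J i := hle.trans (mul_le_of_le_one_left hJ0 (hδ1 j))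
    have h1 : I * √I ≤ (δ j * J i) * √(J i) :=
      mul_le_mul hle (Real.sqrt_le_sqrt hle2) (Real.sqrt_nonneg _) (hI0.trans hle)
    have h2 : I / (k i + 1) ≤ (δ j * J i) / (k i + 1) := by gcongr
    have h3 : (3 : ℝ) ^ k i * (I * √I) ≤ 3 ^ k i * ((δ j * J i) * √(J i)) := by gcongr
    calc _ ≤ (3 ^ k i * ((δ j * J i) * √(J i)) + (δ j * J i) / (k i + 1)) / 4 := by linarith
      _ = _ := by ring
  refine (Finset.sum_le_sum fun j _ => hterm j).trans ?_
  rw [← Finset.sum_mul]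
  have h0 : 0 ≤ (3 ^ k i * (J i * √(J i)) + J i / (k i + 1)) / 4 := by positivity
  calc _ ≤ 2 * ((3 ^ k i * (J i * √(J i)) + J i / (k i + 1)) / 4) :=
        mul_le_mul_of_nonneg_right hδ2 h0
    _ = _ := by ring

end Sampling

section Dyadic

/-- Binary value of a bit string. -/
def val {m : ℕ} : (Fin m → Bool) ≃ Fin (2 ^ m) :=
  (Equiv.arrowCongr (Equiv.refl _) finTwoEquiv.symm).trans finFunctionFinEquiv

lemma val_eq {m : ℕ} (a : Fin m → Bool) :
    ((val a : Fin (2 ^ m)) : ℕ) = ∑ j, (if a j then 1 else 0) * 2 ^ (j : ℕ) := by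
  simp only [val, Equiv.trans_apply, finFunctionFinEquiv_apply]
  refine Finset.sum_congr rfl fun j _ => ?_
  cases h : a j <;> simp [h, finTwoEquiv]

lemma val_flp {m : ℕ} (a : Fin m → Bool) (j : Fin m) :
    ((val (flp j a) : Fin (2 ^ m)) : ℕ) + (if a j then 2 ^ (j : ℕ) else 0)
      = (val a : Fin (2 ^ m)) + (if a j then 0 else 2 ^ (j : ℕ)) := by
  rw [val_eq, val_eq, ← Finset.add_sum_erase _ _ (Finset.mem_univ j),
    ← Finset.add_sum_erase (a := j) _ _ (Finset.mem_univ j)]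
  have : ∑ l ∈ Finset.univ.erase j, (if flp j a l then 1 else 0) * 2 ^ (l : ℕ)
      = ∑ l ∈ Finset.univ.erase j, (if a l then 1 else 0) * 2 ^ (l : ℕ) :=
    Finset.sum_congr rfl fun l hl => by simp [flp, (Finset.mem_erase.mp hl).1]
  rw [this]
  cases h : a j <;> simp [flp, h] <;> ring

lemma thr_pivot {m : ℕ} (t : ℕ) (j : Fin m) :
    av (fun a : Fin m → Bool =>
        if decide (((val a : Fin (2 ^ m)) : ℕ) < t)
          ≠ decide (((val (flp j a) : Fin (2 ^ m)) : ℕ) < t) then (1 : ℝ) else 0)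
      ≤ 2 * 2 ^ (j : ℕ) / 2 ^ m := by
  have h1 : ∀ a : Fin m → Bool, (if decide (((val a : Fin (2 ^ m)) : ℕ) < t)
          ≠ decide (((val (flp j a) : Fin (2 ^ m)) : ℕ) < t) then (1 : ℝ) else 0)
      ≤ (if ((val a : Fin (2 ^ m)) : ℕ) ∈ Finset.Ico (t - 2 ^ (j : ℕ)) (t + 2 ^ (j : ℕ))
          then 1 else 0) := by
    intro a
    have hv := val_flp a j
    split_ifs with h h' h'
    · exact le_rfl
    · exfalso
      apply h
      rw [Finset.mem_Ico] at h'
      rw [decide_eq_decide]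
      generalize 2 ^ (j : ℕ) = q at *
      split_ifs at hv <;> omega
    · exact zero_le_one
    · exact le_rfl
  refine (av_mono h1).trans ?_
  rw [av_equiv val (fun v : Fin (2 ^ m) =>
    if (v : ℕ) ∈ Finset.Ico (t - 2 ^ (j : ℕ)) (t + 2 ^ (j : ℕ)) then (1 : ℝ) else 0)]
  unfold av
  rw [Finset.sum_boole, Fintype.card_fin]
  have : (Finset.univ.filter (fun v : Fin (2 ^ m) =>
      (v : ℕ) ∈ Finset.Ico (t - 2 ^ (j : ℕ)) (t + 2 ^ (j : ℕ)))).card ≤ 2 * 2 ^ (j : ℕ) := by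
    calc _ ≤ (Finset.Ico (t - 2 ^ (j : ℕ)) (t + 2 ^ (j : ℕ))).card := by
          apply Finset.card_le_card_of_injOn (fun v : Fin (2 ^ m) => (v : ℕ))
          · intro v hv; simpa using hv
          · exact Fin.val_injective.injOn
      _ ≤ _ := by rw [Nat.card_Ico]; omega
  rw [div_eq_inv_mul]
  push_cast
  gcongr
  exact_mod_cast this

lemma thr_prob {m : ℕ} (t : ℕ) (ht : t ≤ 2 ^ m) (b : Bool) :
    av (fun a : Fin m → Bool =>
        if decide (((val a : Fin (2 ^ m)) : ℕ) < t) = b then (1 : ℝ) else 0)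
      = if b then (t : ℝ) / 2 ^ m else 1 - (t : ℝ) / 2 ^ m := by
  have htrue : av (fun a : Fin m → Bool =>
        if decide (((val a : Fin (2 ^ m)) : ℕ) < t) = true then (1 : ℝ) else 0)
      = (t : ℝ) / 2 ^ m := by
    rw [av_equiv val (fun v : Fin (2 ^ m) => if decide ((v : ℕ) < t) = true then (1 : ℝ) else 0)]
    unfold av
    rw [Finset.sum_boole, Fintype.card_fin, div_eq_inv_mul]
    push_cast
    congr 2
    simp only [decide_eq_true_eq]
    rw [Fin.card_filter_val_lt, min_eq_right ht]
  cases b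
  · have h := av_add (fun a : Fin m → Bool =>
        if decide (((val a : Fin (2 ^ m)) : ℕ) < t) = true then (1 : ℝ) else 0)
      (fun a : Fin m → Bool =>
        if decide (((val a : Fin (2 ^ m)) : ℕ) < t) = false then (1 : ℝ) else 0)
    rw [htrue] at h
    have h1 : (fun a : Fin m → Bool =>
      (if decide (((val a : Fin (2 ^ m)) : ℕ) < t) = true then (1 : ℝ) else 0)
        + (if decide (((val a : Fin (2 ^ m)) : ℕ) < t) = false then (1 : ℝ) else 0))
        = fun _ => 1 := by
      funext a
      cases decide (((val a : Fin (2 ^ m)) : ℕ) < t) <;> simp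
    rw [h1, av_one] at h
    simp only [Bool.false_eq_true, if_false]
    linarith
  · simpa using htrue

lemma delta_le {m : ℕ} (j : Fin m) : (2 : ℝ) * 2 ^ (j : ℕ) / 2 ^ m ≤ 1 := by
  rw [div_le_one (by positivity)]
  calc (2 : ℝ) * 2 ^ (j : ℕ) = 2 ^ ((j : ℕ) + 1) := by ring
    _ ≤ 2 ^ m := pow_le_pow_right₀ (by norm_num) j.2

lemma delta_sum {m : ℕ} : ∑ j : Fin m, (2 : ℝ) * 2 ^ (j : ℕ) / 2 ^ m ≤ 2 := by
  rw [← Finset.sum_div, ← Finset.mul_sum, Fin.sum_univ_eq_sum_range (fun j => (2 : ℝ) ^ j) m,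
    geom_sum_eq (by norm_num), div_le_iff₀ (by positivity)]
  have : (0 : ℝ) < 2 ^ m := by positivity
  linarith

end Dyadic

section Kernels

open Filter Topology

variable {n : ℕ}

/-- The weight with sequential conditional probabilities `p`. -/
noncomputable def kw (p : Fin n → (Fin n → Bool) → ℝ) (ω : Fin n → Bool) : ℝ :=
  ∏ i, if ω i then p i ω else 1 - p i ω

structure Kernel (p : Fin n → (Fin n → Bool) → ℝ) : Prop where
  nonneg : ∀ i ω, 0 ≤ p i ω
  le_one : ∀ i ω, p i ω ≤ 1
  causal : ∀ i ω ω', (∀ j < i, ω j = ω' j) → p i ω = p i ω'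

noncomputable def thr (p : Fin n → (Fin n → Bool) → ℝ) (m : ℕ) (i : Fin n) (ω : Fin n → Bool) : ℕ :=
  ⌊p i ω * 2 ^ m⌋₊

/-- Dyadic approximation of a kernel. -/
noncomputable def dy (p : Fin n → (Fin n → Bool) → ℝ) (m : ℕ) (i : Fin n) (ω : Fin n → Bool) : ℝ :=
  (thr p m i ω : ℝ) / 2 ^ m

noncomputable def smp (p : Fin n → (Fin n → Bool) → ℝ) (m : ℕ) (i : Fin n) (ω : Fin n → Bool)
    (a : Fin m → Bool) : Bool := decide (((val a : Fin (2 ^ m)) : ℕ) < thr p m i ω)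

lemma smp_causal {p : Fin n → (Fin n → Bool) → ℝ} (hp : Kernel p) (m : ℕ) : Causal (smp p m) := by
  intro i ω ω' a h
  unfold smp thr
  rw [hp.causal i ω ω' h]

lemma thr_le {p : Fin n → (Fin n → Bool) → ℝ} (hp : Kernel p) (m : ℕ) (i : Fin n)
    (ω : Fin n → Bool) : thr p m i ω ≤ 2 ^ m := by
  unfold thr
  apply Nat.floor_le_of_le
  push_cast
  exact mul_le_of_le_one_left (by positivity) (hp.le_one i ω)

lemma av_smp {p : Fin n → (Fin n → Bool) → ℝ} (hp : Kernel p) (m : ℕ) (F : (Fin n → Bool) → ℝ) :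
    av (fun u => F (sol (smp p m) u)) = ∑ ω, F ω * kw (dy p m) ω := by
  rw [av_sol (smp_causal hp m)]
  refine Finset.sum_congr rfl fun ω _ => ?_
  congr 1
  unfold kw
  refine Finset.prod_congr rfl fun i _ => ?_
  exact thr_prob _ (thr_le hp m i ω) (ω i)

lemma dy_tendsto (p : Fin n → (Fin n → Bool) → ℝ) (hp : Kernel p) (i : Fin n) (ω : Fin n → Bool) :
    Tendsto (fun m => dy p m i ω) atTop (𝓝 (p i ω)) := by
  have h := tendsto_nat_floor_mul_div_atTop (R := ℝ) (hp.nonneg i ω)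
  have h2 : Tendsto (fun m : ℕ => (2 : ℝ) ^ m) atTop atTop :=
    tendsto_pow_atTop_atTop_of_one_lt (by norm_num)
  exact h.comp h2

lemma kw_tendsto (p : Fin n → (Fin n → Bool) → ℝ) (hp : Kernel p) (F : (Fin n → Bool) → ℝ) :
    Tendsto (fun m => ∑ ω, F ω * kw (dy p m) ω) atTop (𝓝 (∑ ω, F ω * kw p ω)) := by
  refine tendsto_finsetSum _ fun ω _ => Tendsto.const_mul _ ?_
  unfold kw
  refine tendsto_finsetProd _ fun i _ => ?_
  split_ifs
  · exact dy_tendsto p hp i ω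
  · exact (dy_tendsto p hp i ω).const_sub 1

/-- Pointwise domination of the samples. -/
lemma sol_le {p q : Fin n → (Fin n → Bool) → ℝ} (hp : Kernel p) (hq : Kernel q)
    (hpq : ∀ i ξ ζ, (∀ j < i, ξ j ≤ ζ j) → p i ξ ≤ q i ζ) (m : ℕ) (u : Fin n → (Fin m → Bool)) :
    ∀ i, sol (smp p m) u i ≤ sol (smp q m) u i := by
  have : ∀ k : ℕ, ∀ i : Fin n, (i : ℕ) < k → sol (smp p m) u i ≤ sol (smp q m) u i := by
    intro k
    induction k with
    | zero => intro i hi; omega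
    | succ k ih =>
      intro i hi
      rw [← sol_spec (smp_causal hp m), ← sol_spec (smp_causal hq m)]
      have h1 := hpq i (sol (smp p m) u) (sol (smp q m) u) fun j hj =>
        ih j (by have : (j : ℕ) < i := hj; omega)
      have h2 : thr p m i (sol (smp p m) u) ≤ thr q m i (sol (smp q m) u) :=
        Nat.floor_le_floor (mul_le_mul_of_nonneg_right h1 (by positivity))
      unfold smp
      rw [Bool.le_iff_imp]
      simp only [decide_eq_true_eq]
      intro h; exact lt_of_lt_of_le h h2
  exact fun i => this n i i.2

lemma boolInd_mono {f : (Fin n → Bool) → Bool} (hf : IncreasingBoolFun f) {ω ω' : Fin n → Bool}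
    (h : ∀ i, ω i ≤ ω' i) : boolInd f ω ≤ boolInd f ω' := by
  have := hf ω ω' h
  unfold boolInd
  cases h1 : f ω <;> cases h2 : f ω' <;> rw [h1, h2] at this <;>
    first | exact absurd this (by decide) | simp

/-- Stochastic domination of kernels. -/
lemma kw_le {p q : Fin n → (Fin n → Bool) → ℝ} (hp : Kernel p) (hq : Kernel q)
    (hpq : ∀ i ξ ζ, (∀ j < i, ξ j ≤ ζ j) → p i ξ ≤ q i ζ)
    {f : (Fin n → Bool) → Bool} (hf : IncreasingBoolFun f) :
    ∑ ω, boolInd f ω * kw p ω ≤ ∑ ω, boolInd f ω * kw q ω := by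
  refine le_of_tendsto_of_tendsto' (kw_tendsto p hp _) (kw_tendsto q hq _) fun m => ?_
  rw [← av_smp hp, ← av_smp hq]
  exact av_mono fun u => boolInd_mono hf (sol_le hp hq hpq m u)

noncomputable def fk (p : Fin n → (Fin n → Bool) → ℝ) (i : Fin n) (b : Bool) :
    Fin n → (Fin n → Bool) → ℝ := Function.update p i (fun _ => if b then 1 else 0)

lemma fk_kernel {p : Fin n → (Fin n → Bool) → ℝ} (hp : Kernel p) (i : Fin n) (b : Bool) :
    Kernel (fk p i b) := by
  refine ⟨fun j ω => ?_, fun j ω => ?_, fun j ω ω' h => ?_⟩ <;> by_cases hj : j = i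
  · subst hj; cases b <;> simp [fk]
  · simp only [fk, Function.update_of_ne hj]; exact hp.nonneg j ω
  · subst hj; cases b <;> simp [fk]
  · simp only [fk, Function.update_of_ne hj]; exact hp.le_one j ω
  · subst hj; simp [fk]
  · simp only [fk, Function.update_of_ne hj]; exact hp.causal j ω ω' h

lemma frc_smp (p : Fin n → (Fin n → Bool) → ℝ) (m : ℕ) (i : Fin n) (b : Bool) :
    frc (smp p m) i b = smp (fk p i b) m := by
  funext j ω a
  unfold frc smp thr fk
  by_cases hj : j = i
  · subst hj
    cases b
    · simp
    · have h : ⌊(1 : ℝ) * 2 ^ m⌋₊ = 2 ^ m := by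
        rw [one_mul, show ((2 : ℝ) ^ m) = ((2 ^ m : ℕ) : ℝ) by push_cast; rfl, Nat.floor_natCast]
      simp only [Function.update_self, if_true, h]
      simp
  · simp [Function.update_of_ne hj]

lemma boolInd_01 (f : (Fin n → Bool) → Bool) (ω : Fin n → Bool) :
    boolInd f ω = 0 ∨ boolInd f ω = 1 := by
  unfold boolInd; split_ifs <;> simp

/-- Talagrand-type inequality for a measure with monotone kernels. -/
lemma talagrand_kernel {p : Fin n → (Fin n → Bool) → ℝ} (hp : Kernel p)
    (hmono : ∀ i ξ ζ, (∀ j < i, ξ j ≤ ζ j) → p i ξ ≤ p i ζ)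
    {f : (Fin n → Bool) → Bool} (hf : IncreasingBoolFun f) (k : Fin n → ℕ) (J : Fin n → ℝ)
    (hJ : ∀ i, J i = ∑ ω, boolInd f ω * kw (fk p i true) ω
      - ∑ ω, boolInd f ω * kw (fk p i false) ω) :
    (∑ ω, boolInd f ω * kw p ω) - (∑ ω, boolInd f ω * kw p ω) ^ 2 ≤
      ∑ i, (3 ^ k i * (J i * √(J i)) + J i / (k i + 1)) / 2 := by
  have hl := kw_tendsto p hp (boolInd f)
  have hJt : ∀ i, Tendsto (fun m => ∑ ω, boolInd f ω * kw (dy (fk p i true) m) ω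
      - ∑ ω, boolInd f ω * kw (dy (fk p i false) m) ω) atTop (𝓝 (J i)) := fun i => by
    rw [hJ]
    exact (kw_tendsto _ (fk_kernel hp i true) _).sub (kw_tendsto _ (fk_kernel hp i false) _)
  refine le_of_tendsto_of_tendsto' (hl.sub (hl.pow 2)) (tendsto_finsetSum _ fun i _ =>
    ((((hJt i).mul (hJt i).sqrt).const_mul (3 ^ k i)).add
      ((hJt i).div_const ((k i : ℝ) + 1))).div_const 2) fun m => ?_
  have hsq : ∀ ω, boolInd f ω ^ 2 = boolInd f ω := fun ω => by
    rcases boolInd_01 f ω with h | h <;> simp [h]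
  have ht := talagrand_sol (smp_causal hp m) (boolInd f) (boolInd_01 f)
    (fun j => 2 * 2 ^ (j : ℕ) / 2 ^ m) delta_le delta_sum
    (fun i ω j => thr_pivot (thr p m i ω) j) k
    (fun i => ∑ ω, boolInd f ω * kw (dy (fk p i true) m) ω
      - ∑ ω, boolInd f ω * kw (dy (fk p i false) m) ω) (by
      intro i
      rw [← av_smp (fk_kernel hp i true), ← av_smp (fk_kernel hp i false), frc_smp, frc_smp]
      have e : (fun u => (boolInd f (sol (smp (fk p i true) m) u)
          - boolInd f (sol (smp (fk p i false) m) u)) ^ 2)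
          = fun u => boolInd f (sol (smp (fk p i true) m) u)
            + (-1) * boolInd f (sol (smp (fk p i false) m) u) := by
        funext u
        have hle := boolInd_mono hf (sol_le (fk_kernel hp i false) (fk_kernel hp i true)
          (by
            intro j ξ ζ h
            unfold fk
            by_cases hj : j = i
            · subst hj; simp
            · simp only [Function.update_of_ne hj]; exact hmono j ξ ζ h) m u)
        rcases boolInd_01 f (sol (smp (fk p i true) m) u) with h1 | h1 <;>
        rcases boolInd_01 f (sol (smp (fk p i false) m) u) with h2 | h2 <;>
        rw [h1, h2] at hle ⊢ <;> first | (exfalso; linarith) | norm_num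
      rw [e, av_add, av_mul_left]; ring)
  simp only [hsq] at ht
  rw [av_smp hp] at ht
  exact ht

end Kernels

section Measures

variable {n : ℕ} {w : (Fin n → Bool) → ℝ}

lemma wProb_congr {P Q : (Fin n → Bool) → Prop} (h : ∀ x, P x ↔ Q x) : wProb w P = wProb w Q := by
  have : P = Q := funext fun x => propext (h x)
  rw [this]

lemma wProb_nonneg (hw : ∀ ω, 0 ≤ w ω) (P : (Fin n → Bool) → Prop) : 0 ≤ wProb w P :=
  Finset.sum_nonneg fun x _ => mul_nonneg (hw x) (by split_ifs <;> norm_num)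

lemma wProb_mono (hw : ∀ ω, 0 ≤ w ω) {P Q : (Fin n → Bool) → Prop} (h : ∀ x, P x → Q x) :
    wProb w P ≤ wProb w Q := by
  refine Finset.sum_le_sum fun x _ => mul_le_mul_of_nonneg_left ?_ (hw x)
  by_cases hP : P x
  · simp [hP, h x hP]
  · rw [if_neg hP]; split_ifs <;> norm_num

lemma wProb_split (i : Fin n) (P : (Fin n → Bool) → Prop) :
    wProb w P = wProb w (fun x => x i = true ∧ P x) + wProb w (fun x => x i = false ∧ P x) := by
  unfold wProb
  rw [← Finset.sum_add_distrib]
  refine Finset.sum_congr rfl fun x _ => ?_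
  by_cases hP : P x <;> cases h : x i <;> simp [hP, h]

lemma wProb_pos_exists (P : (Fin n → Bool) → Prop) (h : 0 < wProb w P) : ∃ x, P x := by
  by_contra hh
  push Not at hh
  have : wProb w P = 0 := Finset.sum_eq_zero fun x _ => by simp [hh x]
  linarith

/-- Chain rule. -/
lemma kw_chain (hsum : ∑ ω, w ω = 1) (q : Fin n → (Fin n → Bool) → ℝ)
    (hq : ∀ i ω, q i ω * wProb w (agreesOn (Finset.Iio i) ω)
      = wProb w (fun x => x i = true ∧ agreesOn (Finset.Iio i) ω x)) (ω : Fin n → Bool) :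
    kw q ω = w ω := by
  have key : ∀ k : ℕ, k ≤ n → wProb w (fun x => ∀ j : Fin n, (j : ℕ) < k → x j = ω j)
      = ∏ j ∈ Finset.univ.filter (fun j : Fin n => (j : ℕ) < k),
          (if ω j then q j ω else 1 - q j ω) := by
    intro k
    induction k with
    | zero => intro _; simpa [wProb] using hsum
    | succ k ih =>
      intro hk
      set i : Fin n := ⟨k, hk⟩ with hi
      have hins : Finset.univ.filter (fun j : Fin n => (j : ℕ) < k + 1)
          = insert i (Finset.univ.filter (fun j : Fin n => (j : ℕ) < k)) := by
        ext j; simp [hi, Fin.ext_iff]; omega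
      have hW : wProb w (agreesOn (Finset.Iio i) ω)
          = wProb w (fun x => ∀ j : Fin n, (j : ℕ) < k → x j = ω j) :=
        wProb_congr fun x => by simp [agreesOn, hi, Fin.lt_def]
      have hL : wProb w (fun x => ∀ j : Fin n, (j : ℕ) < k + 1 → x j = ω j)
          = wProb w (fun x => x i = ω i ∧ agreesOn (Finset.Iio i) ω x) :=
        wProb_congr fun x => by
          simp only [agreesOn, Finset.mem_Iio, Fin.lt_def]
          constructor
          · intro h; exact ⟨h i (by simp [hi]), fun j hj => h j (by simp [hi] at hj; omega)⟩
          · rintro ⟨h1, h2⟩ j hj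
            rcases Nat.lt_succ_iff_lt_or_eq.mp hj with h | h
            · exact h2 j h
            · have : j = i := Fin.ext h
              rw [this, h1]
      rw [hins, Finset.prod_insert (by simp [hi]), ← ih (by omega), ← hW, hL]
      have hs := wProb_split (w := w) i (agreesOn (Finset.Iio i) ω)
      have hqi := hq i ω
      cases h : ω i
      · simp only [Bool.false_eq_true, if_false]; linarith
      · simp only [if_true]; linarith
  have h := key n le_rfl
  simp only [Fin.is_lt, true_implies, Finset.filter_true] at h
  rw [kw, ← h]
  unfold wProb
  rw [Finset.sum_eq_single ω]
  · simp
  · intro x _ hx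
    rw [if_neg (fun hh => hx (funext hh)), mul_zero]
  · simp

/-- Cylinder probability of the past of `i`. -/
noncomputable def W (w : (Fin n → Bool) → ℝ) (i : Fin n) (ω : Fin n → Bool) : ℝ :=
  wProb w (agreesOn (Finset.Iio i) ω)

noncomputable def W1 (w : (Fin n → Bool) → ℝ) (i : Fin n) (ω : Fin n → Bool) : ℝ :=
  wProb w (fun x => x i = true ∧ agreesOn (Finset.Iio i) ω x)

lemma agreesOn_congr {i : Fin n} {ω ω' : Fin n → Bool} (h : ∀ j < i, ω j = ω' j) :
    agreesOn (Finset.Iio i) ω = agreesOn (Finset.Iio i) ω' := by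
  funext x
  unfold agreesOn
  refine propext ⟨fun hh j hj => ?_, fun hh j hj => ?_⟩
  · rw [← h j (Finset.mem_Iio.mp hj)]; exact hh j hj
  · rw [h j (Finset.mem_Iio.mp hj)]; exact hh j hj

/-- Monotone version of the sequential conditional probabilities. -/
noncomputable def pk (w : (Fin n → Bool) → ℝ) (i : Fin n) (ω : Fin n → Bool) : ℝ :=
  ⨆ ξ : Fin n → Bool, if (∀ j < i, ξ j ≤ ω j) ∧ 0 < W w i ξ then W1 w i ξ / W w i ξ else 0

lemma W1_le (hw : ∀ ω, 0 ≤ w ω) (i : Fin n) (ω : Fin n → Bool) : W1 w i ω ≤ W w i ω :=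
  wProb_mono hw fun _ h => h.2

lemma pk_term_nonneg (hw : ∀ ω, 0 ≤ w ω) (i : Fin n) (ω ξ : Fin n → Bool) :
    0 ≤ if (∀ j < i, ξ j ≤ ω j) ∧ 0 < W w i ξ then W1 w i ξ / W w i ξ else 0 := by
  split_ifs
  · exact div_nonneg (wProb_nonneg hw _) (wProb_nonneg hw _)
  · exact le_rfl

lemma pk_kernel (hw : ∀ ω, 0 ≤ w ω) : Kernel (pk w) := by
  refine ⟨fun i ω => Real.iSup_nonneg fun ξ => pk_term_nonneg hw i ω ξ, fun i ω => ?_,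
    fun i ω ω' h => ?_⟩
  · refine ciSup_le fun ξ => ?_
    split_ifs with h
    · exact (div_le_one h.2).mpr (W1_le hw i ξ)
    · exact zero_le_one
  · unfold pk
    congr 1; funext ξ
    have : (∀ j < i, ξ j ≤ ω j) ↔ (∀ j < i, ξ j ≤ ω' j) :=
      forall₂_congr fun j hj => by rw [h j hj]
    simp only [this]

lemma pk_mono (hw : ∀ ω, 0 ≤ w ω) (i : Fin n) (ξ ζ : Fin n → Bool) (h : ∀ j < i, ξ j ≤ ζ j) :
    pk w i ξ ≤ pk w i ζ := by
  refine ciSup_mono (Set.finite_range _).bddAbove fun η => ?_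
  by_cases h1 : (∀ j < i, η j ≤ ξ j) ∧ 0 < W w i η
  · rw [if_pos h1, if_pos ⟨fun j hj => (h1.1 j hj).trans (h j hj), h1.2⟩]
  · rw [if_neg h1]; exact pk_term_nonneg hw i ζ η

lemma pk_eq (hw : ∀ ω, 0 ≤ w ω) (hm : IsMonotonic w) (i : Fin n) (ω : Fin n → Bool)
    (h : 0 < W w i ω) : pk w i ω = W1 w i ω / W w i ω := by
  apply le_antisymm
  · refine ciSup_le fun ξ => ?_
    split_ifs with hh
    · exact hm i (Finset.Iio i) ξ ω (fun j hj => hh.1 j (Finset.mem_Iio.mp hj)) hh.2 h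
    · exact div_nonneg (wProb_nonneg hw _) (wProb_nonneg hw _)
  · have := le_ciSup (f := fun ξ : Fin n → Bool =>
      if (∀ j < i, ξ j ≤ ω j) ∧ 0 < W w i ξ then W1 w i ξ / W w i ξ else 0)
      (Set.finite_range _).bddAbove ω
    simp only [le_refl, implies_true, true_and, h, if_true] at this
    exact this

lemma pk_chain (hw : ∀ ω, 0 ≤ w ω) (hm : IsMonotonic w) (i : Fin n) (ω : Fin n → Bool) :
    pk w i ω * W w i ω = W1 w i ω := by
  have h0 : 0 ≤ W w i ω := wProb_nonneg hw _
  rcases h0.eq_or_lt with h | h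
  · have h1 := W1_le hw i ω
    have h2 : 0 ≤ W1 w i ω := wProb_nonneg hw _
    rw [← h] at h1 ⊢
    linarith
  · rw [pk_eq hw hm i ω h]; field_simp

/-- The conditioned measure. -/
noncomputable def cw (w : (Fin n → Bool) → ℝ) (i : Fin n) (b : Bool) (ω : Fin n → Bool) : ℝ :=
  if ω i = b then w ω / wProb w (fun x => x i = b) else 0

lemma wProb_cw (i : Fin n) (b : Bool) (P : (Fin n → Bool) → Prop) :
    wProb (cw w i b) P = wProb w (fun x => x i = b ∧ P x) / wProb w (fun x => x i = b) := by
  conv_lhs => unfold wProb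
  conv_rhs => arg 1; unfold wProb
  rw [Finset.sum_div]
  refine Finset.sum_congr rfl fun x _ => ?_
  by_cases h1 : x i = b <;> by_cases h2 : P x <;> simp [cw, h1, h2]

noncomputable def C (w : (Fin n → Bool) → ℝ) (i : Fin n) (b : Bool) (j : Fin n)
    (ω : Fin n → Bool) : ℝ := wProb w (fun x => x i = b ∧ agreesOn (Finset.Iio j) ω x)

noncomputable def C1 (w : (Fin n → Bool) → ℝ) (i : Fin n) (b : Bool) (j : Fin n)
    (ω : Fin n → Bool) : ℝ :=
  wProb w (fun x => x i = b ∧ (x j = true ∧ agreesOn (Finset.Iio j) ω x))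

noncomputable def qk (w : (Fin n → Bool) → ℝ) (i : Fin n) (b : Bool) (j : Fin n)
    (ω : Fin n → Bool) : ℝ :=
  if 0 < C w i b j ω then C1 w i b j ω / C w i b j ω else (if b then 1 else 0)

lemma C1_le (hw : ∀ ω, 0 ≤ w ω) (i : Fin n) (b : Bool) (j : Fin n) (ω : Fin n → Bool) :
    C1 w i b j ω ≤ C w i b j ω := wProb_mono hw fun _ h => ⟨h.1, h.2.2⟩

lemma C_nonneg (hw : ∀ ω, 0 ≤ w ω) (i : Fin n) (b : Bool) (j : Fin n) (ω : Fin n → Bool) :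
    0 ≤ C w i b j ω := wProb_nonneg hw _

lemma C1_nonneg (hw : ∀ ω, 0 ≤ w ω) (i : Fin n) (b : Bool) (j : Fin n) (ω : Fin n → Bool) :
    0 ≤ C1 w i b j ω := wProb_nonneg hw _

lemma qk_kernel (hw : ∀ ω, 0 ≤ w ω) (i : Fin n) (b : Bool) : Kernel (qk w i b) := by
  refine ⟨fun j ω => ?_, fun j ω => ?_, fun j ω ω' h => ?_⟩
  · unfold qk
    split_ifs
    · exact div_nonneg (C1_nonneg hw _ _ _ _) (C_nonneg hw _ _ _ _)
    · exact zero_le_one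
    · exact le_rfl
  · unfold qk
    split_ifs with h
    · exact (div_le_one h).mpr (C1_le hw _ _ _ _)
    · exact le_rfl
    · exact zero_le_one
  · unfold qk C C1
    rw [agreesOn_congr h]

lemma kw_qk (hw : ∀ ω, 0 ≤ w ω) (i : Fin n) (b : Bool) (hpos : 0 < wProb w (fun x => x i = b))
    (ω : Fin n → Bool) : kw (qk w i b) ω = cw w i b ω := by
  apply kw_chain
  · have h := wProb_cw (w := w) i b (fun _ => True)
    simp only [and_true] at h
    rw [div_self hpos.ne'] at h
    simpa [wProb] using h
  · intro j η
    rw [wProb_cw, wProb_cw, ← mul_div_assoc]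
    congr 1
    change qk w i b j η * C w i b j η = C1 w i b j η
    unfold qk
    split_ifs with h hb
    · field_simp
    all_goals
      have h0 : C w i b j η = 0 := le_antisymm (not_lt.mp h) (C_nonneg hw _ _ _ _)
      have h1 : C1 w i b j η = 0 :=
        le_antisymm (h0 ▸ C1_le hw i b j η) (C1_nonneg hw _ _ _ _)
      rw [h0, h1, mul_zero]

lemma C_mono (hm : IsMonotonic w) (i j : Fin n) (ω : Fin n → Bool)
    (ha : 0 < C w i true j ω) (hb : 0 < C w i false j ω) :
    C1 w i false j ω / C w i false j ω ≤ C1 w i true j ω / C w i true j ω := by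
  have hij : i ∉ Finset.Iio j := by
    intro hmem
    obtain ⟨x, hx1, hx2⟩ := wProb_pos_exists _ ha
    obtain ⟨y, hy1, hy2⟩ := wProb_pos_exists _ hb
    have h1 := hx2 i hmem
    have h2 := hy2 i hmem
    rw [hx1] at h1; rw [hy1, ← h1] at h2
    exact absurd h2 (by decide)
  have hag : ∀ b x, agreesOn (insert i (Finset.Iio j)) (Function.update ω i b) x
      ↔ (x i = b ∧ agreesOn (Finset.Iio j) ω x) := by
    intro b x
    unfold agreesOn
    rw [Finset.forall_mem_insert]
    refine and_congr (by simp) (forall₂_congr fun l hl => ?_)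
    have : l ≠ i := fun h => hij (h ▸ hl)
    simp [this]
  have hC : ∀ b, wProb w (agreesOn (insert i (Finset.Iio j)) (Function.update ω i b))
      = C w i b j ω := fun b => wProb_congr (hag b)
  have hC1 : ∀ b, wProb w (fun x => x j = true ∧
      agreesOn (insert i (Finset.Iio j)) (Function.update ω i b) x)
      = C1 w i b j ω := fun b => wProb_congr fun x => by rw [hag]; tauto
  have := hm j (insert i (Finset.Iio j)) (Function.update ω i false) (Function.update ω i true)
    (by
      intro l _
      by_cases h : l = i
      · subst h; simp
      · simp [h]) (by rw [hC]; exact hb) (by rw [hC]; exact ha)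
  rwa [hC, hC, hC1, hC1] at this

lemma W_split (i j : Fin n) (ω : Fin n → Bool) : W w j ω = C w i true j ω + C w i false j ω :=
  wProb_split i _

lemma W1_split (i j : Fin n) (ω : Fin n → Bool) : W1 w j ω = C1 w i true j ω + C1 w i false j ω :=
  wProb_split i _

lemma C1_self (hw : ∀ ω, 0 ≤ w ω) (i : Fin n) (ω : Fin n → Bool) :
    C1 w i true i ω = C w i true i ω ∧ C1 w i false i ω = 0 := by
  constructor
  · exact wProb_congr fun x => by tauto
  · refine Finset.sum_eq_zero fun x _ => ?_
    cases h : x i <;> simp [h]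

lemma pk_between (hw : ∀ ω, 0 ≤ w ω) (hm : IsMonotonic w) (i j : Fin n) (ω : Fin n → Bool) :
    (0 < C w i true j ω → pk w j ω ≤ C1 w i true j ω / C w i true j ω) ∧
    (0 < C w i false j ω → C1 w i false j ω / C w i false j ω ≤ pk w j ω) := by
  have a0 := C_nonneg hw i true j ω
  have b0 := C_nonneg hw i false j ω
  have a1 := C1_le hw i true j ω
  have b1 := C1_le hw i false j ω
  have a2 := C1_nonneg hw i true j ω
  have b2 := C1_nonneg hw i false j ω
  have hp := pk_eq hw hm j ω
  rw [W_split i, W1_split i] at hp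
  have hc := C_mono hm i j ω
  constructor
  · intro ha
    rw [hp (by linarith), div_le_div_iff₀ (by linarith) ha]
    rcases b0.eq_or_lt with hb | hb
    · rw [← hb] at b1 ⊢
      have : C1 w i false j ω = 0 := le_antisymm b1 b2
      rw [this]; linarith
    · have := hc ha hb
      rw [div_le_div_iff₀ hb ha] at this
      nlinarith
  · intro hb
    rw [hp (by linarith), div_le_div_iff₀ hb (by linarith)]
    rcases a0.eq_or_lt with ha | ha
    · rw [← ha] at a1 ⊢
      have : C1 w i true j ω = 0 := le_antisymm a1 a2
      rw [this]; linarith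
    · have := hc ha hb
      rw [div_le_div_iff₀ hb ha] at this
      nlinarith

lemma J_le (hw : ∀ ω, 0 ≤ w ω) (hm : IsMonotonic w) {f : (Fin n → Bool) → Bool}
    (hf : IncreasingBoolFun f) (i : Fin n)
    (h1 : 0 < wProb w (fun x => x i = true)) (h0 : 0 < wProb w (fun x => x i = false)) :
    ∑ ω, boolInd f ω * kw (fk (pk w) i true) ω - ∑ ω, boolInd f ω * kw (fk (pk w) i false) ω
      ≤ condInfluence w f i := by
  have hfe : ∀ b, 0 < wProb w (fun x => x i = b) →
      wProb w (fun ω => f ω = true ∧ ω i = b) / wProb w (fun ω => ω i = b)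
      = ∑ ω, boolInd f ω * kw (qk w i b) ω := by
    intro b hb
    simp only [kw_qk hw i b hb]
    conv_lhs => arg 1; unfold wProb
    rw [Finset.sum_div]
    refine Finset.sum_congr rfl fun x _ => ?_
    by_cases h1 : x i = b <;> by_cases h2 : f x = true <;> simp [cw, h1, h2, boolInd]
  unfold condInfluence
  rw [hfe true h1, hfe false h0]
  refine sub_le_sub ?_ ?_
  · refine kw_le (fk_kernel (pk_kernel hw) i true) (qk_kernel hw i true) ?_ hf
    intro j ξ ζ h
    unfold qk
    by_cases hj : j = i
    · subst hj
      simp only [fk, Function.update_self, if_true]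
      split_ifs with hc
      · rw [(C1_self hw j ζ).1, div_self hc.ne']
      · exact le_rfl
    · simp only [fk, Function.update_of_ne hj, if_true]
      split_ifs with hc
      · exact (pk_mono hw j ξ ζ h).trans ((pk_between hw hm i j ζ).1 hc)
      · exact (pk_kernel hw).le_one j ξ
  · refine kw_le (qk_kernel hw i false) (fk_kernel (pk_kernel hw) i false) ?_ hf
    intro j ξ ζ h
    unfold qk
    by_cases hj : j = i
    · subst hj
      simp only [fk, Function.update_self, Bool.false_eq_true, if_false]
      split_ifs with hc
      · rw [(C1_self hw j ξ).2, zero_div]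
      · exact le_rfl
    · simp only [fk, Function.update_of_ne hj, Bool.false_eq_true, if_false]
      split_ifs with hc
      · exact ((pk_between hw hm i j ξ).2 hc).trans (pk_mono hw j ξ ζ h)
      · exact (pk_kernel hw).nonneg j ζ

lemma J_nonneg (hw : ∀ ω, 0 ≤ w ω) {f : (Fin n → Bool) → Bool}
    (hf : IncreasingBoolFun f) (i : Fin n) :
    0 ≤ ∑ ω, boolInd f ω * kw (fk (pk w) i true) ω
      - ∑ ω, boolInd f ω * kw (fk (pk w) i false) ω := by
  refine sub_nonneg.mpr (kw_le (fk_kernel (pk_kernel hw) i false)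
    (fk_kernel (pk_kernel hw) i true) ?_ hf)
  intro j ξ ζ h
  unfold fk
  by_cases hj : j = i
  · subst hj; simp
  · simp only [Function.update_of_ne hj]; exact pk_mono hw j ξ ζ h

end Measures

section Final

variable {n : ℕ} {w : (Fin n → Bool) → ℝ}

lemma wVar_01 (hsum : ∑ ω, w ω = 1) (g : (Fin n → Bool) → ℝ) (hg : ∀ ω, g ω = 0 ∨ g ω = 1) :
    wVar w g = (∑ ω, g ω * w ω) - (∑ ω, g ω * w ω) ^ 2 := by
  have hE : wExp w g = ∑ ω, g ω * w ω := Finset.sum_congr rfl fun _ _ => mul_comm _ _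
  unfold wVar
  rw [hE]
  set a := ∑ ω, g ω * w ω with ha
  have : wExp w (fun ω => (g ω - a) ^ 2) = ∑ ω, ((1 - 2 * a) * (g ω * w ω) + a ^ 2 * w ω) := by
    refine Finset.sum_congr rfl fun ω _ => ?_
    rcases hg ω with h | h <;> simp only [h] <;> ring
  rw [this, Finset.sum_add_distrib, ← Finset.mul_sum, ← Finset.mul_sum, hsum, ← ha]
  ring

lemma scalar_bound {I J : ℝ} (hJ0 : 0 ≤ J) (hJI : J ≤ I) (hI1 : I < 1) (hI0 : 0 < I) :
    (3 ^ ⌊Real.log (1 / I) / 8⌋₊ * (J * √J) + J / ((⌊Real.log (1 / I) / 8⌋₊ : ℝ) + 1)) / 2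
      ≤ 6 * (I / Real.log (1 / I)) := by
  set L := Real.log (1 / I) with hL
  have hLpos : 0 < L := Real.log_pos (by rw [lt_div_iff₀ hI0]; linarith)
  set k := ⌊L / 8⌋₊ with hk
  have hk1 : (k : ℝ) ≤ L / 8 := Nat.floor_le (by positivity)
  have hk2 : L / 8 < (k : ℝ) + 1 := Nat.lt_floor_add_one _
  have hIexp : I = Real.exp (-L) := by
    rw [hL, one_div, Real.log_inv, neg_neg, Real.exp_log hI0]
  have hsq : √I = Real.exp (-L / 2) := by
    rw [hIexp, ← Real.exp_half]
  have h3 : (3 : ℝ) ^ k ≤ Real.exp (L / 4) := by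
    have h32 : (3 : ℝ) ≤ Real.exp 2 := by
      have := Real.add_one_le_exp (2 : ℝ); linarith
    calc (3 : ℝ) ^ k ≤ (Real.exp 2) ^ k := by gcongr
      _ = Real.exp (k * 2) := by rw [← Real.exp_nat_mul]
      _ ≤ _ := Real.exp_le_exp.mpr (by linarith)
  have h4 : Real.exp (-(L / 4)) ≤ 4 / L := by
    rw [Real.exp_neg, inv_eq_one_div, div_le_div_iff₀ (Real.exp_pos _) hLpos]
    have := Real.add_one_le_exp (L / 4); linarith
  have hA : 3 ^ k * (J * √J) ≤ I * (4 / L) := by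
    calc 3 ^ k * (J * √J) ≤ Real.exp (L / 4) * (I * √I) := by
          gcongr
      _ = I * Real.exp (-(L / 4)) := by
          rw [hsq, mul_left_comm, ← Real.exp_add]; congr 2; ring
      _ ≤ _ := by gcongr
  have hB : J / ((k : ℝ) + 1) ≤ I * (8 / L) := by
    calc J / ((k : ℝ) + 1) ≤ I / (L / 8) := by
          gcongr
      _ = _ := by field_simp
  calc _ ≤ (I * (4 / L) + I * (8 / L)) / 2 := by linarith
    _ = _ := by ring

end Final

/-- **Graham–Grimmett influence inequality for monotonic measures.**  There is a
universal `c > 0` such that for every `n ≥ 1`, every monotonic probability measure `μ`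
on `{0,1}^n` with `min_i Var_μ(ω_i) > 0`, and every increasing boolean function `f`,
`Var_μ(f) ≤ (c / min_i Var_μ(ω_i)) Σ_i Inf_i^μ[f]/log(1/Inf_i^μ[f])`.
The inequality is stated in `ℝ≥0∞`, where the summand for a coordinate with
`Inf_i^μ[f] = 0` equals `0` (as `0/0 = 0` in `ℝ≥0∞`) and the summand for
`Inf_i^μ[f] = 1` equals `+∞` (as `1/0 = ∞` in `ℝ≥0∞`). -/
theorem graham_grimmett_influence_inequality :
    ∃ c : ℝ, 0 < c ∧ ∀ (n : ℕ), 1 ≤ n → ∀ w : (Fin n → Bool) → ℝ,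
      IsProbWeight w → IsMonotonic w →
      (0 < ⨅ i : Fin n, wVar w (coordFun i)) →
      ∀ f : (Fin n → Bool) → Bool, IncreasingBoolFun f →
      ENNReal.ofReal (wVar w (boolInd f)) ≤
        ENNReal.ofReal (c / ⨅ i : Fin n, wVar w (coordFun i)) *
          ∑ i : Fin n,
            ENNReal.ofReal (condInfluence w f i) /
              ENNReal.ofReal (Real.log (1 / condInfluence w f i)) := by
  refine ⟨6, by norm_num, ?_⟩
  intro n hn w hw hm hmin f hf
  haveI : Nonempty (Fin n) := ⟨⟨0, hn⟩⟩
  obtain ⟨hw0, hsum⟩ := hw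
  set v := ⨅ i : Fin n, wVar w (coordFun i) with hv
  have hvle : ∀ i, v ≤ wVar w (coordFun i) := fun i =>
    ciInf_le (Set.finite_range _).bddBelow i
  have hcoord : ∀ i, wVar w (coordFun i)
      = wProb w (fun x => x i = true) - wProb w (fun x => x i = true) ^ 2 := by
    intro i
    have h : ∑ ω, coordFun i ω * w ω = wProb w (fun x => x i = true) :=
      Finset.sum_congr rfl fun x _ => by
        cases h : x i <;> simp [coordFun, h]
    rw [wVar_01 hsum _ (fun ω => by unfold coordFun; split_ifs <;> simp), h]
  have htot : ∀ i, wProb w (fun x => x i = true) + wProb w (fun x => x i = false) = 1 := by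
    intro i
    have h := wProb_split (w := w) i (fun _ => True)
    simp only [and_true] at h
    rw [← h]; simpa [wProb] using hsum
  have hp1 : ∀ i, 0 < wProb w (fun x => x i = true) := by
    intro i
    have h1 := hvle i
    have h2 := wProb_nonneg hw0 (fun x => x i = true)
    rw [hcoord] at h1
    nlinarith
  have hp0 : ∀ i, 0 < wProb w (fun x => x i = false) := by
    intro i
    have h1 := hvle i
    have h2 := wProb_nonneg hw0 (fun x => x i = false)
    have h3 := htot i
    have h4 := hp1 i
    rw [hcoord] at h1
    nlinarith
  have hv1 : v ≤ 1 := by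
    have h1 := hvle ⟨0, hn⟩
    rw [hcoord] at h1
    nlinarith [htot ⟨0, hn⟩, hp0 ⟨0, hn⟩, hp1 ⟨0, hn⟩]
  have hI1 : ∀ i, condInfluence w f i ≤ 1 := by
    intro i
    unfold condInfluence
    have h1 : wProb w (fun ω => f ω = true ∧ ω i = true) / wProb w (fun ω => ω i = true) ≤ 1 :=
      (div_le_one (hp1 i)).mpr (wProb_mono hw0 fun _ h => h.2)
    have h2 : 0 ≤ wProb w (fun ω => f ω = true ∧ ω i = false) / wProb w (fun ω => ω i = false) :=
      div_nonneg (wProb_nonneg hw0 _) (wProb_nonneg hw0 _)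
    linarith
  have hJ0 := fun i => J_nonneg hw0 hf i
  have hJI := fun i => J_le hw0 hm hf i (hp1 i) (hp0 i)
  have hc1 : (6 : ℝ) ≤ 6 / v := by
    rw [le_div_iff₀ hmin]; linarith
  have hcpos : ENNReal.ofReal (6 / v) ≠ 0 := by
    have : 0 < 6 / v := by positivity
    simpa using this
  by_cases hex : ∃ i, condInfluence w f i = 1
  · obtain ⟨i, hi⟩ := hex
    have htop : ∑ i : Fin n, ENNReal.ofReal (condInfluence w f i) /
              ENNReal.ofReal (Real.log (1 / condInfluence w f i)) = ⊤ := by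
      rw [ENNReal.sum_eq_top]
      refine ⟨i, Finset.mem_univ i, ?_⟩
      rw [hi]; simp
    rw [htop, ENNReal.mul_top hcpos]
    exact le_top
  push Not at hex
  have hlt : ∀ i, condInfluence w f i < 1 := fun i => lt_of_le_of_ne (hI1 i) (hex i)
  have ht := talagrand_kernel (pk_kernel hw0) (fun i ξ ζ h => pk_mono hw0 i ξ ζ h) hf
    (fun i => ⌊Real.log (1 / condInfluence w f i) / 8⌋₊) _ (fun i => rfl)
  have hkw : ∀ ω, kw (pk w) ω = w ω := kw_chain hsum _ (fun i ω => pk_chain hw0 hm i ω)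
  simp only [hkw] at ht
  rw [wVar_01 hsum _ (boolInd_01 f)]
  have hterm : ∀ i, ENNReal.ofReal (6 * (condInfluence w f i /
        Real.log (1 / condInfluence w f i)))
      ≤ ENNReal.ofReal (6 / v) * (ENNReal.ofReal (condInfluence w f i) /
              ENNReal.ofReal (Real.log (1 / condInfluence w f i))) := by
    intro i
    rw [ENNReal.ofReal_mul (by norm_num)]
    refine mul_le_mul' (ENNReal.ofReal_le_ofReal hc1) ?_
    rcases ((hJ0 i).trans (hJI i)).eq_or_lt with h | h
    · rw [← h]; simp
    · rw [ENNReal.ofReal_div_of_pos]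
      exact Real.log_pos (by rw [lt_div_iff₀ h]; linarith [hlt i])
  rw [Finset.mul_sum]
  refine le_trans ?_ (Finset.sum_le_sum fun i _ => hterm i)
  rw [← ENNReal.ofReal_sum_of_nonneg]
  · refine ENNReal.ofReal_le_ofReal (ht.trans (Finset.sum_le_sum fun i _ => ?_))
    rcases ((hJ0 i).trans (hJI i)).eq_or_lt with h | h
    · have hz : ∑ ω, boolInd f ω * kw (fk (pk w) i true) ω
        - ∑ ω, boolInd f ω * kw (fk (pk w) i false) ω = 0 :=
        le_antisymm ((hJI i).trans h.ge) (hJ0 i)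
      rw [hz, ← h]; simp
    · exact scalar_bound (hJ0 i) (hJI i) (hlt i) h
  · intro i _
    have h := (hJ0 i).trans (hJI i)
    rcases h.eq_or_lt with h' | h'
    · rw [← h']; simp
    · have : 0 ≤ Real.log (1 / condInfluence w f i) :=
        Real.log_nonneg (by rw [le_div_iff₀ h']; linarith [hlt i])
      positivity
end
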